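/- arXiv:0903.2016 — 2 statements merged into one kernel-verified Lean document; each statement's English description precedes it below -/
import Mathlib

section
/- Let t = 2^i·ℓ + 1 where i ≥ 1 and ℓ ≥ 3 is odd, with ℓ dividing 2^i − 1 and ℓ ≠ 2^i − 1. Let f_k ∈ F_2[x,y] be an irreducible factor of g_t(x,y) over F_2 that is not absolutely irreducible. Then deg(f_k)² ≤ Σ_{P ∈ Sing(g_t)} m_P(f_k)², where the sum is over all singular points P of g_t with coordinates in the algebraic closure of F_2. -/
open MvPolynomial

/-- The multiplicity of a two-variable polynomial `h` at a point `P = (α, β)`: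
the least `m` such that the degree-`m` homogeneous component of `h(x+α, y+β)`
is nonzero. -/
noncomputable def multAt {K : Type*} [CommRing K]
    (h : MvPolynomial (Fin 2) K) (P : K × K) : ℕ :=
  sInf {m : ℕ | homogeneousComponent m (bind₁ ![X 0 + C P.1, X 1 + C P.2] h) ≠ 0}

section aux
variable {K : Type*} [Field K]

noncomputable def Psi (K : Type*) [Field K] :
    MvPolynomial (Fin 2) K →ₐ[K] Polynomial (MvPolynomial (Fin 2) K) :=
  aeval (fun i => Polynomial.C (X i) * Polynomial.X)

lemma Psi_X (i : Fin 2) : Psi K (X i) = Polynomial.C (X i) * Polynomial.X := by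
  simp [Psi]

lemma Psi_C (c : K) : Psi K (C c) = Polynomial.C (C c) := by
  simp [Psi]

lemma Psi_monomial (n : Fin 2 →₀ ℕ) (c : K) :
    Psi K (monomial n c) = Polynomial.monomial n.degree (monomial n c) := by
  rw [Psi, aeval_monomial, monomial_eq (s := n)]
  have h : ∀ i, (Polynomial.C (X i : MvPolynomial (Fin 2) K) * Polynomial.X) ^ n i
     = Polynomial.C (X i ^ n i) * Polynomial.X ^ n i := by
    intro i; rw [mul_pow, map_pow]
  rw [Finsupp.prod, Finset.prod_congr rfl (fun i _ => h i), Finset.prod_mul_distrib,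
    ← map_prod, Finset.prod_pow_eq_pow_sum, Finsupp.prod, ← Polynomial.C_mul_X_pow_eq_monomial,
    map_mul, Finsupp.degree, ← mul_assoc]
  rfl

lemma coeff_Psi (h : MvPolynomial (Fin 2) K) (d : ℕ) :
    (Psi K h).coeff d = homogeneousComponent d h := by
  induction h using MvPolynomial.induction_on' with
  | monomial n c =>
    rw [Psi_monomial, Polynomial.coeff_monomial]
    ext k
    rw [coeff_homogeneousComponent]
    split_ifs with h1 h2 h2 <;> simp_all [coeff_monomial]
    · rintro rfl; simp_all
    · rintro rfl; simp_all
  | add p q hp hq => rw [map_add, Polynomial.coeff_add, hp, hq, map_add]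

lemma coeff_coeff_Psi (h : MvPolynomial (Fin 2) K) (d : ℕ) (n) :
    coeff n ((Psi K h).coeff d) = if n.degree = d then coeff n h else 0 := by
  rw [coeff_Psi, coeff_homogeneousComponent]

lemma coeff_Psi_degree (h : MvPolynomial (Fin 2) K) (n : Fin 2 →₀ ℕ) :
    coeff n ((Psi K h).coeff n.degree) = coeff n h := by
  rw [coeff_coeff_Psi, if_pos rfl]

lemma Psi_inj : Function.Injective (Psi K) := by
  intro a b hab
  ext n
  rw [← coeff_Psi_degree a, hab, coeff_Psi_degree]

lemma Psi_coeff (h : MvPolynomial (Fin 2) K) (d : ℕ) :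
    Psi K ((Psi K h).coeff d) = Polynomial.monomial d ((Psi K h).coeff d) := by
  ext1 j
  ext n
  rw [coeff_coeff_Psi, Polynomial.coeff_monomial]
  split_ifs with h1 h2 h2
  · rfl
  · rw [coeff_coeff_Psi, if_neg (by omega)]; simp
  · rw [coeff_coeff_Psi, if_neg (by omega)]
  · simp

lemma natDegree_Psi (h : MvPolynomial (Fin 2) K) : (Psi K h).natDegree = h.totalDegree := by
  apply le_antisymm
  · rw [Polynomial.natDegree_le_iff_coeff_eq_zero]
    intro N hN
    rw [coeff_Psi, homogeneousComponent_eq_zero _ _ hN]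
  · apply Finset.sup_le
    intro n hn
    change n.degree ≤ _
    apply Polynomial.le_natDegree_of_ne_zero
    intro h0
    have := coeff_Psi_degree h n
    rw [h0] at this
    exact (mem_support_iff.1 hn) this.symm

noncomputable def tr (P : K × K) : MvPolynomial (Fin 2) K →ₐ[K] MvPolynomial (Fin 2) K :=
  bind₁ ![X 0 + C P.1, X 1 + C P.2]

lemma tr_tr (P : K × K) (h) : tr (-P) (tr P h) = h := by
  have : (tr (-P)).comp (tr P) = AlgHom.id K _ := by
    ext i
    fin_cases i <;> simp [tr]
  exact congrArg (fun f => f h) this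

lemma tr_inj (P : K × K) : Function.Injective (tr P) := 
  Function.LeftInverse.injective (tr_tr P)

lemma multAt_aux (h : MvPolynomial (Fin 2) K) (P : K × K) (m : ℕ) :
    homogeneousComponent m ((bind₁ ![X 0 + C P.1, X 1 + C P.2] h : MvPolynomial ℕ K)) ≠ 0 ↔
      (Psi K (tr P h)).coeff m ≠ 0 := by
  have h1 : (bind₁ ![X 0 + C P.1, X 1 + C P.2] h : MvPolynomial ℕ K)
      = rename (fun j : Fin 2 => (j : ℕ)) (tr P h) := by
    have : (bind₁ ![X 0 + C P.1, X 1 + C P.2] : _ →ₐ[K] MvPolynomial ℕ K)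
      = (rename (fun j : Fin 2 => (j : ℕ))).comp (tr P) := by
      ext i
      fin_cases i <;> simp [tr]
    exact congrArg (fun f => f h) this
  rw [h1, ← rename_homogeneousComponent, coeff_Psi, Ne, Ne,
    map_eq_zero_iff _ (rename_injective _ Fin.val_injective)]

lemma multAt_eq (h : MvPolynomial (Fin 2) K) (P : K × K) :
    multAt h P = (Psi K (tr P h)).natTrailingDegree := by
  have hs : multAt h P = sInf {m : ℕ | (Psi K (tr P h)).coeff m ≠ 0} := by
    unfold multAt
    congr 1
    ext m
    exact multAt_aux h P m
  rw [hs]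
  by_cases h0 : h = 0
  · subst h0; simp
  have h1 : Psi K (tr P h) ≠ 0 := by
    rw [Ne, map_eq_zero_iff _ Psi_inj, map_eq_zero_iff _ (tr_inj P)]; exact h0
  have h2 : (Psi K (tr P h)).natTrailingDegree ∈ {m : ℕ | (Psi K (tr P h)).coeff m ≠ 0} :=
    Polynomial.trailingCoeff_nonzero_iff_nonzero.2 h1
  apply le_antisymm
  · exact Nat.sInf_le h2
  · apply le_csInf ⟨_, h2⟩
    intro b hb
    exact Polynomial.natTrailingDegree_le_of_ne_zero hb

lemma multAt_mul {a b : MvPolynomial (Fin 2) K} (ha : a ≠ 0) (hb : b ≠ 0) (P : K × K) :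
    multAt (a * b) P = multAt a P + multAt b P := by
  rw [multAt_eq, multAt_eq, multAt_eq, map_mul, map_mul, Polynomial.natTrailingDegree_mul]
  · rwa [Ne, map_eq_zero_iff _ Psi_inj, map_eq_zero_iff _ (tr_inj P)]
  · rwa [Ne, map_eq_zero_iff _ Psi_inj, map_eq_zero_iff _ (tr_inj P)]

end aux

section aux
variable {K : Type*} [Field K]

noncomputable def emb (K : Type*) [Field K] (s : Finset (Fin 2 →₀ ℕ)) :
    (s → K) →ₗ[K] MvPolynomial (Fin 2) K :=
  ∑ n : s, (monomial (n : Fin 2 →₀ ℕ)).comp (LinearMap.proj n)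

noncomputable def res (K : Type*) [Field K] (s : Finset (Fin 2 →₀ ℕ)) :
    MvPolynomial (Fin 2) K →ₗ[K] (s → K) :=
  LinearMap.pi (fun n => lcoeff K (n : Fin 2 →₀ ℕ))

lemma res_apply (s : Finset (Fin 2 →₀ ℕ)) (h : MvPolynomial (Fin 2) K) (n : s) :
    res K s h n = coeff n h := rfl

lemma coeff_emb (s : Finset (Fin 2 →₀ ℕ)) (c : s → K) (n : s) :
    coeff (n : Fin 2 →₀ ℕ) (emb K s c) = c n := by
  classical
  simp only [emb, LinearMap.sum_apply, LinearMap.comp_apply, coeff_sum, LinearMap.proj_apply,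
    coeff_monomial]
  rw [Finset.sum_eq_single n]
  · simp
  · intro b _ hb
    rw [if_neg]
    exact fun h => hb (Subtype.ext h)
  · simp

lemma coeff_emb_not (s : Finset (Fin 2 →₀ ℕ)) (c : s → K) (n : Fin 2 →₀ ℕ) (hn : n ∉ s) :
    coeff n (emb K s c) = 0 := by
  classical
  simp only [emb, LinearMap.sum_apply, LinearMap.comp_apply, coeff_sum, LinearMap.proj_apply,
    coeff_monomial]
  apply Finset.sum_eq_zero
  intro b _
  rw [if_neg]
  rintro rfl
  exact hn b.2

lemma emb_inj (s : Finset (Fin 2 →₀ ℕ)) (c : s → K) (h : emb K s c = 0) : c = 0 := by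
  ext n
  rw [← coeff_emb s c n, h]; simp

lemma emb_res (s : Finset (Fin 2 →₀ ℕ)) (h : MvPolynomial (Fin 2) K)
    (hh : ∀ n, n ∉ s → coeff n h = 0) : emb K s (res K s h) = h := by
  ext n
  by_cases hn : n ∈ s
  · exact coeff_emb s _ ⟨n, hn⟩
  · rw [coeff_emb_not s _ n hn, hh n hn]

noncomputable def hs (d : ℕ) : Finset (Fin 2 →₀ ℕ) :=
  (Finset.HasAntidiagonal.antidiagonal d).image (fun p => Finsupp.single 0 p.1 + Finsupp.single 1 p.2)

lemma fdeg (n : Fin 2 →₀ ℕ) : n.degree = n 0 + n 1 := by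
  rw [Finsupp.degree_eq_sum]; simp

lemma mem_hs (d : ℕ) (n) : n ∈ hs d ↔ n.degree = d := by
  rw [hs, Finset.mem_image, fdeg]
  constructor
  · rintro ⟨p, hp, rfl⟩
    simpa using hp
  · intro h
    refine ⟨(n 0, n 1), by simpa using h, ?_⟩
    ext i
    fin_cases i <;> simp

lemma card_hs (d : ℕ) : (hs d).card = d + 1 := by
  rw [hs, Finset.card_image_of_injective, Finset.Nat.card_antidiagonal]
  intro p q h
  have h0 := congrArg (fun f => f 0) h
  have h1 := congrArg (fun f => f 1) h
  simp at h0 h1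
  exact Prod.ext h0 h1

noncomputable def ls (k : ℕ) : Finset (Fin 2 →₀ ℕ) := (Finset.range k).biUnion hs

lemma mem_ls (k : ℕ) (n) : n ∈ ls k ↔ n.degree < k := by
  simp [ls, mem_hs]

lemma card_ls (k : ℕ) : (ls k).card * 2 = k * (k + 1) := by
  rw [ls, Finset.card_biUnion]
  · simp only [card_hs]
    induction k with
    | zero => simp
    | succ k ih => rw [Finset.sum_range_succ, add_mul, ih]; ring
  · intro a _ b _ hab
    rw [Function.onFun, Finset.disjoint_left]
    intro n hn hm
    rw [mem_hs] at hn hm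
    omega

lemma emb_ls_natDegree (k : ℕ) (c : ls k → K) (j : ℕ) (hj : k ≤ j) :
    (Psi K (emb K (ls k) c)).coeff j = 0 := by
  ext n
  rw [coeff_coeff_Psi]
  split_ifs with h
  · rw [coeff_emb_not _ _ _ (by rw [mem_ls]; omega)]; simp
  · simp

lemma emb_hs (k : ℕ) (c : hs k → K) :
    Psi K (emb K (hs k) c) = Polynomial.monomial k (emb K (hs k) c) := by
  ext1 j
  ext n
  rw [coeff_coeff_Psi, Polynomial.coeff_monomial]
  by_cases h : n.degree = k
  · split_ifs <;> first | rfl | omega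
  · have := coeff_emb_not (hs k) c n (by rwa [mem_hs])
    split_ifs <;> simp [this]

/-- cancellation for coprime forms -/
lemma cancel {U V a b : MvPolynomial (Fin 2) K} (cop : IsRelPrime U V) (n j : ℕ)
    (hV : Psi K V = Polynomial.monomial n V) (ha : Psi K a = Polynomial.monomial j a)
    (hj : j < n) (h : a * U + b * V = 0) : a = 0 := by
  by_contra ha0
  have h1 : V ∣ a * U := ⟨-b, by linear_combination h⟩
  have h2 : V ∣ a := cop.symm.dvd_of_dvd_mul_right h1
  obtain ⟨c, hc⟩ := h2
  have hV0 : V ≠ 0 := by rintro rfl; simp at hc; exact ha0 hc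
  have hc0 : c ≠ 0 := by rintro rfl; simp at hc; exact ha0 hc
  have h3 : Psi K a = Psi K V * Psi K c := by rw [hc, map_mul]
  have h4 := congrArg Polynomial.natDegree h3
  rw [Polynomial.natDegree_mul, hV, ha, Polynomial.natDegree_monomial_eq _ ha0,
    Polynomial.natDegree_monomial_eq _ hV0] at h4
  · omega
  · rwa [Ne, map_eq_zero_iff _ Psi_inj]
  · rwa [Ne, map_eq_zero_iff _ Psi_inj]

noncomputable def LL (K : Type*) [Field K] (k : ℕ) : Ideal (MvPolynomial (Fin 2) K) :=
  Ideal.comap (Psi K) (Ideal.span {Polynomial.X ^ k})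

lemma mem_LL (k : ℕ) (h : MvPolynomial (Fin 2) K) :
    h ∈ LL K k ↔ ∀ j < k, (Psi K h).coeff j = 0 := by
  rw [LL, Ideal.mem_comap, Ideal.mem_span_singleton, Polynomial.X_pow_dvd_iff]

lemma mem_LL' (k : ℕ) (h : MvPolynomial (Fin 2) K) :
    h ∈ LL K k ↔ ∀ n : Fin 2 →₀ ℕ, n.degree < k → coeff n h = 0 := by
  rw [mem_LL]
  constructor
  · intro H n hn
    rw [← coeff_Psi_degree, H _ hn]; simp
  · intro H j hj
    ext n
    rw [coeff_coeff_Psi]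
    split_ifs with h
    · rw [H _ (by omega)]; simp
    · simp

lemma LL_succ_le (k : ℕ) : LL K (k + 1) ≤ LL K 1 * LL K k := by
  intro h hh
  rw [mem_LL'] at hh
  rw [← support_sum_monomial_coeff h]
  apply Ideal.sum_mem
  intro n hn
  have hd : k + 1 ≤ n.degree := by
    by_contra hlt
    exact (mem_support_iff.1 hn) (hh n (by omega))
  have : ∃ i, 1 ≤ n i := by
    by_contra hno
    push Not at hno
    have h0 := hno 0
    have h1 := hno 1
    rw [fdeg] at hd
    omega
  obtain ⟨i, hi⟩ := this
  have hle : Finsupp.single i 1 ≤ n := by simpa using hi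
  have hdeg : (n - Finsupp.single i 1).degree + 1 = n.degree := by
    conv_rhs => rw [← tsub_add_cancel_of_le hle]
    simp
  have e : monomial n (coeff n h) = X i * monomial (n - Finsupp.single i 1) (coeff n h) := by
    rw [X, monomial_mul, one_mul, add_tsub_cancel_of_le hle]
  rw [e]
  apply Ideal.mul_mem_mul
  · rw [mem_LL]
    intro j hj
    rw [Psi_X]
    obtain rfl : j = 0 := by omega
    simp
  · rw [mem_LL]
    intro j hj
    rw [Psi_monomial, Polynomial.coeff_monomial, if_neg (by omega)]

end aux

section aux
variable {K : Type*} [Field K]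

lemma Psi_ne {a : MvPolynomial (Fin 2) K} (h : a ≠ 0) : Psi K a ≠ 0 := by
  rwa [Ne, map_eq_zero_iff _ Psi_inj]

lemma Psi_trail (u : MvPolynomial (Fin 2) K) :
    Psi K (Psi K u).trailingCoeff
      = Polynomial.monomial (Psi K u).natTrailingDegree (Psi K u).trailingCoeff :=
  Psi_coeff u _

/-- surjectivity in degree m+n-1 -/
lemma homog_surj (U V : MvPolynomial (Fin 2) K) (m n : ℕ) (cop : IsRelPrime U V)
    (hU : Psi K U = Polynomial.monomial (m + 1) U) (hV : Psi K V = Polynomial.monomial (n + 1) V)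
    (hV0 : V ≠ 0)
    (w : hs (m + n + 1) → K) : ∃ (a : hs n → K) (b : hs m → K),
      emb K (hs n) a * U + emb K (hs m) b * V = emb K _ w := by
  let Φ : ((hs n → K) × (hs m → K)) →ₗ[K] (hs (m + n + 1) → K) :=
    (res K (hs (m + n + 1))).comp
      (((LinearMap.mulRight K U).comp (emb K (hs n))).coprod
        ((LinearMap.mulRight K V).comp (emb K (hs m))))
  have hΦ : ∀ a b, Φ (a, b) = res K _ (emb K (hs n) a * U + emb K (hs m) b * V) := by
    intro a b; rfl
  have hh : ∀ a b, emb K _ (Φ (a, b)) = emb K (hs n) a * U + emb K (hs m) b * V := by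
    intro a b
    rw [hΦ]
    apply emb_res
    intro k hk
    rw [mem_hs] at hk
    have : Psi K (emb K (hs n) a * U + emb K (hs m) b * V) =
      Polynomial.monomial (m + n + 1) (emb K (hs n) a * U + emb K (hs m) b * V) := by
      rw [map_add, map_mul, map_mul, emb_hs, emb_hs, hU, hV, Polynomial.monomial_mul_monomial,
        Polynomial.monomial_mul_monomial, map_add]
      congr 2 <;> congr 1 <;> omega
    rw [← coeff_Psi_degree, this, Polynomial.coeff_monomial, if_neg (by omega)]; simp
  have hinj : Function.Injective Φ := by
    rw [← LinearMap.ker_eq_bot, LinearMap.ker_eq_bot']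
    rintro ⟨a, b⟩ h
    have h2 := hh a b
    rw [h, map_zero] at h2
    have ha := cancel cop (n + 1) n hV (emb_hs _ _) (by omega) h2.symm
    rw [ha, zero_mul, zero_add] at h2
    have hb := (mul_eq_zero.1 h2.symm).resolve_right hV0
    rw [emb_inj _ _ ha, emb_inj _ _ hb]; rfl
  have hsurj : Function.Surjective Φ := by
    rw [← LinearMap.injective_iff_surjective_of_finrank_eq_finrank]
    · exact hinj
    · rw [Module.finrank_prod]
      simp only [Module.finrank_fintype_fun_eq_card, Fintype.card_coe, card_hs]
      omega
  obtain ⟨⟨a, b⟩, hab⟩ := hsurj w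
  exact ⟨a, b, by rw [← hh, hab]⟩

lemma mono_mul_coeff (n j : ℕ) (a u : MvPolynomial (Fin 2) K)
    (ha : Psi K a = Polynomial.monomial n a) (hj : j ≤ n + (Psi K u).natTrailingDegree) :
    (Psi K (a * u)).coeff j =
      if j = n + (Psi K u).natTrailingDegree then a * (Psi K u).trailingCoeff else 0 := by
  rw [map_mul, ha, ← Polynomial.C_mul_X_pow_eq_monomial, mul_assoc, Polynomial.coeff_C_mul,
    Polynomial.coeff_X_pow_mul']
  split_ifs with h1 h2 h2
  · rw [h2, Nat.add_sub_cancel_left]; rfl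
  · rw [Polynomial.coeff_eq_zero_of_lt_natTrailingDegree, mul_zero]; omega
  · omega
  · simp

lemma LL_le (u v : MvPolynomial (Fin 2) K) (hv : v ≠ 0) (m n : ℕ)
    (hm : (Psi K u).natTrailingDegree = m + 1) (hn : (Psi K v).natTrailingDegree = n + 1)
    (cop : IsRelPrime (Psi K u).trailingCoeff (Psi K v).trailingCoeff) :
    LL K (m + n + 1) ≤ Ideal.span {u, v} ⊔ LL K (m + n + 2) := by
  intro h hh
  have hV0 : (Psi K v).trailingCoeff ≠ 0 :=
    Polynomial.trailingCoeff_nonzero_iff_nonzero.2 (Psi_ne hv)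
  obtain ⟨a, b, hab⟩ := homog_surj (Psi K u).trailingCoeff (Psi K v).trailingCoeff m n cop
    (by rw [Psi_trail, hm]) (by rw [Psi_trail, hn]) hV0 (res K _ ((Psi K h).coeff (m + n + 1)))
  rw [emb_res] at hab
  swap
  · intro k hk
    rw [mem_hs] at hk
    rw [coeff_coeff_Psi, if_neg hk]
  set a' := emb K (hs n) a
  set b' := emb K (hs m) b
  rw [Submodule.mem_sup]
  refine ⟨a' * u + b' * v, ?_, h - (a' * u + b' * v), ?_, by ring⟩
  · exact Ideal.add_mem _ (Ideal.mul_mem_left _ _ (Ideal.subset_span (by simp)))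
      (Ideal.mul_mem_left _ _ (Ideal.subset_span (by simp)))
  · rw [mem_LL] at hh ⊢
    intro j hj
    rw [map_sub, map_add, Polynomial.coeff_sub, Polynomial.coeff_add,
      mono_mul_coeff n j a' u (emb_hs _ _) (by omega), mono_mul_coeff m j b' v (emb_hs _ _) (by omega)]
    by_cases hjk : j = m + n + 1
    · rw [if_pos (by omega), if_pos (by omega), hab, hjk, sub_self]
    · rw [if_neg (by omega), if_neg (by omega), hh j (by omega)]; simp

lemma naka (u v : MvPolynomial (Fin 2) K) (hv : v ≠ 0) (m n : ℕ)
    (hm : (Psi K u).natTrailingDegree = m + 1) (hn : (Psi K v).natTrailingDegree = n + 1)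
    (cop : IsRelPrime (Psi K u).trailingCoeff (Psi K v).trailingCoeff) :
    ∃ r : MvPolynomial (Fin 2) K, r - 1 ∈ LL K 1 ∧
      ∀ h ∈ LL K (m + n + 1), r * h ∈ Ideal.span {u, v} := by
  set I := Ideal.span {u, v} with hI
  have h1 : LL K (m + n + 1) ≤ I ⊔ LL K 1 * LL K (m + n + 1) :=
    (LL_le u v hv m n hm hn cop).trans (sup_le_sup_left (LL_succ_le _) _)
  obtain ⟨r, hr, hr2⟩ := Submodule.exists_sub_one_mem_and_smul_eq_zero_of_fg_of_le_smul (LL K 1)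
    (Submodule.map (Submodule.mkQ I) (LL K (m + n + 1)))
    (Submodule.FG.map _ (IsNoetherian.noetherian _)) (by
      rw [← Submodule.map_smul'']
      refine (Submodule.map_mono h1).trans ?_
      rw [Submodule.map_sup, Submodule.mkQ_map_self, bot_sup_eq]
      exact le_rfl)
  refine ⟨r, hr, fun h hh => ?_⟩
  have := hr2 _ (Submodule.mem_map_of_mem hh)
  rw [← map_smul, Submodule.mkQ_apply, Submodule.Quotient.mk_eq_zero] at this
  exact this

lemma trunc_inj (u v a b : MvPolynomial (Fin 2) K) (hu : u ≠ 0) (hv : v ≠ 0) (m n : ℕ)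
    (hm : (Psi K u).natTrailingDegree = m) (hn : (Psi K v).natTrailingDegree = n)
    (cop : IsRelPrime (Psi K u).trailingCoeff (Psi K v).trailingCoeff)
    (ha : ∀ j, n ≤ j → (Psi K a).coeff j = 0) (hb : ∀ j, m ≤ j → (Psi K b).coeff j = 0)
    (h : a * u + b * v ∈ LL K (m + n)) : a = 0 ∧ b = 0 := by
  rw [mem_LL] at h
  have key : ∀ a : MvPolynomial (Fin 2) K, ∀ n, a ≠ 0 → (∀ j, n ≤ j → (Psi K a).coeff j = 0) →
      (Psi K a).natTrailingDegree < n := by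
    intro a n ha0 ha
    by_contra hc
    exact Polynomial.trailingCoeff_nonzero_iff_nonzero.2 (Psi_ne ha0) (ha _ (by omega))
  have key2 : ∀ a u : MvPolynomial (Fin 2) K, a ≠ 0 → u ≠ 0 →
    (Psi K a).trailingCoeff * (Psi K u).trailingCoeff ≠ 0 := by
    intro a u ha hu
    exact mul_ne_zero (Polynomial.trailingCoeff_nonzero_iff_nonzero.2 (Psi_ne ha))
      (Polynomial.trailingCoeff_nonzero_iff_nonzero.2 (Psi_ne hu))
  have key3 : ∀ a u : MvPolynomial (Fin 2) K, a ≠ 0 → u ≠ 0 → ∀ j,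
      j < (Psi K a).natTrailingDegree + (Psi K u).natTrailingDegree →
      (Psi K a * Psi K u).coeff j = 0 := by
    intro a u ha hu j hj
    apply Polynomial.coeff_eq_zero_of_lt_natTrailingDegree
    rwa [Polynomial.natTrailingDegree_mul (Psi_ne ha) (Psi_ne hu)]
  simp only [map_add, map_mul, Polynomial.coeff_add] at h
  by_cases ha0 : a = 0
  · refine ⟨ha0, ?_⟩
    by_contra hb0
    have h1 := key b m hb0 hb
    have h2 := h ((Psi K b).natTrailingDegree + (Psi K v).natTrailingDegree) (by omega)
    rw [ha0, map_zero, zero_mul, Polynomial.coeff_zero, zero_add,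
      Polynomial.coeff_mul_natTrailingDegree_add_natTrailingDegree] at h2
    exact key2 _ _ hb0 hv h2
  exfalso
  have h1 := key a n ha0 ha
  by_cases hb0 : b = 0
  · have h2 := h ((Psi K a).natTrailingDegree + (Psi K u).natTrailingDegree) (by omega)
    rw [hb0, map_zero, zero_mul, Polynomial.coeff_zero, add_zero,
      Polynomial.coeff_mul_natTrailingDegree_add_natTrailingDegree] at h2
    exact key2 _ _ ha0 hu h2
  have h1' := key b m hb0 hb
  rcases lt_trichotomy ((Psi K a).natTrailingDegree + (Psi K u).natTrailingDegree)
    ((Psi K b).natTrailingDegree + (Psi K v).natTrailingDegree) with hlt | heq | hgt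
  · have h2 := h ((Psi K a).natTrailingDegree + (Psi K u).natTrailingDegree) (by omega)
    rw [Polynomial.coeff_mul_natTrailingDegree_add_natTrailingDegree, key3 b v hb0 hv _ hlt,
      add_zero] at h2
    exact key2 _ _ ha0 hu h2
  · have h2 := h ((Psi K a).natTrailingDegree + (Psi K u).natTrailingDegree) (by omega)
    rw [Polynomial.coeff_mul_natTrailingDegree_add_natTrailingDegree, heq,
      Polynomial.coeff_mul_natTrailingDegree_add_natTrailingDegree] at h2
    have := cancel cop n _ (by rw [Psi_trail, hn]) (Psi_trail a) h1 h2
    exact Polynomial.trailingCoeff_nonzero_iff_nonzero.2 (Psi_ne ha0) this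
  · have h2 := h ((Psi K b).natTrailingDegree + (Psi K v).natTrailingDegree) (by omega)
    rw [Polynomial.coeff_mul_natTrailingDegree_add_natTrailingDegree, key3 a u ha0 hu _ hgt,
      zero_add] at h2
    exact key2 _ _ hb0 hv h2

lemma local0 (u v : MvPolynomial (Fin 2) K) (hu : u ≠ 0) (hv : v ≠ 0) (m n : ℕ)
    (hm : (Psi K u).natTrailingDegree = m) (hn : (Psi K v).natTrailingDegree = n)
    (hm0 : 0 < m) (hn0 : 0 < n)
    (cop : IsRelPrime (Psi K u).trailingCoeff (Psi K v).trailingCoeff) :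
    ∃ ψ : MvPolynomial (Fin 2) K →ₗ[K] (Fin (m * n) → K), ∃ r : MvPolynomial (Fin 2) K,
      r - 1 ∈ LL K 1 ∧ ∀ h, ψ h = 0 → r * h ∈ Ideal.span {u, v} := by
  obtain ⟨r, hr, hr2⟩ := naka u v hv (m - 1) (n - 1) (by omega) (by omega) cop
  let Φ : ((ls n → K) × (ls m → K)) →ₗ[K] (ls (m + n) → K) :=
    (res K (ls (m + n))).comp
      (((LinearMap.mulRight K u).comp (emb K (ls n))).coprod
        ((LinearMap.mulRight K v).comp (emb K (ls m))))
  have hΦ : ∀ a b, Φ (a, b) = res K _ (emb K (ls n) a * u + emb K (ls m) b * v) := by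
    intro a b; rfl
  have hres : ∀ h, res K (ls (m + n)) h = 0 → h ∈ LL K (m + n) := by
    intro h hh
    rw [mem_LL']
    intro k hk
    exact congrArg (fun f => f ⟨k, (mem_ls _ _).2 hk⟩) hh
  have hinj : Function.Injective Φ := by
    rw [← LinearMap.ker_eq_bot, LinearMap.ker_eq_bot']
    rintro ⟨a, b⟩ h
    rw [hΦ] at h
    have h2 := trunc_inj u v _ _ hu hv m n hm hn cop (emb_ls_natDegree n a)
      (emb_ls_natDegree m b) (hres _ h)
    rw [emb_inj _ _ h2.1, emb_inj _ _ h2.2]; rfl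
  have hrank : Module.finrank K ((ls (m + n) → K) ⧸ LinearMap.range Φ) = m * n := by
    have h1 := Submodule.finrank_quotient_add_finrank (LinearMap.range Φ)
    rw [LinearMap.finrank_range_of_inj hinj, Module.finrank_prod] at h1
    simp only [Module.finrank_fintype_fun_eq_card, Fintype.card_coe] at h1
    have c1 := card_ls m
    have c2 := card_ls n
    have c3 := card_ls (m + n)
    nlinarith
  let e := LinearEquiv.ofFinrankEq ((ls (m + n) → K) ⧸ LinearMap.range Φ) (Fin (m * n) → K)
    (by rw [hrank]; simp)
  refine ⟨e.toLinearMap.comp ((Submodule.mkQ _).comp (res K (ls (m + n)))), r, hr, ?_⟩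
  intro h hh
  simp only [LinearMap.comp_apply, LinearEquiv.coe_coe, LinearEquiv.map_eq_zero_iff,
    Submodule.mkQ_apply, Submodule.Quotient.mk_eq_zero] at hh
  obtain ⟨⟨a, b⟩, hab⟩ := hh
  rw [hΦ, ← sub_eq_zero, ← map_sub] at hab
  have h3 := hres _ hab
  have h4 : emb K (ls n) a * u + emb K (ls m) b * v - h ∈ LL K (m - 1 + (n - 1) + 1) := by
    rw [mem_LL] at h3 ⊢
    intro j hj
    exact h3 j (by omega)
  have h5 := hr2 _ h4
  have h6 : emb K (ls n) a * u + emb K (ls m) b * v ∈ Ideal.span {u, v} :=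
    Ideal.add_mem _ (Ideal.mul_mem_left _ _ (Ideal.subset_span (by simp)))
      (Ideal.mul_mem_left _ _ (Ideal.subset_span (by simp)))
  have : r * h = r * (emb K (ls n) a * u + emb K (ls m) b * v)
    - r * (emb K (ls n) a * u + emb K (ls m) b * v - h) := by ring
  rw [this]
  exact Ideal.sub_mem _ (Ideal.mul_mem_left _ _ h6) h5

end aux

section aux
variable {K : Type*} [Field K]

lemma eval_tr (P : K × K) (r : MvPolynomial (Fin 2) K) :
    eval ![P.1, P.2] (tr (-P) r) = constantCoeff r := by
  have : (eval ![P.1, P.2]).comp (tr (-P)).toRingHom = (constantCoeff : _ →+* K) := by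
    ext i
    · simp
    · fin_cases i <;> simp [tr]
  exact congrArg (fun f => f r) this

lemma eval_tr' (P : K × K) (u : MvPolynomial (Fin 2) K) :
    constantCoeff (tr P u) = eval ![P.1, P.2] u := by
  rw [← eval_tr P, tr_tr]

lemma multAt_pos (P : K × K) (u : MvPolynomial (Fin 2) K) (hu : u ≠ 0)
    (h : eval ![P.1, P.2] u = 0) : 0 < multAt u P := by
  rw [multAt_eq, Nat.pos_iff_ne_zero, Ne, Polynomial.natTrailingDegree_eq_zero]
  push Not
  refine ⟨Psi_ne ((map_ne_zero_iff _ (tr_inj P)).2 hu), ?_⟩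
  rw [coeff_Psi, homogeneousComponent_zero]
  rw [← eval_tr', constantCoeff_eq] at h
  rw [h, map_zero]

lemma localP (u v : MvPolynomial (Fin 2) K) (hu : u ≠ 0) (hv : v ≠ 0) (P : K × K)
    (hm0 : 0 < multAt u P) (hn0 : 0 < multAt v P)
    (cop : IsRelPrime (Psi K (tr P u)).trailingCoeff (Psi K (tr P v)).trailingCoeff) :
    ∃ ψ : MvPolynomial (Fin 2) K →ₗ[K] (Fin (multAt u P * multAt v P) → K),
      ∃ r : MvPolynomial (Fin 2) K,
      eval ![P.1, P.2] r ≠ 0 ∧ ∀ h, ψ h = 0 → r * h ∈ Ideal.span {u, v} := by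
  obtain ⟨ψ, r, hr, hr2⟩ := local0 (tr P u) (tr P v) ((map_ne_zero_iff _ (tr_inj P)).2 hu)
    ((map_ne_zero_iff _ (tr_inj P)).2 hv) _ _ (multAt_eq u P).symm (multAt_eq v P).symm hm0 hn0 cop
  refine ⟨ψ.comp (tr P).toLinearMap, tr (-P) r, ?_, ?_⟩
  · rw [eval_tr]
    rw [mem_LL'] at hr
    have := hr 0 (by simp)
    rw [coeff_sub, ← constantCoeff_eq, map_one, sub_eq_zero] at this
    rw [this]; exact one_ne_zero
  · intro h hh
    have := hr2 (tr P h) hh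
    rw [Ideal.mem_span_pair] at this ⊢
    obtain ⟨a, b, hab⟩ := this
    refine ⟨tr (-P) a, tr (-P) b, ?_⟩
    have h2 := congrArg (tr (-P)) hab
    simpa only [map_add, map_mul, tr_tr] using h2

lemma localAny (u v : MvPolynomial (Fin 2) K) (hu : u ≠ 0) (hv : v ≠ 0) (P : K × K)
    (cop : 0 < multAt u P → 0 < multAt v P →
      IsRelPrime (Psi K (tr P u)).trailingCoeff (Psi K (tr P v)).trailingCoeff) :
    ∃ ψ : MvPolynomial (Fin 2) K →ₗ[K] (Fin (multAt u P * multAt v P) → K),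
      ∃ r : MvPolynomial (Fin 2) K,
      eval ![P.1, P.2] r ≠ 0 ∧ ∀ h, ψ h = 0 → r * h ∈ Ideal.span {u, v} := by
  by_cases h1 : eval ![P.1, P.2] u = 0
  · by_cases h2 : eval ![P.1, P.2] v = 0
    · have h1 := multAt_pos P u hu h1
      have h2 := multAt_pos P v hv h2
      exact localP u v hu hv P h1 h2 (cop h1 h2)
    · exact ⟨0, v, h2, fun h _ => Ideal.mul_mem_right _ _ (Ideal.subset_span (by simp))⟩
  · exact ⟨0, u, h1, fun h _ => Ideal.mul_mem_right _ _ (Ideal.subset_span (by simp))⟩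

lemma reduce (u v : MvPolynomial (Fin 2) K) (d e : ℕ) (hV0 : v ≠ 0)
    (hd : (Psi K u).natDegree = d) (he : (Psi K v).natDegree = e)
    (cop : IsRelPrime (Psi K u).leadingCoeff (Psi K v).leadingCoeff) (r : ℕ) :
    ∀ a b : MvPolynomial (Fin 2) K, (∀ j, e + r ≤ j → (Psi K a).coeff j = 0) →
      (∀ j, d + r ≤ j → (Psi K b).coeff j = 0) →
      (∀ j, d + e ≤ j → (Psi K (a * u + b * v)).coeff j = 0) →
      ∃ a' b' : MvPolynomial (Fin 2) K, (∀ j, e ≤ j → (Psi K a').coeff j = 0) ∧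
      (∀ j, d ≤ j → (Psi K b').coeff j = 0) ∧ a' * u + b' * v = a * u + b * v := by
  induction r with
  | zero => intro a b ha hb _; exact ⟨a, b, ha, hb, rfl⟩
  | succ r ih =>
    intro a b ha hb hab
    set U := (Psi K u).leadingCoeff with hU
    set V := (Psi K v).leadingCoeff with hV
    have hVne : V ≠ 0 := Polynomial.leadingCoeff_ne_zero.2 (Psi_ne hV0)
    have hPU : Psi K U = Polynomial.monomial d U := by
      rw [hU, Polynomial.leadingCoeff, Psi_coeff, hd]
    have hPV : Psi K V = Polynomial.monomial e V := by
      rw [hV, Polynomial.leadingCoeff, Psi_coeff, he]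
    have hd' : ∀ j, d < j → (Psi K u).coeff j = 0 := fun j hj =>
      Polynomial.coeff_eq_zero_of_natDegree_lt (by omega)
    have he' : ∀ j, e < j → (Psi K v).coeff j = 0 := fun j hj =>
      Polynomial.coeff_eq_zero_of_natDegree_lt (by omega)
    have hda : (Psi K a).natDegree ≤ e + r := by
      rw [Polynomial.natDegree_le_iff_coeff_eq_zero]
      intro N hN; exact ha N (by omega)
    have hdb : (Psi K b).natDegree ≤ d + r := by
      rw [Polynomial.natDegree_le_iff_coeff_eq_zero]
      intro N hN; exact hb N (by omega)
    have h1 := hab (d + e + r) (by omega)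
    rw [map_add, map_mul, map_mul, Polynomial.coeff_add] at h1
    have c1 : (Psi K a * Psi K u).coeff (d + e + r) = (Psi K a).coeff (e + r) * U := by
      rw [show d + e + r = (e + r) + d by ring,
        Polynomial.coeff_mul_add_eq_of_natDegree_le hda hd.le, hU, Polynomial.leadingCoeff, hd]
    have c2 : (Psi K b * Psi K v).coeff (d + e + r) = (Psi K b).coeff (d + r) * V := by
      rw [show d + e + r = (d + r) + e by ring,
        Polynomial.coeff_mul_add_eq_of_natDegree_le hdb he.le, hV, Polynomial.leadingCoeff, he]
    rw [c1, c2] at h1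
    have h2 : V ∣ (Psi K a).coeff (e + r) := by
      apply cop.symm.dvd_of_dvd_mul_right
      exact ⟨-(Psi K b).coeff (d + r), by linear_combination h1⟩
    obtain ⟨c, hc⟩ := h2
    -- homogenize c
    have hc2 : (Psi K a).coeff (e + r) = V * (Psi K c).coeff r := by
      have h3 := congrArg (fun f => (Psi K f).coeff (e + r)) hc
      simp only [map_mul, Psi_coeff, Polynomial.coeff_monomial, if_true, hPV] at h3
      rw [h3, ← Polynomial.C_mul_X_pow_eq_monomial, mul_assoc, Polynomial.coeff_C_mul,
        add_comm e r, Polynomial.coeff_X_pow_mul]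
    set c' := (Psi K c).coeff r with hc'
    have hPc : Psi K c' = Polynomial.monomial r c' := Psi_coeff c r
    have hb2 : (Psi K b).coeff (d + r) = -(c' * U) := by
      apply mul_right_cancel₀ hVne
      rw [hc2] at h1
      linear_combination h1
    have key : ∀ j (w : MvPolynomial (Fin 2) K), (Psi K (c' * w)).coeff (j + r)
        = c' * (Psi K w).coeff j := by
      intro j w
      rw [map_mul, hPc, ← Polynomial.C_mul_X_pow_eq_monomial, mul_assoc, Polynomial.coeff_C_mul,
        Polynomial.coeff_X_pow_mul]
    have hnew : (a - c' * v) * u + (b + c' * u) * v = a * u + b * v := by ring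
    obtain ⟨a', b', h1, h2, h3⟩ := ih (a - c' * v) (b + c' * u) (by
      intro j hj
      obtain ⟨j', rfl⟩ : ∃ j', j = j' + r := ⟨j - r, by omega⟩
      rw [map_sub, Polynomial.coeff_sub, key]
      by_cases hje : j' = e
      · rw [hje, hc2, hV, Polynomial.leadingCoeff, he]; ring
      · rw [ha _ (by omega), he' _ (by omega)]; ring) (by
      intro j hj
      obtain ⟨j', rfl⟩ : ∃ j', j = j' + r := ⟨j - r, by omega⟩
      rw [map_add, Polynomial.coeff_add, key]
      by_cases hje : j' = d
      · rw [hje, hb2, hU, Polynomial.leadingCoeff, hd]; ring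
      · rw [hb _ (by omega), hd' _ (by omega)]; ring) (by rw [hnew]; exact hab)
    exact ⟨a', b', h1, h2, by rw [h3, hnew]⟩

lemma bezout [IsAlgClosed K] (u v : MvPolynomial (Fin 2) K) (hu : u ≠ 0) (hv : v ≠ 0)
    (cop : IsRelPrime (Psi K u).leadingCoeff (Psi K v).leadingCoeff) (S : Finset (K × K))
    (hS : ∀ P, 0 < multAt u P → 0 < multAt v P → P ∈ S ∧
      IsRelPrime (Psi K (tr P u)).trailingCoeff (Psi K (tr P v)).trailingCoeff) :
    u.totalDegree * v.totalDegree ≤ ∑ P ∈ S, multAt u P * multAt v P := by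
  choose ψ r hr hψ using fun P : K × K =>
    localAny u v hu hv P (fun h1 h2 => (hS P h1 h2).2)
  set I := Ideal.span {u, v} with hI
  have hker : ∀ h : MvPolynomial (Fin 2) K, (∀ P ∈ S, ψ P h = 0) → h ∈ I := by
    intro h hh
    let J : Ideal (MvPolynomial (Fin 2) K) :=
      Submodule.comap (LinearMap.toSpanSingleton _ _ h) I
    have hJ : ∀ x, x ∈ J ↔ x * h ∈ I := fun x => Iff.rfl
    by_contra hI'
    have hJ1 : J ≠ ⊤ := by
      rw [Ideal.ne_top_iff_one, hJ, one_mul]; exact hI'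
    obtain ⟨M, hM, hJM⟩ := Ideal.exists_le_maximal J hJ1
    obtain ⟨x, hx⟩ := (isMaximal_iff_eq_vanishingIdeal_singleton (K := K) (σ := Fin 2)).1 hM
    have hx2 : x = ![x 0, x 1] := by ext i; fin_cases i <;> rfl
    have hmem : ∀ p ∈ J, eval ![x 0, x 1] p = 0 := by
      intro p hp
      have := hJM hp
      rw [hx, mem_vanishingIdeal_singleton_iff] at this
      rw [← hx2]
      simpa [aeval_eq_eval] using this
    have hu0 := hmem u ((hJ _).2 (Ideal.mul_mem_right _ _ (Ideal.subset_span (by simp))))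
    have hv0 := hmem v ((hJ _).2 (Ideal.mul_mem_right _ _ (Ideal.subset_span (by simp))))
    have hP := (hS (x 0, x 1) (multAt_pos _ u hu hu0) (multAt_pos _ v hv hv0)).1
    exact hr (x 0, x 1) (hmem _ ((hJ _).2 (hψ _ _ (hh _ hP))))
  set d := u.totalDegree with hd
  set e := v.totalDegree with he
  let Θ : (ls (d + e) → K) →ₗ[K] (∀ P : S, Fin (multAt u P.1 * multAt v P.1) → K) :=
    (LinearMap.pi (fun P : S => ψ P.1)).comp (emb K (ls (d + e)))
  let Φ : ((ls e → K) × (ls d → K)) →ₗ[K] (ls (d + e) → K) :=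
    (res K (ls (d + e))).comp
      (((LinearMap.mulRight K u).comp (emb K (ls e))).coprod
        ((LinearMap.mulRight K v).comp (emb K (ls d))))
  have hΦ : ∀ a b, Φ (a, b) = res K _ (emb K (ls e) a * u + emb K (ls d) b * v) := by
    intro a b; rfl
  have hle : LinearMap.ker Θ ≤ LinearMap.range Φ := by
    intro w hw
    have h1 : emb K (ls (d + e)) w ∈ I := by
      apply hker
      intro P hP
      exact congrArg (fun f => f ⟨P, hP⟩) (LinearMap.mem_ker.1 hw)
    rw [hI, Ideal.mem_span_pair] at h1
    obtain ⟨a, b, hab⟩ := h1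
    obtain ⟨a', b', ha, hb, hab'⟩ := reduce u v d e hv (natDegree_Psi u) (natDegree_Psi v) cop
      ((Psi K a).natDegree + (Psi K b).natDegree + 1) a b
      (fun j hj => Polynomial.coeff_eq_zero_of_natDegree_lt (by omega))
      (fun j hj => Polynomial.coeff_eq_zero_of_natDegree_lt (by omega))
      (by rw [hab]; exact emb_ls_natDegree _ _)
    have hex : ∀ (k : ℕ) (a : MvPolynomial (Fin 2) K), (∀ j, k ≤ j → (Psi K a).coeff j = 0) →
        emb K (ls k) (res K (ls k) a) = a := by
      intro k a ha
      apply emb_res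
      intro n hn
      rw [mem_ls] at hn
      rw [← coeff_Psi_degree, ha _ (by omega)]; simp
    refine ⟨(res K _ a', res K _ b'), ?_⟩
    rw [hΦ, hex _ _ ha, hex _ _ hb, hab', hab]
    ext n
    rw [res_apply, coeff_emb]
  have f1 := LinearMap.finrank_range_add_finrank_ker Θ
  have f2 := Submodule.finrank_mono hle
  have f3 := LinearMap.finrank_range_le Φ
  have f4 := Submodule.finrank_le (LinearMap.range Θ)
  rw [Module.finrank_pi_fintype] at f4
  rw [Module.finrank_prod] at f3
  simp only [Module.finrank_fintype_fun_eq_card, Fintype.card_coe, Fintype.card_fin] at f1 f2 f3 f4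
  rw [Finset.sum_coe_sort S (fun P => multAt u P * multAt v P)] at f4
  have c1 := card_ls d
  have c2 := card_ls e
  have c3 := card_ls (d + e)
  nlinarith

end aux

section aux
variable {K : Type*} [Field K]

lemma cop_XY : IsRelPrime (X 0 : MvPolynomial (Fin 2) K) (X 1) := by
  rw [Irreducible.isRelPrime_iff_not_dvd (X_prime (R := K) (i := (0 : Fin 2))).irreducible]
  rw [X_dvd_X]
  simp

lemma cop_XYpow (m n : ℕ) : IsRelPrime ((X 0 : MvPolynomial (Fin 2) K) ^ m) (X 1 ^ n) :=
  cop_XY.pow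

lemma coeff_lin_pow {R : Type*} [CommRing R] (a c : R) (t j : ℕ) :
    ((Polynomial.C a * Polynomial.X + Polynomial.C c) ^ t).coeff j
      = a ^ j * c ^ (t - j) * (t.choose j : R) := by
  rw [add_pow, Polynomial.finsetSum_coeff]
  have : ∀ m, ((Polynomial.C a * Polynomial.X) ^ m * Polynomial.C c ^ (t - m) *
      (t.choose m : Polynomial R)).coeff j = if j = m then a ^ m * c ^ (t - m) * (t.choose m : R) else 0 := by
    intro m
    rw [mul_pow, ← map_pow, ← map_pow, ← Polynomial.C_eq_natCast,
      show ∀ a b x y : Polynomial R, a * x * b * y = (a * b * y) * x by intros; ring, ← map_mul,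
      ← map_mul, Polynomial.coeff_C_mul_X_pow]
  simp only [this]
  rw [Finset.sum_ite_eq]
  split_ifs with h
  · rfl
  · rw [Finset.mem_range] at h
    rw [Nat.choose_eq_zero_of_lt (by omega)]; simp

lemma dvd_pderiv (D T : MvPolynomial (Fin 2) K) (h : D * D ∣ T) (i : Fin 2) : D ∣ pderiv i T := by
  obtain ⟨E, rfl⟩ := h
  simp only [Derivation.leibniz, smul_eq_mul]
  exact ⟨D * pderiv i E + E * (pderiv i D + pderiv i D), by ring⟩

lemma dvd_coeff_pred {R : Type*} [CommRing R] (D : R) (p q r : Polynomial R)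
    (hp : D ∣ p.leadingCoeff) (hq : D ∣ q.leadingCoeff) (N : ℕ)
    (hN : N + 1 = p.natDegree + (q.natDegree + r.natDegree)) : D ∣ (p * (q * r)).coeff N := by
  rw [Polynomial.coeff_mul]
  apply Finset.dvd_sum
  rintro ⟨i, j⟩ hij
  rw [Finset.HasAntidiagonal.mem_antidiagonal] at hij
  simp only at hij
  rcases lt_trichotomy i p.natDegree with h | h | h
  · apply Dvd.dvd.mul_left
    rcases eq_or_lt_of_le (show q.natDegree + r.natDegree ≤ j by omega) with h2 | h2
    · rw [← h2, Polynomial.coeff_mul_degree_add_degree]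
      exact Dvd.dvd.mul_right hq _
    · rw [Polynomial.coeff_eq_zero_of_natDegree_lt
        (lt_of_le_of_lt Polynomial.natDegree_mul_le h2)]
      exact dvd_zero _
  · apply Dvd.dvd.mul_right
    rw [h]; exact hp
  · simp only
    rw [Polynomial.coeff_eq_zero_of_natDegree_lt h, zero_mul]
    exact dvd_zero _

noncomputable def FF (K : Type*) [Field K] (t : ℕ) : MvPolynomial (Fin 2) K :=
  X 0 ^ t + X 1 ^ t + 1 + (X 0 + X 1 + 1) ^ t

lemma top_cop [CharP K 2] (i l t : ℕ) (hi : 1 ≤ i) (hl : 1 ≤ l)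
    (ht : t = 2 ^ i * l + 1) (u v w : MvPolynomial (Fin 2) K) (h : u * (v * w) = FF K t) :
    IsRelPrime (Psi K u).leadingCoeff (Psi K v).leadingCoeff := by
  have hq : 2 ≤ 2 ^ i := by
    calc 2 = 2 ^ 1 := rfl
      _ ≤ 2 ^ i := Nat.pow_le_pow_right (by norm_num) hi
  have ht3 : 3 ≤ t := by rw [ht]; nlinarith
  have h2 : (2 : MvPolynomial (Fin 2) K) = 0 := CharTwo.two_eq_zero
  have htc : (t : MvPolynomial (Fin 2) K) = 1 := by
    rw [ht]; push_cast; rw [h2, zero_pow (by omega)]; ring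
  have hF : Psi K (FF K t) = Polynomial.C (X 0 ^ t) * Polynomial.X ^ t
      + Polynomial.C (X 1 ^ t) * Polynomial.X ^ t + 1
      + (Polynomial.C (X 0 + X 1) * Polynomial.X + Polynomial.C 1) ^ t := by
    simp only [FF, map_add, map_pow, map_one, Psi_X, mul_pow, add_mul]
  set T : MvPolynomial (Fin 2) K := X 0 ^ t + X 1 ^ t + (X 0 + X 1) ^ t with hT
  have hct : (Psi K (FF K t)).coeff t = T := by
    rw [hF]
    simp only [Polynomial.coeff_add, Polynomial.coeff_C_mul_X_pow, coeff_lin_pow,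
      Polynomial.coeff_one]
    rw [if_neg (show t ≠ 0 by omega)]
    simp [hT]
  have hct1 : (Psi K (FF K t)).coeff (t - 1) = (X 0 + X 1) ^ (t - 1) := by
    rw [hF]
    simp only [Polynomial.coeff_add, Polynomial.coeff_C_mul_X_pow, coeff_lin_pow,
      Polynomial.coeff_one]
    rw [if_neg (show t - 1 ≠ 0 by omega), if_neg (show t - 1 ≠ t by omega),
      Nat.choose_symm (show 1 ≤ t by omega), Nat.choose_one_right, htc]
    simp
    omega
  have hgt : ∀ N, t < N → (Psi K (FF K t)).coeff N = 0 := by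
    intro N hN
    rw [hF]
    simp only [Polynomial.coeff_add, Polynomial.coeff_C_mul_X_pow, coeff_lin_pow,
      Polynomial.coeff_one]
    rw [if_neg (show N ≠ 0 by omega), if_neg (show N ≠ t by omega),
      Nat.choose_eq_zero_of_lt hN]
    simp
    omega
  have hder : pderiv 0 T = X 0 ^ (t - 1) + (X 0 + X 1) ^ (t - 1) := by
    rw [hT]
    simp [pderiv_pow, htc, pderiv_X]
  have hT0 : T ≠ 0 := by
    intro h0
    rw [h0, map_zero] at hder
    have := congrArg (eval (fun _ => (1 : K))) hder
    simp [CharTwo.add_self_eq_zero, show t - 1 ≠ 0 by omega] at this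
  have hdeg : (Psi K (FF K t)).natDegree = t := by
    apply Polynomial.natDegree_eq_of_le_of_coeff_ne_zero
    · rw [Polynomial.natDegree_le_iff_coeff_eq_zero]; exact hgt
    · rw [hct]; exact hT0
  have hP : Psi K u * (Psi K v * Psi K w) = Psi K (FF K t) := by rw [← h, map_mul, map_mul]
  have hFne : Psi K (FF K t) ≠ 0 := by
    intro h0; rw [h0] at hct; exact hT0 (by rw [← hct]; simp)
  have hne := hFne
  rw [← hP] at hne
  have hu0 := left_ne_zero_of_mul hne
  have hvw0 := right_ne_zero_of_mul hne
  have hlead : (Psi K u).leadingCoeff * ((Psi K v).leadingCoeff * (Psi K w).leadingCoeff) = T := by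
    rw [← Polynomial.leadingCoeff_mul, ← Polynomial.leadingCoeff_mul, hP, Polynomial.leadingCoeff,
      hdeg, hct]
  have hdegs : t = (Psi K u).natDegree + ((Psi K v).natDegree + (Psi K w).natDegree) := by
    rw [← Polynomial.natDegree_mul (left_ne_zero_of_mul hvw0) (right_ne_zero_of_mul hvw0),
      ← Polynomial.natDegree_mul hu0 hvw0, hP, hdeg]
  intro D hDu hDv
  have d1 : D ∣ X 0 ^ (t - 1) + (X 0 + X 1) ^ (t - 1) := by
    rw [← hder]
    apply dvd_pderiv
    rw [← hlead]
    exact mul_dvd_mul hDu (Dvd.dvd.mul_right hDv _)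
  have d2 : D ∣ (X 0 + X 1) ^ (t - 1) := by
    rw [← hct1, ← hP]
    exact dvd_coeff_pred D _ _ _ hDu hDv _ (by omega)
  have d3 : D ∣ X 0 ^ (t - 1) := (dvd_add_left d2).1 d1
  have hc : IsRelPrime ((X 0 : MvPolynomial (Fin 2) K) ^ (t - 1)) ((X 0 + X 1) ^ (t - 1)) := by
    apply IsRelPrime.pow
    have := (cop_XY (K := K)).symm.add_mul_left_left 1
    rw [mul_one, add_comm] at this
    exact this.symm
  exact hc d3 d2

/-- local expansion -/
lemma loc_exp {R : Type*} [CommRing R] [CharP R 2] (i l t : ℕ) (hi : 1 ≤ i) (hlo : Odd l)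
    (ht : t = 2 ^ i * l + 1) (a c : R) (hc : c ^ l = 1) (hcq : c ^ 2 ^ i = c) :
    ∃ E : Polynomial R, (Polynomial.C a * Polynomial.X + Polynomial.C c) ^ t
      = Polynomial.C c + Polynomial.C a * Polynomial.X
        + Polynomial.C (a ^ 2 ^ i) * Polynomial.X ^ 2 ^ i
        + Polynomial.C (c ^ (l - 1) * a ^ (2 ^ i + 1)) * Polynomial.X ^ (2 ^ i + 1)
        + E * Polynomial.X ^ (2 ^ i + 2) := by
  have hq : 2 ≤ 2 ^ i := by
    calc 2 = 2 ^ 1 := rfl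
      _ ≤ 2 ^ i := Nat.pow_le_pow_right (by norm_num) hi
  set q := 2 ^ i with hqd
  have : Fact (Nat.Prime 2) := ⟨Nat.prime_two⟩
  have h1 : (Polynomial.C a * Polynomial.X + Polynomial.C c) ^ q
      = Polynomial.C (a ^ q) * Polynomial.X ^ q + Polynomial.C c := by
    rw [hqd, add_pow_char_pow, mul_pow, ← map_pow, ← map_pow, hcq]
  have h2 : (2 : Polynomial R) = 0 := CharTwo.two_eq_zero
  have hl1 : (l : Polynomial R) = 1 := by
    obtain ⟨m, hm⟩ := hlo
    rw [hm]; push_cast; rw [h2]; ring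
  obtain ⟨k, hk⟩ := Polynomial.powAddExpansion (Polynomial.C c) (Polynomial.C (a ^ q) * Polynomial.X ^ q) l
  have hcl : (Polynomial.C c) ^ l = 1 := by rw [← map_pow, hc, map_one]
  have hcl1 : (Polynomial.C c) * Polynomial.C c ^ (l - 1) = 1 := by
    rw [← pow_succ', Nat.sub_add_cancel hlo.pos, hcl]
  obtain ⟨m, hm⟩ : ∃ m, q = m + 2 := ⟨q - 2, by omega⟩
  refine ⟨(Polynomial.C a * Polynomial.X + Polynomial.C c) * k * Polynomial.C (a ^ q) ^ 2
    * Polynomial.X ^ m, ?_⟩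
  rw [ht, pow_succ, pow_mul, h1, add_comm (Polynomial.C (a ^ q) * Polynomial.X ^ q), hk, hl1, hcl]
  simp only [map_mul, map_pow]
  rw [hm]
  linear_combination (Polynomial.C a ^ (m + 2) * Polynomial.X ^ (m + 2)) * hcl1

lemma tan_cop [CharP K 2] (i l t : ℕ) (hi : 1 ≤ i) (hlo : Odd l)
    (ht : t = 2 ^ i * l + 1) (hdvd : l ∣ 2 ^ i - 1)
    (u v w : MvPolynomial (Fin 2) K) (h : u * (v * w) = FF K t) (hF0 : FF K t ≠ 0) (P : K × K)
    (hu : 0 < multAt u P) (hv : 0 < multAt v P) :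
    IsRelPrime (Psi K (tr P u)).trailingCoeff (Psi K (tr P v)).trailingCoeff := by
  have hq : 2 ≤ 2 ^ i := by
    calc 2 = 2 ^ 1 := rfl
      _ ≤ 2 ^ i := Nat.pow_le_pow_right (by norm_num) hi
  have : Fact (Nat.Prime 2) := ⟨Nat.prime_two⟩
  have h2 : (2 : MvPolynomial (Fin 2) K) = 0 := CharTwo.two_eq_zero
  have h2K : (2 : K) = 0 := CharTwo.two_eq_zero
  have htc : (t : MvPolynomial (Fin 2) K) = 1 := by
    rw [ht]; push_cast; rw [h2, zero_pow (by omega)]; ring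
  obtain ⟨α, β⟩ := P
  set γ := α + β + 1 with hγ
  set G := Psi K (tr (α, β) (FF K t)) with hG
  have hGe : G = (Polynomial.C (X 0) * Polynomial.X + Polynomial.C (C α)) ^ t
      + (Polynomial.C (X 1) * Polynomial.X + Polynomial.C (C β)) ^ t + 1
      + (Polynomial.C (X 0 + X 1) * Polynomial.X + Polynomial.C (C γ)) ^ t := by
    have e0 : tr (α, β) (X 0 : MvPolynomial (Fin 2) K) = X 0 + C α := by simp [tr]
    have e1 : tr (α, β) (X 1 : MvPolynomial (Fin 2) K) = X 1 + C β := by simp [tr]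
    rw [hG]
    simp only [FF, map_add, map_pow, map_one, e0, e1, Psi_X, Psi_C, hγ]
    congr 2
    ring
  have hGne : G ≠ 0 := Psi_ne ((map_ne_zero_iff _ (tr_inj _)).2 hF0)
  have hprod : Psi K (tr (α, β) u) * (Psi K (tr (α, β) v) * Psi K (tr (α, β) w)) = G := by
    rw [hG, ← h, map_mul, map_mul, map_mul, map_mul]
  have hne := hGne
  rw [← hprod] at hne
  have hu0 := left_ne_zero_of_mul hne
  have hvw0 := right_ne_zero_of_mul hne
  have hv0 := left_ne_zero_of_mul hvw0
  have hw0 := right_ne_zero_of_mul hvw0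
  rw [multAt_eq] at hu hv
  have htd : 2 ≤ G.natTrailingDegree := by
    rw [← hprod, Polynomial.natTrailingDegree_mul hu0 hvw0, Polynomial.natTrailingDegree_mul hv0 hw0]
    omega
  have c0 := Polynomial.coeff_eq_zero_of_lt_natTrailingDegree (show 0 < G.natTrailingDegree by omega)
  have c1 := Polynomial.coeff_eq_zero_of_lt_natTrailingDegree (show 1 < G.natTrailingDegree by omega)
  rw [hGe] at c0 c1
  simp only [Polynomial.coeff_add, coeff_lin_pow, Polynomial.coeff_one, htc, Nat.choose_one_right,
    Nat.choose_zero_right, Nat.cast_one, mul_one, pow_zero, one_mul, pow_one, Nat.sub_zero] at c0 c1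
  have d0 := congrArg (eval (fun _ => (0 : K))) c0
  have d1 := congrArg (eval ![(1 : K), 0]) c1
  have d2 := congrArg (eval ![(0 : K), 1]) c1
  simp at d0 d1 d2
  have ht1 : t - 1 = l * 2 ^ i := by rw [ht, Nat.add_sub_cancel, mul_comm]
  have ht2 : t = t - 1 + 1 := by omega
  have a1 : α ^ (t - 1) = γ ^ (t - 1) := by
    linear_combination d1 - γ ^ (t - 1) * h2K
  have a2 : β ^ (t - 1) = γ ^ (t - 1) := by
    linear_combination d2 - γ ^ (t - 1) * h2K
  have a3 : γ ^ (t - 1) = 1 := by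
    rw [ht2, pow_succ, pow_succ, pow_succ, a1, a2] at d0
    rw [hγ] at d0 ⊢
    linear_combination d0 - h2K * (1 + (α + β + 1) ^ (t - 1) * (α + β))
  rw [a3] at a1 a2
  have key : ∀ c : K, c ^ (t - 1) = 1 → c ^ l = 1 ∧ c ^ 2 ^ i = c := by
    intro c hc
    have h1 : c ^ l = 1 := by
      rw [ht1, pow_mul] at hc
      have : (c ^ l - 1) ^ 2 ^ i = 0 := by rw [sub_pow_char_pow, hc]; simp
      exact sub_eq_zero.1 (pow_eq_zero_iff (by omega) |>.1 this)
    refine ⟨h1, ?_⟩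
    obtain ⟨m, hm⟩ := hdvd
    have : 2 ^ i = l * m + 1 := by omega
    rw [this, pow_succ, pow_mul, h1, one_pow, one_mul]
  have kα := key α a1
  have kβ := key β a2
  have kγ := key γ a3
  have keyC : ∀ c : K, c ^ l = 1 ∧ c ^ 2 ^ i = c →
      (C c : MvPolynomial (Fin 2) K) ^ l = 1 ∧ (C c : MvPolynomial (Fin 2) K) ^ 2 ^ i = C c := by
    rintro c ⟨h1, h2⟩
    rw [← map_pow, ← map_pow, h1, h2]; simp
  obtain ⟨E1, hE1⟩ := loc_exp i l t hi hlo ht (X 0 : MvPolynomial (Fin 2) K) _ (keyC α kα).1 (keyC α kα).2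
  obtain ⟨E2, hE2⟩ := loc_exp i l t hi hlo ht (X 1 : MvPolynomial (Fin 2) K) _ (keyC β kβ).1 (keyC β kβ).2
  obtain ⟨E3, hE3⟩ := loc_exp i l t hi hlo ht (X 0 + X 1 : MvPolynomial (Fin 2) K) _ (keyC γ kγ).1 (keyC γ kγ).2
  set q := 2 ^ i with hqd
  set A : MvPolynomial (Fin 2) K := C α ^ (l - 1) with hA
  set B : MvPolynomial (Fin 2) K := C β ^ (l - 1) with hB
  set Γ : MvPolynomial (Fin 2) K := C γ ^ (l - 1) with hΓ
  have mulinv : ∀ c : K, c ^ l = 1 ∧ c ^ q = c → C c ^ (l - 1) * (C c : MvPolynomial (Fin 2) K) = 1 := by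
    intro c hc
    rw [← pow_succ, Nat.sub_add_cancel hlo.pos, (keyC c hc).1]
  have hAα := mulinv α kα
  have hBβ := mulinv β kβ
  have hΓγ := mulinv γ kγ
  rw [← hA] at hAα
  rw [← hB] at hBβ
  rw [← hΓ] at hΓγ
  set T : MvPolynomial (Fin 2) K := A * X 0 ^ (q + 1) + B * X 1 ^ (q + 1) + Γ * (X 0 + X 1) ^ (q + 1)
    with hT
  have hxy : (X 0 + X 1 : MvPolynomial (Fin 2) K) ^ q = X 0 ^ q + X 1 ^ q := by
    rw [hqd, add_pow_char_pow]
  have hP2 : (2 : Polynomial (MvPolynomial (Fin 2) K)) = 0 := CharTwo.two_eq_zero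
  have hGT : G = (Polynomial.C T + (E1 + E2 + E3) * Polynomial.X) * Polynomial.X ^ (q + 1) := by
    rw [hGe, hE1, hE2, hE3, hT, hxy, hγ]
    simp only [map_add, map_mul, map_pow, map_one]
    linear_combination (Polynomial.C (C α) + Polynomial.C (C β) + 1
      + (Polynomial.C (X 0) + Polynomial.C (X 1)) * Polynomial.X
      + (Polynomial.C (X 0) ^ q + Polynomial.C (X 1) ^ q) * Polynomial.X ^ q) * hP2
  have hqc : ((q + 1 : ℕ) : MvPolynomial (Fin 2) K) = 1 := by
    rw [hqd]; push_cast; rw [h2, zero_pow (by omega)]; ring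
  have pA : ∀ (j : Fin 2) (c : K) (n : ℕ), pderiv j ((C c : MvPolynomial (Fin 2) K) ^ n) = 0 := by
    intro j c n
    rw [← map_pow, pderiv_C]
  have p0 : pderiv 0 T = (A + Γ) * X 0 ^ q + Γ * X 1 ^ q := by
    have : pderiv 0 T = A * X 0 ^ q + Γ * (X 0 + X 1) ^ q := by
      rw [hT, hA, hB, hΓ]
      simp only [map_add, Derivation.leibniz, pA, pderiv_pow, pderiv_X, hqc, Nat.add_sub_cancel,
        smul_eq_mul]
      simp
    rw [this, hxy]; ring
  have p1 : pderiv 1 T = Γ * X 0 ^ q + (B + Γ) * X 1 ^ q := by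
    have : pderiv 1 T = B * X 1 ^ q + Γ * (X 0 + X 1) ^ q := by
      rw [hT, hA, hB, hΓ]
      simp only [map_add, Derivation.leibniz, pA, pderiv_pow, pderiv_X, hqc, Nat.add_sub_cancel,
        smul_eq_mul]
      simp
    rw [this, hxy]; ring
  have hsum : (C α + C β + C γ : MvPolynomial (Fin 2) K) = 1 := by
    rw [hγ, map_add, map_add, map_one]
    linear_combination (C α + C β) * h2
  have hdet : A * B + A * Γ + B * Γ = A * B * Γ := by
    linear_combination (A * B * Γ) * hsum - B * Γ * hAα - A * Γ * hBβ - A * B * hΓγ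
  have x0 : X 0 ^ q = C α * C β * C γ * ((B + Γ) * pderiv 0 T + Γ * pderiv 1 T) := by
    rw [p0, p1]
    have e : (C α * C β * C γ) * (A * B * Γ) = 1 := by
      linear_combination (C β * C γ * B * Γ) * hAα + (C γ * Γ) * hBβ + hΓγ
    linear_combination (-X 0 ^ q) * e - (C α * C β * C γ * X 0 ^ q) * hdet
      - (C α * C β * C γ * (X 0 ^ q * Γ ^ 2 + X 1 ^ q * (Γ * B + Γ ^ 2))) * h2
  have x1 : X 1 ^ q = C α * C β * C γ * (Γ * pderiv 0 T + (A + Γ) * pderiv 1 T) := by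
    rw [p0, p1]
    have e : (C α * C β * C γ) * (A * B * Γ) = 1 := by
      linear_combination (C β * C γ * B * Γ) * hAα + (C γ * Γ) * hBβ + hΓγ
    linear_combination (-X 1 ^ q) * e - (C α * C β * C γ * X 1 ^ q) * hdet
      - (C α * C β * C γ * (X 1 ^ q * Γ ^ 2 + X 0 ^ q * (Γ * A + Γ ^ 2))) * h2
  have hT0 : T ≠ 0 := by
    intro h0
    rw [h0] at x0
    simp at x0
  have htr : G.trailingCoeff = T := by
    rw [hGT, Polynomial.trailingCoeff_mul, Polynomial.trailingCoeff,
      Polynomial.natTrailingDegree_eq_zero.2]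
    · simp [Polynomial.trailingCoeff]
    · right; simpa using hT0
  intro D hDu hDv
  have hDT : D * D ∣ T := by
    rw [← htr, ← hprod, Polynomial.trailingCoeff_mul, Polynomial.trailingCoeff_mul]
    exact mul_dvd_mul hDu (Dvd.dvd.mul_right hDv _)
  have q0 := dvd_pderiv D T hDT 0
  have q1 := dvd_pderiv D T hDT 1
  refine cop_XYpow q q ?_ ?_
  · rw [x0]
    exact Dvd.dvd.mul_left (dvd_add (Dvd.dvd.mul_left q0 _) (Dvd.dvd.mul_left q1 _)) _
  · rw [x1]
    exact Dvd.dvd.mul_left (dvd_add (Dvd.dvd.mul_left q0 _) (Dvd.dvd.mul_left q1 _)) _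

end aux

section aux

lemma FF_ne {K : Type*} [Field K] [CharP K 2] (t : ℕ) (ht : Odd t) (ht3 : 3 ≤ t) : FF K t ≠ 0 := by
  intro h
  have h1 := congrArg (fun p => MvPolynomial.eval (0 : Fin 2 → K) (pderiv 0 p)) h
  have hc : (t : K) = 1 := by
    obtain ⟨k, rfl⟩ := ht
    push_cast
    rw [CharTwo.two_eq_zero]; simp
  have h2 : t - 1 ≠ 0 := by omega
  have h01 : (pderiv (R := K) (0 : Fin 2)) (X 1) = 0 := pderiv_X_of_ne (by decide)
  simp [FF, Derivation.leibniz_pow, pderiv_X_self, hc, h2, h01] at h1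

lemma totalDegree_map_inj {K L : Type*} [Field K] [Field L] (φ : K →+* L)
    (p : MvPolynomial (Fin 2) K) : (map φ p).totalDegree = p.totalDegree := by
  unfold totalDegree
  rw [support_map_of_injective _ φ.injective]

variable {K : Type*} [Field K]

lemma unit_iff_deg {p : MvPolynomial (Fin 2) K} (hp : p ≠ 0) : IsUnit p ↔ p.totalDegree = 0 := by
  constructor
  · intro h
    exact (isUnit_iff_totalDegree_of_isReduced.1 h).2
  · intro h
    rw [totalDegree_eq_zero_iff_eq_C] at h
    rw [h]
    apply IsUnit.map
    rw [isUnit_iff_ne_zero]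
    intro h0
    rw [h0] at h
    exact hp (by simpa using h)

lemma multAt_one (P : K × K) : multAt (1 : MvPolynomial (Fin 2) K) P = 0 := by
  have := multAt_mul (one_ne_zero (α := MvPolynomial (Fin 2) K)) one_ne_zero P
  rw [mul_one] at this
  omega

lemma multAt_assoc {a b : MvPolynomial (Fin 2) K} (ha : a ≠ 0) (h : Associated a b) (P : K × K) :
    multAt a P = multAt b P := by
  obtain ⟨u, rfl⟩ := h
  have h1 := multAt_mul u.ne_zero (u⁻¹).ne_zero P
  rw [Units.mul_inv, multAt_one] at h1
  rw [multAt_mul ha u.ne_zero]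
  omega

lemma multAt_prod {ι : Type*} (s : Finset ι) (f : ι → MvPolynomial (Fin 2) K)
    (hf : ∀ j ∈ s, f j ≠ 0) (P : K × K) :
    multAt (∏ j ∈ s, f j) P = ∑ j ∈ s, multAt (f j) P := by
  classical
  induction s using Finset.induction_on with
  | empty => simp [multAt_one]
  | insert a s ha ih =>
    rw [Finset.prod_insert ha, Finset.sum_insert ha, multAt_mul, ih]
    · intro j hj; exact hf j (Finset.mem_insert_of_mem hj)
    · exact hf a (Finset.mem_insert_self _ _)
    · rw [Finset.prod_ne_zero_iff]
      intro j hj; exact hf j (Finset.mem_insert_of_mem hj)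

lemma totalDegree_prod' {ι : Type*} (s : Finset ι) (f : ι → MvPolynomial (Fin 2) K)
    (hf : ∀ j ∈ s, f j ≠ 0) :
    (∏ j ∈ s, f j).totalDegree = ∑ j ∈ s, (f j).totalDegree := by
  classical
  induction s using Finset.induction_on with
  | empty => simp
  | insert a s ha ih =>
    rw [Finset.prod_insert ha, Finset.sum_insert ha, totalDegree_mul_of_isDomain, ih]
    · intro j hj; exact hf j (Finset.mem_insert_of_mem hj)
    · exact hf a (Finset.mem_insert_self _ _)
    · rw [Finset.prod_ne_zero_iff]
      intro j hj; exact hf j (Finset.mem_insert_of_mem hj)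

lemma totalDegree_assoc' {a b : MvPolynomial (Fin 2) K} (ha : a ≠ 0) (h : Associated a b) :
    a.totalDegree = b.totalDegree := by
  obtain ⟨u, rfl⟩ := h
  rw [totalDegree_mul_of_isDomain ha u.ne_zero, (unit_iff_deg u.ne_zero).1 u.isUnit, add_zero]

noncomputable def sig (K : Type*) [Field K] [CharP K 2] (j : ℕ) :
    MvPolynomial (Fin 2) K →+* MvPolynomial (Fin 2) K := MvPolynomial.map (iterateFrobenius K 2 j)

lemma sig_succ [CharP K 2] (j : ℕ) (p : MvPolynomial (Fin 2) K) :
    sig K (j+1) p = sig K 1 (sig K j p) := by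
  unfold sig
  ext m
  simp only [coeff_map, iterateFrobenius_def]
  rw [pow_one, ← pow_mul, pow_succ]

lemma sig_zero [CharP K 2] (p : MvPolynomial (Fin 2) K) : sig K 0 p = p := by
  unfold sig
  ext m
  simp [coeff_map, iterateFrobenius_def]

lemma sig_inj [CharP K 2] (j : ℕ) : Function.Injective (sig K j) :=
  map_injective _ (RingHom.injective _)

/-- common period -/
lemma exists_period (u v : MvPolynomial (Fin 2) (AlgebraicClosure (ZMod 2))) :
    ∃ N, 0 < N ∧ sig _ N u = u ∧ sig _ N v = v := by
  classical
  let K := AlgebraicClosure (ZMod 2)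
  let S : Finset K := u.coeffs ∪ v.coeffs
  let E := IntermediateField.adjoin (ZMod 2) (S : Set K)
  have : FiniteDimensional (ZMod 2) E :=
    IntermediateField.finiteDimensional_adjoin
      fun x _ ↦ (Algebra.IsAlgebraic.isAlgebraic x).isIntegral
  have : Finite E := Module.finite_of_finite (ZMod 2)
  have : Fintype E := Fintype.ofFinite E
  obtain ⟨n, -, hn⟩ := FiniteField.card E 2
  have key : ∀ x ∈ S, x ^ 2 ^ (n : ℕ) = x := by
    intro x hx
    have hxE : x ∈ E := IntermediateField.subset_adjoin _ _ hx
    have := FiniteField.pow_card (⟨x, hxE⟩ : E)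
    rw [hn] at this
    exact congrArg Subtype.val this
  have key2 : ∀ p : MvPolynomial (Fin 2) K, p.coeffs ⊆ S → sig _ n p = p := by
    intro p hp
    ext m
    unfold sig
    rw [coeff_map, iterateFrobenius_def]
    by_cases h0 : coeff m p = 0
    · rw [h0, zero_pow (by positivity)]
    · exact key _ (hp (coeff_mem_coeffs m h0))
  exact ⟨n, n.pos, key2 u Finset.subset_union_left, key2 v Finset.subset_union_right⟩

lemma descend (h : MvPolynomial (Fin 2) (AlgebraicClosure (ZMod 2))) (hs : sig _ 1 h = h) :
    ∃ h0 : MvPolynomial (Fin 2) (ZMod 2),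
      map (algebraMap (ZMod 2) (AlgebraicClosure (ZMod 2))) h0 = h := by
  have : h ∈ Set.range (map (σ := Fin 2) (algebraMap (ZMod 2) (AlgebraicClosure (ZMod 2)))) := by
    rw [mem_range_map_iff_coeffs_subset]
    intro c hc
    obtain ⟨m, -, rfl⟩ := mem_coeffs_iff.1 (by simpa using hc)
    have h1 : coeff m h ^ 2 = coeff m h := by
      conv_rhs => rw [← hs]
      unfold sig
      rw [coeff_map, iterateFrobenius_def, pow_one]
    have h2 : coeff m h * (coeff m h - 1) = 0 := by linear_combination h1
    rcases mul_eq_zero.1 h2 with h | h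
    · exact ⟨0, by rw [h, map_zero]⟩
    · exact ⟨1, by rw [map_one, sub_eq_zero.1 h]⟩
  exact this

lemma sig_norm_inv [CharP K 2] (u : MvPolynomial (Fin 2) K) (hu : u ≠ 0) (N : ℕ) (hN : sig K N u = u) :
    sig K 1 (∏ j ∈ Finset.range N, sig K j u) = ∏ j ∈ Finset.range N, sig K j u := by
  have h1 := Finset.prod_range_succ (fun j => sig K j u) N
  rw [Finset.prod_range_succ', hN, sig_zero] at h1
  have h2 := mul_right_cancel₀ hu h1
  rw [map_prod, ← h2]
  exact Finset.prod_congr rfl fun j _ => (sig_succ j u).symm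

lemma arith {ι : Type*} (S : Finset ι) (N s d d1 d2 : ℕ) (a b : ℕ → ι → ℕ) (m : ι → ℕ)
    (hN : 0 < N) (h1 : 0 < d1) (h2 : 0 < d2) (hd : d1 + d2 = d)
    (hs : N * d1 = s * d) (hab : ∀ j P, a j P + b j P = m P)
    (ha : ∀ P, ∑ j ∈ Finset.range N, a j P = s * m P)
    (hb : ∀ j, d1 * d2 ≤ ∑ P ∈ S, a j P * b j P) : d ^ 2 ≤ ∑ P ∈ S, m P ^ 2 := by
  have hP : ∀ P, (N : ℤ) * ∑ j ∈ Finset.range N, (a j P : ℤ) * b j P ≤ s * (N - s) * (m P : ℤ)^2 := by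
    intro P
    have hc := sq_sum_le_card_mul_sum_sq (s := Finset.range N) (f := fun j => (a j P : ℤ))
    have ha' : ∑ j ∈ Finset.range N, (a j P : ℤ) = s * m P := by exact_mod_cast ha P
    rw [ha', Finset.card_range] at hc
    have e : ∑ j ∈ Finset.range N, (a j P : ℤ) * b j P =
        (s * m P) * m P - ∑ j ∈ Finset.range N, (a j P : ℤ)^2 := by
      rw [← ha', Finset.sum_mul, ← Finset.sum_sub_distrib]
      refine Finset.sum_congr rfl fun j _ => ?_
      have : (m P : ℤ) = a j P + b j P := by exact_mod_cast (hab j P).symm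
      rw [this]; ring
    rw [e]
    nlinarith
  have hS : (N : ℤ) * (N * (d1 * d2)) ≤ s * (N - s) * ∑ P ∈ S, (m P : ℤ)^2 := by
    calc (N : ℤ) * (N * (d1 * d2)) = N * ∑ j ∈ Finset.range N, ((d1 : ℤ) * d2) := by simp
      _ ≤ N * ∑ j ∈ Finset.range N, ∑ P ∈ S, (a j P : ℤ) * b j P := by
        gcongr with j _
        exact_mod_cast hb j
      _ = ∑ P ∈ S, (N : ℤ) * ∑ j ∈ Finset.range N, (a j P : ℤ) * b j P := by
        rw [Finset.sum_comm, Finset.mul_sum]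
      _ ≤ ∑ P ∈ S, s * (N - s) * (m P : ℤ)^2 := Finset.sum_le_sum fun P _ => hP P
      _ = _ := by rw [Finset.mul_sum]
  have hs' : (N : ℤ) * d1 = s * d := by exact_mod_cast hs
  have hd' : (d1 : ℤ) + d2 = d := by exact_mod_cast hd
  have hs2 : (N : ℤ) * d2 = (N - s) * d := by linear_combination N * hd' - hs'
  have hdpos : (0 : ℤ) < d := by exact_mod_cast (by omega : 0 < d)
  have hNp : (0 : ℤ) < N := by exact_mod_cast hN
  have h1p : (0 : ℤ) < d1 := by exact_mod_cast h1
  have h2p : (0 : ℤ) < d2 := by exact_mod_cast h2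
  have sp : (0 : ℤ) < s := by
    have : (0:ℤ) < s * d := by rw [← hs']; positivity
    exact pos_of_mul_pos_left this hdpos.le
  have nsp : (0 : ℤ) < N - s := by
    have : (0:ℤ) < (N - s) * d := by rw [← hs2]; positivity
    exact pos_of_mul_pos_left this hdpos.le
  have e : (N : ℤ) * (N * (d1 * d2)) = s * (N - s) * d^2 := by
    calc (N : ℤ) * (N * (d1 * d2)) = (N * d1) * (N * d2) := by ring
      _ = _ := by rw [hs', hs2]; ring
  rw [e] at hS
  have := le_of_mul_le_mul_left hS (mul_pos sp nsp)
  exact_mod_cast this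

end aux

/-- If `t = 2^i ℓ + 1` with `ℓ ∣ 2^i - 1` and `ℓ ≠ 2^i - 1`, and `f_k` is an
`𝔽₂`-irreducible factor of `g_t` which is not absolutely irreducible, then
`deg(f_k)² ≤ Σ_{P ∈ Sing(g_t)} m_P(f_k)²`, the sum being over the singular points of
`g_t` over the algebraic closure of `𝔽₂`. -/
theorem stmt_17 (i l t : ℕ) (hi : 1 ≤ i) (hl : 3 ≤ l) (hlodd : Odd l)
    (ht : t = 2 ^ i * l + 1) (hdvd : l ∣ 2 ^ i - 1) (hne : l ≠ 2 ^ i - 1)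
    (g : MvPolynomial (Fin 2) (ZMod 2))
    (hg : (X 0 + 1) * (X 1 + 1) * (X 0 + X 1) * g =
      X 0 ^ t + X 1 ^ t + 1 + (X 0 + X 1 + 1) ^ t)
    (fk : MvPolynomial (Fin 2) (ZMod 2)) (hfk : fk ∣ g) (hfkirr : Irreducible fk)
    (hfknotabs :
      ¬ Irreducible (MvPolynomial.map (algebraMap (ZMod 2) (AlgebraicClosure (ZMod 2))) fk))
    (hfin : {P : AlgebraicClosure (ZMod 2) × AlgebraicClosure (ZMod 2) |
      2 ≤ multAt (MvPolynomial.map (algebraMap (ZMod 2) (AlgebraicClosure (ZMod 2))) g) P}.Finite) :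
    fk.totalDegree ^ 2 ≤
      ∑ P ∈ hfin.toFinset,
        (multAt (MvPolynomial.map (algebraMap (ZMod 2) (AlgebraicClosure (ZMod 2))) fk) P) ^ 2 := by
  have htodd : Odd t := by
    rw [ht]
    refine Even.add_one ?_
    exact (Nat.even_pow.2 ⟨even_two, by omega⟩).mul_right l
  have ht3 : 3 ≤ t := by
    have : 1 ≤ 2 ^ i := Nat.one_le_two_pow
    nlinarith
  have hF0 : FF (AlgebraicClosure (ZMod 2)) t ≠ 0 := FF_ne t htodd ht3
  set ι := algebraMap (ZMod 2) (AlgebraicClosure (ZMod 2)) with hι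
  have hinj : Function.Injective (MvPolynomial.map (σ := Fin 2) ι) := map_injective _ ι.injective
  set f := MvPolynomial.map ι fk with hf
  have hf0 : f ≠ 0 := by
    rw [hf, Ne, map_eq_zero_iff _ hinj]; exact hfkirr.ne_zero
  have hdeg : f.totalDegree = fk.totalDegree := totalDegree_map_inj ι fk
  have hfu : ¬ IsUnit f := by
    rw [unit_iff_deg hf0, hdeg, ← unit_iff_deg hfkirr.ne_zero]
    exact hfkirr.not_isUnit
  obtain ⟨u, v, huv, hu, hv⟩ : ∃ u v, f = u * v ∧ ¬ IsUnit u ∧ ¬ IsUnit v := by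
    rw [irreducible_iff] at hfknotabs
    push Not at hfknotabs
    obtain ⟨u, v, h1, h2, h3⟩ := hfknotabs hfu
    exact ⟨u, v, h1, h2, h3⟩
  have hu0 : u ≠ 0 := by rintro rfl; simp at huv; exact hf0 huv
  have hv0 : v ≠ 0 := by rintro rfl; simp at huv; exact hf0 huv
  obtain ⟨N, hN, hNu, hNv⟩ := exists_period u v
  obtain ⟨h1, hh1⟩ := descend _ (sig_norm_inv u hu0 N hNu)
  obtain ⟨h2, hh2⟩ := descend _ (sig_norm_inv v hv0 N hNv)
  have hsf : ∀ j, sig _ j f = f := by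
    intro j
    rw [hf]
    unfold sig
    rw [map_map]
    congr 2
    exact Subsingleton.elim _ _
  have huvj : ∀ j, sig _ j u * sig _ j v = f := by
    intro j
    rw [← map_mul, ← huv, hsf]
  have huj0 : ∀ j, sig _ j u ≠ 0 := fun j => (map_ne_zero_iff _ (sig_inj j)).2 hu0
  have hvj0 : ∀ j, sig _ j v ≠ 0 := fun j => (map_ne_zero_iff _ (sig_inj j)).2 hv0
  have h12 : h1 * h2 = fk ^ N := by
    apply hinj
    rw [map_mul, map_pow, hh1, hh2, ← Finset.prod_mul_distrib, ← hf]
    rw [Finset.prod_congr rfl (fun j _ => huvj j), Finset.prod_const, Finset.card_range]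
  obtain ⟨s, -, hs⟩ := (dvd_prime_pow hfkirr.prime N).1 ⟨h2, h12.symm⟩
  have hNorm : Associated (∏ j ∈ Finset.range N, sig _ j u) (f ^ s) := by
    rw [← hh1, hf, ← map_pow]
    exact hs.map (MvPolynomial.map ι)
  have hprod0 : ∏ j ∈ Finset.range N, sig _ j u ≠ 0 :=
    Finset.prod_ne_zero_iff.2 fun j _ => huj0 j
  obtain ⟨c, hc⟩ := hfk
  set w := MvPolynomial.map ι (c * ((X 0 + 1) * (X 1 + 1) * (X 0 + X 1))) with hw
  have hfact : ∀ j, sig _ j u * (sig _ j v * w) = FF (AlgebraicClosure (ZMod 2)) t := by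
    intro j
    rw [← mul_assoc, huvj, hf, hw, ← map_mul, ← mul_assoc, ← hc, mul_comm, hg]
    simp [FF]
  have hc0 : MvPolynomial.map ι c ≠ 0 := by
    intro h0
    apply hF0
    rw [← hfact 0, hw, map_mul, h0]; ring
  rw [← hdeg]
  refine arith hfin.toFinset N s f.totalDegree u.totalDegree v.totalDegree
    (fun j P => multAt (sig _ j u) P) (fun j P => multAt (sig _ j v) P) (fun P => multAt f P)
    hN ?_ ?_ ?_ ?_ ?_ ?_ ?_
  · rw [unit_iff_deg hu0] at hu; omega
  · rw [unit_iff_deg hv0] at hv; omega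
  · rw [huv, totalDegree_mul_of_isDomain hu0 hv0]
  · have e := totalDegree_assoc' hprod0 hNorm
    rw [totalDegree_prod' _ _ (fun j _ => huj0 j), ← Finset.card_range s, ← Finset.prod_const,
      totalDegree_prod' _ _ (fun j _ => hf0)] at e
    simpa [sig, totalDegree_map_inj] using e
  · intro j P
    rw [← multAt_mul (huj0 j) (hvj0 j), huvj]
  · intro P
    have e := multAt_assoc hprod0 hNorm P
    rw [multAt_prod _ _ (fun j _ => huj0 j), ← Finset.card_range s, ← Finset.prod_const,
      multAt_prod _ _ (fun j _ => hf0)] at e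
    simpa using e
  · intro j
    have hb := bezout (sig _ j u) (sig _ j v) (huj0 j) (hvj0 j)
      (top_cop i l t hi (by omega) ht _ _ w (hfact j)) hfin.toFinset (by
        intro P hP1 hP2
        refine ⟨?_, tan_cop i l t hi hlodd ht hdvd _ _ w (hfact j) hF0 P hP1 hP2⟩
        rw [Set.Finite.mem_toFinset, Set.mem_ofPred_eq, hc, map_mul, ← hf,
          multAt_mul hf0 hc0, ← huvj j, multAt_mul (huj0 j) (hvj0 j)]
        omega)
    have e1 : (sig _ j u).totalDegree = u.totalDegree := totalDegree_map_inj _ u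
    have e2 : (sig _ j v).totalDegree = v.totalDegree := totalDegree_map_inj _ v
    rwa [e1, e2] at hb
end

section
/- Let t = 2^i·ℓ + 1 where i ≥ 1 and ℓ ≥ 3 is odd, with ℓ dividing 2^i − 1 and ℓ ≠ 2^i − 1. Then g_t(x,y) has an absolutely irreducible factor defined over F_2, i.e., there is a nonconstant polynomial in F_2[x,y] which divides g_t and is irreducible over the algebraic closure of F_2. -/
namespace St18

open Polynomial (C X)
open MvPolynomial (map eval₂ coeff eval₂_mul coeff_C_mul coeff_X coeff_C)

/-- homogenised evaluation -/
noncomputable def hm {k A : Type*} [Field k] [CommRing A] (ι : k →+* A)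
    (a : MvPolynomial (Fin 2) k) (x y z : A) : A :=
  ∑ s ∈ a.support, ι (a.coeff s) * x ^ (s 0) * y ^ (s 1) * z ^ (a.totalDegree - (s 0 + s 1))

section
variable {k A B : Type*} [Field k] [CommRing A] [CommRing B]

lemma deg_le {a : MvPolynomial (Fin 2) k} {s : Fin 2 →₀ ℕ} (hs : s ∈ a.support) :
    s 0 + s 1 ≤ a.totalDegree := by
  have := MvPolynomial.le_totalDegree hs
  rwa [Finsupp.sum_fintype _ _ (by simp), Fin.sum_univ_two] at this

lemma hm_map (ι : k →+* A) (ψ : A →+* B) (a : MvPolynomial (Fin 2) k) (x y z : A) :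
    ψ (hm ι a x y z) = hm (ψ.comp ι) a (ψ x) (ψ y) (ψ z) := by
  simp [hm, map_sum]

lemma hm_scale (ι : k →+* A) (a : MvPolynomial (Fin 2) k) (v x y z : A) :
    hm ι a (v * x) (v * y) (v * z) = v ^ a.totalDegree * hm ι a x y z := by
  unfold hm
  rw [Finset.mul_sum]
  refine Finset.sum_congr rfl fun s hs => ?_
  have h := deg_le hs
  obtain ⟨n, hn⟩ := Nat.exists_eq_add_of_le h
  rw [hn, Nat.add_sub_cancel_left, mul_pow, mul_pow, mul_pow, pow_add, pow_add]
  ring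

lemma hm_one (ι : k →+* A) (a : MvPolynomial (Fin 2) k) (x y : A) :
    hm ι a x y 1 = eval₂ ι ![x, y] a := by
  rw [hm, MvPolynomial.eval₂_eq']
  refine Finset.sum_congr rfl fun s hs => ?_
  simp [Fin.prod_univ_two, mul_assoc]

lemma hm_field {K : Type*} [Field K] (ι : k →+* K) (a : MvPolynomial (Fin 2) k) (x y z : K)
    (hz : z ≠ 0) : hm ι a x y z = z ^ a.totalDegree * eval₂ ι ![x / z, y / z] a := by
  rw [← hm_one, ← hm_scale]
  congr 1 <;> field_simp

lemma hm_mul [IsDomain A] (ι : k →+* A) {a b : MvPolynomial (Fin 2) k} (ha : a ≠ 0) (hb : b ≠ 0)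
    (x y z : A) (hz : z ≠ 0) : hm ι (a * b) x y z = hm ι a x y z * hm ι b x y z := by
  apply FaithfulSMul.algebraMap_injective A (FractionRing A)
  have hz' : algebraMap A (FractionRing A) z ≠ 0 := by
    simpa using hz
  rw [map_mul, hm_map, hm_map, hm_map, hm_field _ _ _ _ _ hz', hm_field _ _ _ _ _ hz',
    hm_field _ _ _ _ _ hz', MvPolynomial.totalDegree_mul_of_isDomain ha hb, eval₂_mul, pow_add]
  ring

lemma hm_mapcoef (ι : k →+* A) (σ : k →+* k) (a : MvPolynomial (Fin 2) k) (x y z : A) :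
    hm ι (map σ a) x y z = hm (ι.comp σ) a x y z := by
  have h1 : (map σ a).support = a.support := MvPolynomial.support_map_of_injective _ σ.injective
  have h2 : (map σ a).totalDegree = a.totalDegree := by
    simp only [MvPolynomial.totalDegree, h1]
  simp [hm, h1, h2, MvPolynomial.coeff_map]

/-- the polynomial in the fibre direction -/
noncomputable def tl (ι : k →+* A) (x w : A) (a : MvPolynomial (Fin 2) k) : Polynomial A :=
  hm (C.comp ι) a (C x) (X + C (x + w)) X

lemma tl_map (ι : k →+* A) (ψ : A →+* B) (x w : A) (a : MvPolynomial (Fin 2) k) :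
    (tl ι x w a).map ψ = tl (ψ.comp ι) (ψ x) (ψ w) a := by
  unfold tl
  rw [← Polynomial.coe_mapRingHom, hm_map]
  congr 1
  · ext; simp
  · simp
  · simp
  · simp

lemma tl_eval (ι : k →+* A) (x w y : A) (a : MvPolynomial (Fin 2) k) :
    (tl ι x w a).eval y = hm ι a x (y + (x + w)) y := by
  unfold tl
  rw [← Polynomial.coe_evalRingHom, hm_map]
  congr 1
  · ext; simp
  · simp
  · simp
  · simp

lemma tl_mapcoef (ι : k →+* A) (σ : k →+* k) (x w : A) (a : MvPolynomial (Fin 2) k) :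
    tl ι x w (map σ a) = tl (ι.comp σ) x w a := by
  unfold tl
  rw [hm_mapcoef]; rfl

lemma tl_mul [IsDomain A] (ι : k →+* A) (x w : A) {a b : MvPolynomial (Fin 2) k}
    (ha : a ≠ 0) (hb : b ≠ 0) : tl ι x w (a * b) = tl ι x w a * tl ι x w b :=
  hm_mul _ ha hb _ _ _ Polynomial.X_ne_zero

lemma tl_natDegree (ι : k →+* A) (x w : A) (a : MvPolynomial (Fin 2) k) :
    (tl ι x w a).natDegree ≤ a.totalDegree := by
  unfold tl hm
  refine Polynomial.natDegree_sum_le_of_forall_le _ _ fun s hs => ?_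
  have h := deg_le hs
  have h1 : (X + C (x + w) : Polynomial A).natDegree ≤ 1 := by
    compute_degree
  refine (Polynomial.natDegree_mul_le).trans ?_
  refine (Nat.add_le_add (Polynomial.natDegree_mul_le) (Polynomial.natDegree_X_pow_le _)).trans ?_
  have h2 := (Polynomial.natDegree_pow_le (p := (X + C (x + w) : Polynomial A)) (n := s 1))
  have h3 : ((C.comp ι) (coeff s a) * C x ^ s 0).natDegree = 0 := by
    rw [RingHom.comp_apply, ← Polynomial.C_pow, ← Polynomial.C_mul, Polynomial.natDegree_C]
  rw [h3]
  have h4 : s 1 * (X + C (x + w) : Polynomial A).natDegree ≤ s 1 * 1 := Nat.mul_le_mul_left _ h1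
  omega

/-- the equation of the curve -/
noncomputable def FF (t : ℕ) (x w : A) : Polynomial A :=
  C x ^ t + C w ^ t + X ^ t + (X + C (x + w)) ^ t

lemma tot_lin (a b c : k) (h : a ≠ 0 ∨ b ≠ 0) :
    (MvPolynomial.C a * MvPolynomial.X 0 + MvPolynomial.C b * MvPolynomial.X 1 + MvPolynomial.C c :
      MvPolynomial (Fin 2) k).totalDegree = 1 := by
  apply le_antisymm
  · refine (MvPolynomial.totalDegree_add _ _).trans (max_le ((MvPolynomial.totalDegree_add _ _).trans
      (max_le ?_ ?_)) (by simp))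
    · exact (MvPolynomial.totalDegree_mul _ _).trans (by simp)
    · exact (MvPolynomial.totalDegree_mul _ _).trans (by simp)
  · by_contra hlt
    have h0 := MvPolynomial.totalDegree_eq_zero_iff_eq_C.mp (Nat.lt_one_iff.mp (not_le.mp hlt))
    rcases h with h | h
    · have := congrArg (fun p => coeff (Finsupp.single 0 1) p) h0
      simp [coeff_C_mul, coeff_X, coeff_C, Finsupp.single_eq_single_iff] at this
      exact h this
    · have := congrArg (fun p => coeff (Finsupp.single 1 1) p) h0
      simp [coeff_C_mul, coeff_X, coeff_C, Finsupp.single_eq_single_iff] at this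
      exact h this

end

end St18
namespace St18
open Polynomial (C X)
open MvPolynomial (map eval₂ coeff eval₂_mul coeff_C_mul coeff_X coeff_C)

section
variable {k A : Type*} [Field k] [CharP k 2] [CommRing A] [IsDomain A]

/-- the defining equation -/
def Eqn (t : ℕ) (g : MvPolynomial (Fin 2) k) : Prop :=
  (MvPolynomial.X 0 + 1) * (MvPolynomial.X 1 + 1) * (MvPolynomial.X 0 + MvPolynomial.X 1) * g =
      MvPolynomial.X 0 ^ t + MvPolynomial.X 1 ^ t + 1 +
        (MvPolynomial.X 0 + MvPolynomial.X 1 + 1) ^ t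

lemma charP2 {k A : Type*} [Field k] [CharP k 2] [CommRing A] [Nontrivial A] (ι : k →+* A) :
    CharP A 2 :=
  charP_of_injective_ringHom ι.injective 2

lemma FF_natDegree [CharP A 2] {t : ℕ} (ht : Odd t) (ht3 : 3 ≤ t) {x w : A} (hxw : x + w ≠ 0) :
    (FF t x w).natDegree = t - 1 ∧ (FF t x w).leadingCoeff = x + w := by
  have hc : ∀ n, (FF t x w).coeff n = (if n = 0 then x ^ t + w ^ t else 0) + (if n = t then 1 else 0)
      + (x + w) ^ (t - n) * (t.choose n : A) := by
    intro n
    unfold FF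
    rw [Polynomial.coeff_add, Polynomial.coeff_X_add_C_pow, Polynomial.coeff_add,
      Polynomial.coeff_X_pow, ← Polynomial.C_pow, ← Polynomial.C_pow, ← Polynomial.C_add,
      Polynomial.coeff_C]
  have hle : (FF t x w).natDegree ≤ t - 1 := by
    rw [Polynomial.natDegree_le_iff_coeff_eq_zero]
    intro n hn
    rw [hc]
    rcases eq_or_ne n t with rfl | h
    · simp [show n ≠ 0 by omega, CharTwo.add_self_eq_zero]
    · rw [Nat.choose_eq_zero_of_lt (by omega)]
      simp [h, show n ≠ 0 by omega]
  have hcoef : (FF t x w).coeff (t - 1) = x + w := by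
    rw [hc, Nat.choose_symm (by omega), Nat.choose_one_right, Nat.sub_sub_self (by omega)]
    simp [show t - 1 ≠ 0 by omega, show t - 1 ≠ t by omega]
    obtain ⟨m, rfl⟩ := ht
    simp [CharTwo.two_eq_zero]
  have hd : (FF t x w).natDegree = t - 1 := by
    refine le_antisymm hle (Polynomial.le_natDegree_of_ne_zero (by rw [hcoef]; exact hxw))
  exact ⟨hd, by rw [Polynomial.leadingCoeff, hd, hcoef]⟩

lemma eqn_ne {t : ℕ} (ht : Odd t) (ht3 : 3 ≤ t) {g : MvPolynomial (Fin 2) k} (hg : Eqn t g) : g ≠ 0 := by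
  rintro rfl
  unfold Eqn at hg
  rw [mul_zero] at hg
  have := congrArg (MvPolynomial.eval₂ (C : k →+* Polynomial k) ![X, 0]) hg
  simp at this
  have h2 := congrArg (fun p => p.coeff 1) this
  simp [Polynomial.coeff_X_pow, show 1 ≠ t by omega, Polynomial.coeff_X_add_one_pow, show t ≠ 0 by omega, Polynomial.coeff_one] at h2
  obtain ⟨m, rfl⟩ := ht
  simp [CharTwo.two_eq_zero] at h2

lemma totdeg_le {t : ℕ} (ht : Odd t) (ht3 : 3 ≤ t) {g : MvPolynomial (Fin 2) k} (hg : Eqn t g) :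
    g.totalDegree + 3 ≤ t := by
  have hg0 := eqn_ne ht ht3 hg
  have l1 : (MvPolynomial.X 0 + 1 : MvPolynomial (Fin 2) k).totalDegree = 1 := by
    simpa using tot_lin (1 : k) 0 1 (by simp)
  have l2 : (MvPolynomial.X 1 + 1 : MvPolynomial (Fin 2) k).totalDegree = 1 := by
    simpa using tot_lin (0 : k) 1 1 (by simp)
  have l3 : (MvPolynomial.X 0 + MvPolynomial.X 1 : MvPolynomial (Fin 2) k).totalDegree = 1 := by
    simpa using tot_lin (1 : k) 1 0 (by simp)
  have l4 : (MvPolynomial.X 0 + MvPolynomial.X 1 + 1 : MvPolynomial (Fin 2) k).totalDegree = 1 := by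
    simpa using tot_lin (1 : k) 1 1 (by simp)
  have nz : ∀ p : MvPolynomial (Fin 2) k, p.totalDegree = 1 → p ≠ 0 := by
    rintro p hp rfl; simp at hp
  have h := congrArg MvPolynomial.totalDegree hg
  rw [MvPolynomial.totalDegree_mul_of_isDomain
    (mul_ne_zero (mul_ne_zero (nz _ l1) (nz _ l2)) (nz _ l3)) hg0,
    MvPolynomial.totalDegree_mul_of_isDomain (mul_ne_zero (nz _ l1) (nz _ l2)) (nz _ l3),
    MvPolynomial.totalDegree_mul_of_isDomain (nz _ l1) (nz _ l2), l1, l2, l3] at h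
  have h' : (MvPolynomial.X 0 ^ t + MvPolynomial.X 1 ^ t + 1 +
        (MvPolynomial.X 0 + MvPolynomial.X 1 + 1) ^ t : MvPolynomial (Fin 2) k).totalDegree ≤ t := by
    refine (MvPolynomial.totalDegree_add _ _).trans (max_le ((MvPolynomial.totalDegree_add _ _).trans
      (max_le ((MvPolynomial.totalDegree_add _ _).trans (max_le ?_ ?_)) (by simp))) ?_)
    · simp
    · simp
    · refine (MvPolynomial.totalDegree_pow _ _).trans ?_
      rw [l4]; simp
  omega

lemma field_aux {K : Type*} [Field K] [CharP K 2] (t d : ℕ) (hd : d + 3 ≤ t) (z x' w' G : K) (hX : z ≠ 0)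
    (h : (x' / z + 1) * ((z + (x' + w')) / z + 1) * (x' / z + (z + (x' + w')) / z) * G =
      (x' / z) ^ t + ((z + (x' + w')) / z) ^ t + 1 + (x' / z + (z + (x' + w')) / z + 1) ^ t) :
    (x' + w') * ((z + w') * (z + x') * (z ^ (t - 3 - d) * (z ^ d * G))) =
      x' ^ t + w' ^ t + z ^ t + (z + (x' + w')) ^ t := by
  have e1 : x' / z + 1 = (z + x') / z := by field_simp; ring
  have e2 : (z + (x' + w')) / z + 1 = (x' + w') / z := by
    field_simp; linear_combination (CharTwo.add_self_eq_zero z)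
  have e3 : x' / z + (z + (x' + w')) / z = (z + w') / z := by
    field_simp; linear_combination (CharTwo.add_self_eq_zero x')
  have e4 : (z + w') / z + 1 = w' / z := by
    field_simp; linear_combination (CharTwo.add_self_eq_zero z)
  rw [e3, e4, e1, e2] at h
  have h5 : z ^ t = z ^ (t - 3 - d) * z ^ d * z ^ 3 := by
    rw [← pow_add, ← pow_add]; congr 1; omega
  have h6 : z ^ t * ((z + x') / z * ((x' + w') / z) * ((z + w') / z) * G) =
    (x' + w') * ((z + w') * (z + x') * (z ^ (t - 3 - d) * (z ^ d * G))) := by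
    rw [h5]; field_simp
  rw [← h6, h]
  simp only [div_pow]
  have hzt : z ^ t ≠ 0 := pow_ne_zero _ hX
  generalize (z + (x' + w')) ^ t = U
  generalize z ^ t = Z at *
  field_simp
  ring

lemma tl_g_aux {t : ℕ} (ht : Odd t) (ht3 : 3 ≤ t) {g : MvPolynomial (Fin 2) k} (hg : Eqn t g)
    (ι : k →+* A) (x w : A) :
    C (x + w) * ((X + C w) * (X + C x) * (X ^ (t - 3 - g.totalDegree) * tl ι x w g)) = FF t x w := by
  have : CharP A 2 := charP2 ι
  have hd := totdeg_le ht ht3 hg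
  apply FaithfulSMul.algebraMap_injective (Polynomial A) (FractionRing (Polynomial A))
  have : CharP (FractionRing (Polynomial A)) 2 :=
    charP_of_injective_ringHom (FaithfulSMul.algebraMap_injective (Polynomial A) (FractionRing (Polynomial A))) 2
  have hX : algebraMap (Polynomial A) (FractionRing (Polynomial A)) X ≠ 0 := by
    simp [Polynomial.X_ne_zero]
  unfold FF tl
  simp only [map_mul, map_add, map_pow]
  rw [hm_map, hm_field _ _ _ _ _ hX]
  simp only [map_mul, map_add, map_pow]
  refine field_aux t _ hd _ _ _ _ hX ?_
  have h := congrArg (MvPolynomial.eval₂ ((algebraMap (Polynomial A) (FractionRing (Polynomial A))).comp (C.comp ι)) ![algebraMap (Polynomial A) (FractionRing (Polynomial A)) (C x) / algebraMap (Polynomial A) (FractionRing (Polynomial A)) X, (algebraMap (Polynomial A) (FractionRing (Polynomial A)) X + (algebraMap (Polynomial A) (FractionRing (Polynomial A)) (C x) + algebraMap (Polynomial A) (FractionRing (Polynomial A)) (C w))) / algebraMap (Polynomial A) (FractionRing (Polynomial A)) X]) hg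
  simp only [eval₂_mul, MvPolynomial.eval₂_add, MvPolynomial.eval₂_pow, MvPolynomial.eval₂_X, MvPolynomial.eval₂_one,
    Matrix.cons_val_zero, Matrix.cons_val_one] at h
  exact h

lemma totdeg_eq {t : ℕ} (ht : Odd t) (ht3 : 3 ≤ t) {g : MvPolynomial (Fin 2) k} (hg : Eqn t g) :
    g.totalDegree = t - 3 := by
  by_contra hne
  have hd := totdeg_le ht ht3 hg
  have h := tl_g_aux ht ht3 hg (C : k →+* Polynomial k) X 1
  have h1 := congrArg (Polynomial.eval 0) h
  simp [FF, zero_pow (show t - 3 - g.totalDegree ≠ 0 by omega), zero_pow (show t ≠ 0 by omega)] at h1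
  have h2 := congrArg (fun p => p.coeff 1) h1
  simp [Polynomial.coeff_X_pow, show 1 ≠ t by omega, Polynomial.coeff_X_add_one_pow, show t ≠ 0 by omega, Polynomial.coeff_one] at h2
  obtain ⟨m, rfl⟩ := ht
  simp [CharTwo.two_eq_zero] at h2

/-- full fibre polynomial -/
noncomputable def HH (ι : k →+* A) (x w : A) (g : MvPolynomial (Fin 2) k) : Polynomial A :=
  (X + C w) * (X + C x) * tl ι x w g

lemma HH_eq {t : ℕ} (ht : Odd t) (ht3 : 3 ≤ t) {g : MvPolynomial (Fin 2) k} (hg : Eqn t g)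
    (ι : k →+* A) (x w : A) :
    C (x + w) * HH ι x w g = FF t x w := by
  have h := tl_g_aux ht ht3 hg ι x w
  rw [totdeg_eq ht ht3 hg, Nat.sub_self, pow_zero, one_mul] at h
  exact h

lemma HH_monic {t : ℕ} (ht : Odd t) (ht3 : 3 ≤ t) {g : MvPolynomial (Fin 2) k} (hg : Eqn t g)
    (ι : k →+* A) {x w : A} (hxw : x + w ≠ 0) :
    (HH ι x w g).Monic ∧ (HH ι x w g).natDegree = t - 1 := by
  have : CharP A 2 := charP2 ι
  have h := HH_eq ht ht3 hg ι x w
  obtain ⟨h1, h2⟩ := FF_natDegree (A := A) ht ht3 hxw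
  rw [← h] at h1 h2
  rw [Polynomial.natDegree_C_mul hxw] at h1
  rw [Polynomial.leadingCoeff_mul, Polynomial.leadingCoeff_C] at h2
  exact ⟨mul_left_cancel₀ hxw (by rw [h2, mul_one]), h1⟩

lemma tl_monic {t : ℕ} (ht : Odd t) (ht3 : 3 ≤ t) {g : MvPolynomial (Fin 2) k} (hg : Eqn t g)
    (ι : k →+* A) {x w : A} (hxw : x + w ≠ 0) :
    (tl ι x w g).Monic ∧ (tl ι x w g).natDegree = t - 3 := by
  obtain ⟨h1, h2⟩ := HH_monic ht ht3 hg ι hxw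
  have m : ((X + C w) * (X + C x) : Polynomial A).Monic :=
    (Polynomial.monic_X_add_C w).mul (Polynomial.monic_X_add_C x)
  have h3 := m.of_mul_monic_left h1
  refine ⟨h3, ?_⟩
  unfold HH at h2
  rw [m.natDegree_mul h3, (Polynomial.monic_X_add_C w).natDegree_mul (Polynomial.monic_X_add_C x),
    Polynomial.natDegree_X_add_C, Polynomial.natDegree_X_add_C] at h2
  omega

lemma tl_deg {t : ℕ} (ht : Odd t) (ht3 : 3 ≤ t) {g : MvPolynomial (Fin 2) k} (hg : Eqn t g)
    (ι : k →+* A) {x w : A} (hxw : x + w ≠ 0) {a : MvPolynomial (Fin 2) k} (ha : a ∣ g) :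
    IsUnit (tl ι x w a).leadingCoeff ∧ (tl ι x w a).natDegree = a.totalDegree := by
  obtain ⟨b, hb⟩ := ha
  have hg0 := eqn_ne ht ht3 hg
  have ha0 : a ≠ 0 := by rintro rfl; simp at hb; exact hg0 hb
  have hb0 : b ≠ 0 := by rintro rfl; simp at hb; exact hg0 hb
  obtain ⟨h1, h2⟩ := tl_monic ht ht3 hg ι hxw
  rw [hb, tl_mul _ _ _ ha0 hb0] at h1 h2
  have h3 := totdeg_eq ht ht3 hg
  rw [hb, MvPolynomial.totalDegree_mul_of_isDomain ha0 hb0] at h3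
  have h4 := tl_natDegree ι x w a
  have h5 := tl_natDegree ι x w b
  have h6 := h1.ne_zero
  rw [Polynomial.natDegree_mul (left_ne_zero_of_mul h6) (right_ne_zero_of_mul h6)] at h2
  rw [Polynomial.Monic, Polynomial.leadingCoeff_mul] at h1
  exact ⟨IsUnit.of_mul_eq_one _ h1, by omega⟩

/-- degree statement after specialisation from a good ring -/
lemma tl_deg_map {B : Type*} [CommRing B] [IsDomain B] {t : ℕ} (ht : Odd t) (ht3 : 3 ≤ t)
    {g : MvPolynomial (Fin 2) k} (hg : Eqn t g)
    (ι : k →+* A) {x w : A} (hxw : x + w ≠ 0) {a : MvPolynomial (Fin 2) k} (ha : a ∣ g)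
    (ψ : A →+* B) :
    (tl (ψ.comp ι) (ψ x) (ψ w) a).natDegree = a.totalDegree ∧ 
    IsUnit (tl (ψ.comp ι) (ψ x) (ψ w) a).leadingCoeff := by
  obtain ⟨h1, h2⟩ := tl_deg ht ht3 hg ι hxw ha
  rw [← tl_map, ← h2]
  have h3 : ψ (tl ι x w a).leadingCoeff ≠ 0 := (h1.map ψ).ne_zero
  exact ⟨Polynomial.natDegree_map_of_leadingCoeff_ne_zero _ h3, by
    rw [Polynomial.leadingCoeff_map_of_leadingCoeff_ne_zero _ h3]; exact h1.map ψ⟩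

end
end St18
namespace St18
open Polynomial (C X)
open MvPolynomial (map eval₂ coeff eval₂_mul coeff_C_mul coeff_X coeff_C)

lemma hensel_aux (R : Type*) [CommRing R] (I : Ideal R) [IsAdicComplete I R]
    (f : Polynomial R) (a₀ : R) (h₁ : f.eval a₀ ∈ I)
    (h₂ : IsUnit (Ideal.Quotient.mk I (f.derivative.eval a₀))) :
    ∃ a, f.eval a = 0 ∧ a - a₀ ∈ I := by
  classical
  let f' := f.derivative
  let c : ℕ → R := fun n => Nat.recOn n a₀ fun _ b => b - f.eval b * Ring.inverse (f'.eval b)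
  have hc : ∀ n, c (n + 1) = c n - f.eval (c n) * Ring.inverse (f'.eval (c n)) := by
    intro n
    simp only [c]
  have hc_mod : ∀ n, c n ≡ a₀ [SMOD I] := by
    intro n
    induction n with
    | zero => rfl
    | succ n ih => ?_
    rw [hc, sub_eq_add_neg, ← add_zero a₀]
    refine ih.add ?_
    rw [SModEq.zero, Ideal.neg_mem_iff]
    refine I.mul_mem_right _ ?_
    rw [← SModEq.zero] at h₁ ⊢
    exact (ih.eval f).trans h₁
  have hf'c : ∀ n, IsUnit (f'.eval (c n)) := by
    intro n
    have := isLocalHom_of_le_jacobson_bot I (IsAdicComplete.le_jacobson_bot I)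
    apply IsUnit.of_map (Ideal.Quotient.mk I)
    convert! h₂ using 1
    exact SModEq.def.mp ((hc_mod n).eval _)
  have hfcI : ∀ n, f.eval (c n) ∈ I ^ (n + 1) := by
    intro n
    induction n with
    | zero => simpa only [Nat.rec_zero, zero_add, pow_one] using! h₁
    | succ n ih => ?_
    rw [← Polynomial.taylor_eval_sub (c n), hc, sub_eq_add_neg, sub_eq_add_neg,
      add_neg_cancel_comm]
    rw [Polynomial.eval_eq_sum, Polynomial.sum_over_range' _ _ _ (lt_add_of_pos_right _ zero_lt_two), ←
      Finset.sum_range_add_sum_Ico _ (Nat.le_add_left _ _)]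
    swap
    · intro i
      rw [zero_mul]
    refine Ideal.add_mem _ ?_ ?_
    · rw [← one_add_one_eq_two, Finset.sum_range_succ, Finset.range_one, Finset.sum_singleton,
        Polynomial.taylor_coeff_zero, Polynomial.taylor_coeff_one, pow_zero, pow_one, mul_one, mul_neg,
        mul_left_comm, Ring.mul_inverse_cancel _ (hf'c n), mul_one, add_neg_cancel]
      exact Ideal.zero_mem _
    · refine Submodule.sum_mem _ ?_
      simp only [Finset.mem_Ico]
      rintro i ⟨h2i, _⟩
      have aux : n + 2 ≤ i * (n + 1) := by trans 2 * (n + 1) <;> nlinarith only [h2i]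
      refine Ideal.mul_mem_left _ _ (Ideal.pow_le_pow_right aux ?_)
      rw [pow_mul']
      exact Ideal.pow_mem_pow ((Ideal.neg_mem_iff _).2 <| Ideal.mul_mem_right _ _ ih) _
  have aux : ∀ m n, m ≤ n → c m ≡ c n [SMOD (I ^ m • ⊤ : Ideal R)] := by
    intro m n hmn
    rw [← Ideal.one_eq_top, Ideal.smul_eq_mul, mul_one]
    obtain ⟨k, rfl⟩ := Nat.exists_eq_add_of_le hmn
    clear hmn
    induction k with
    | zero => rw [add_zero]
    | succ k ih => ?_
    rw [← add_assoc, hc, ← add_zero (c m), sub_eq_add_neg]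
    refine ih.add ?_
    symm
    rw [SModEq.zero, Ideal.neg_mem_iff]
    refine Ideal.mul_mem_right _ _ (Ideal.pow_le_pow_right ?_ (hfcI _))
    rw [add_assoc]
    exact le_self_add
  obtain ⟨a, ha⟩ := IsPrecomplete.prec' c (aux _ _)
  refine ⟨a, ?_, ?_⟩
  · suffices ∀ n, f.eval a ≡ 0 [SMOD (I ^ n • ⊤ : Ideal R)] by exact IsHausdorff.haus' _ this
    intro n
    specialize ha n
    rw [← Ideal.one_eq_top, Ideal.smul_eq_mul, mul_one] at ha ⊢
    refine (ha.symm.eval f).trans ?_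
    rw [SModEq.zero]
    exact Ideal.pow_le_pow_right le_self_add (hfcI _)
  · specialize ha (0 + 1)
    rw [hc, pow_one, ← Ideal.one_eq_top, Ideal.smul_eq_mul, mul_one, sub_eq_add_neg] at ha
    rw [← SModEq.sub_mem, ← add_zero a₀]
    refine ha.symm.trans (SModEq.rfl.add ?_)
    rw [SModEq.zero, Ideal.neg_mem_iff]
    exact Ideal.mul_mem_right _ _ h₁

section
variable {k : Type*} [Field k]

/-- the residue map -/
noncomputable abbrev cc (k : Type*) [Field k] : PowerSeries k →+* k := PowerSeries.constantCoeff (R := k)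

lemma cc_eval (f : Polynomial (PowerSeries k)) (y : PowerSeries k) :
    cc k (f.eval y) = (f.map (cc k)).eval (cc k y) := by
  rw [Polynomial.eval_map, Polynomial.eval₂_at_apply]

lemma ps_unit {y : PowerSeries k} (h : cc k y ≠ 0) : IsUnit y :=
  PowerSeries.isUnit_iff_constantCoeff.mpr (isUnit_iff_ne_zero.mpr h)

lemma hensel (f : Polynomial (PowerSeries k)) (a : k) (h : (f.map (cc k)).eval a = 0)
    (h' : (f.map (cc k)).derivative.eval a ≠ 0) :
    ∃ y, f.eval y = 0 ∧ cc k y = a := by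
  have e := hensel_aux (PowerSeries k) (Ideal.span {PowerSeries.X}) f (PowerSeries.C a) ?_ ?_
  · obtain ⟨y, h1, h2⟩ := e
    refine ⟨y, h1, ?_⟩
    rw [Ideal.mem_span_singleton, PowerSeries.X_dvd_iff] at h2
    simpa [sub_eq_zero] using h2
  · rw [Ideal.mem_span_singleton, PowerSeries.X_dvd_iff]
    have := cc_eval f (PowerSeries.C a)
    simp only [PowerSeries.constantCoeff_C] at this
    rw [this, h]
  · refine IsUnit.map _ (ps_unit ?_)
    rw [cc_eval, ← Polynomial.derivative_map]
    simpa using h'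

lemma split_aux [DecidableEq k] [DecidableEq (PowerSeries k)] [IsAlgClosed k]
    {P : Polynomial (PowerSeries k)} (hP : P.Monic)
    (S : k → Finset (PowerSeries k)) (hS : ∀ y0, ∀ y ∈ S y0, P.eval y = 0 ∧ cc k y = y0)
    (hc : ∀ y0, (P.map (cc k)).rootMultiplicity y0 ≤ (S y0).card) :
    P.Splits ∧ P.roots.Nodup ∧ ∀ y0, P.roots.filter (fun y => cc k y = y0) = (S y0).val := by
  set Pb := P.map (cc k) with hPb
  have hPb0 : Pb ≠ 0 := (hP.map _).ne_zero
  set Z := Pb.roots.toFinset.biUnion S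
  have hdisj : Set.PairwiseDisjoint (Pb.roots.toFinset : Set k) S := by
    intro a _ b _ hab
    rw [Function.onFun, Finset.disjoint_left]
    intro y hy hy'
    exact hab ((hS a y hy).2.symm.trans (hS b y hy').2)
  have hcard : P.natDegree ≤ Z.card := by
    rw [Finset.card_biUnion hdisj]
    have h1 : Pb.natDegree = P.natDegree := hP.natDegree_map _
    rw [← h1, ← (Polynomial.splits_iff_card_roots.mp (IsAlgClosed.splits Pb)),
      ← Multiset.toFinset_sum_count_eq]
    refine Finset.sum_le_sum fun y _ => ?_
    rw [Polynomial.count_roots]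
    exact hc y
  have hle : Z.val ≤ P.roots := by
    rw [Finset.val_le_iff_val_subset]
    intro y hy
    rw [Finset.mem_val, Finset.mem_biUnion] at hy
    obtain ⟨a, _, ha⟩ := hy
    rw [Polynomial.mem_roots hP.ne_zero]
    exact (hS a y ha).1
  have heq : Z.val = P.roots :=
    Multiset.eq_of_le_of_card_le hle ((Polynomial.card_roots' P).trans hcard)
  refine ⟨?_, by rw [← heq]; exact Z.nodup, ?_⟩
  · rw [Polynomial.splits_iff_card_roots]
    refine le_antisymm (Polynomial.card_roots' P) ?_
    rw [← heq]; exact hcard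
  · intro y0
    rw [← heq]
    have : Z.filter (fun y => cc k y = y0) = S y0 := by
      ext y
      rw [Finset.mem_filter]
      constructor
      · rintro ⟨h1, h2⟩
        rw [Finset.mem_biUnion] at h1
        obtain ⟨a, _, ha⟩ := h1
        rw [← h2, (hS a y ha).2]; exact ha
      · intro h
        refine ⟨?_, (hS y0 y h).2⟩
        rw [← Finset.mem_val, heq, Polynomial.mem_roots hP.ne_zero]
        exact (hS y0 y h).1
    rw [← this, Finset.filter_val]

end

/-- key expansion -/
lemma key_exp {A : Type*} [CommRing A] [CharP A 2] (i l : ℕ) (hi : 1 ≤ i) (hl : Odd l)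
    (α α' h : A) (h1 : α * α' = 1) (h2 : α ^ l = 1) (h3 : α' ^ (2 ^ i) = α') :
    ∃ M, (α + h) ^ (2 ^ i * l + 1) = α + h + h ^ (2 ^ i) + α' * h ^ (2 ^ i + 1) + h ^ (2 ^ i + 2) * M := by
  obtain ⟨N, hN⟩ := Polynomial.powAddExpansion α h l
  have e1 : (l : A) * α ^ (l - 1) = α' := by
    obtain ⟨m, rfl⟩ := hl
    have : α ^ (2 * m + 1 - 1) * α = 1 := by rw [← pow_succ, ← h2]; congr 1
    have e : ((2 * m + 1 : ℕ) : A) = 1 := by push_cast; rw [CharTwo.two_eq_zero]; ring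
    rw [e, one_mul]
    linear_combination α' * this - α ^ (2 * m + 1 - 1) * h1
  rw [e1, h2] at hN
  have hq : 2 ≤ 2 ^ i := by
    calc 2 = 2 ^ 1 := by norm_num
      _ ≤ 2 ^ i := Nat.pow_le_pow_right (by norm_num) hi
  obtain ⟨r, hr⟩ := Nat.exists_eq_add_of_le hq
  refine ⟨(α + h) * N ^ (2 ^ i) * h ^ r, ?_⟩
  rw [pow_succ, mul_comm (2 ^ i) l, pow_mul, hN, add_pow_char_pow, add_pow_char_pow, mul_pow, mul_pow, h3, one_pow,
    ← pow_mul, show 2 * 2 ^ i = (2 ^ i + 2) + r by omega, pow_add h (2 ^ i + 2) r]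
  linear_combination h ^ (2 ^ i) * h1

lemma key_exp' {A : Type*} [CommRing A] [CharP A 2] (i l : ℕ) (hi : 1 ≤ i) (hl : Odd l)
    (α α' h : A) (h1 : α * α' = 1) (h2 : α ^ l = 1) (h3 : α' ^ (2 ^ i) = α') :
    ∃ M, (α + h) ^ (2 ^ i * l) = 1 + α' * h ^ (2 ^ i) + h ^ (2 ^ i + 1) * M := by
  obtain ⟨N, hN⟩ := Polynomial.powAddExpansion α h l
  have e1 : (l : A) * α ^ (l - 1) = α' := by
    obtain ⟨m, rfl⟩ := hl
    have : α ^ (2 * m + 1 - 1) * α = 1 := by rw [← pow_succ, ← h2]; congr 1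
    have e : ((2 * m + 1 : ℕ) : A) = 1 := by push_cast; rw [CharTwo.two_eq_zero]; ring
    rw [e, one_mul]
    linear_combination α' * this - α ^ (2 * m + 1 - 1) * h1
  rw [e1, h2] at hN
  have hq : 1 ≤ 2 ^ i := Nat.one_le_two_pow
  obtain ⟨r, hr⟩ := Nat.exists_eq_add_of_le hq
  refine ⟨N ^ (2 ^ i) * h ^ r, ?_⟩
  rw [mul_comm (2 ^ i) l, pow_mul, hN, add_pow_char_pow, add_pow_char_pow, mul_pow, mul_pow, h3, one_pow,
    ← pow_mul, show 2 * 2 ^ i = (2 ^ i + 1) + r by omega, pow_add h (2 ^ i + 1) r]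
  ring

lemma mult_le {k : Type*} [Field k] (P : Polynomial k) (hP : P ≠ 0) (d c β : k) (hc : c ≠ 0) (n : ℕ)
    (M : Polynomial k) (h : (C d * P).comp (C β + X) = X ^ n * (C c + X * M)) :
    P.rootMultiplicity β ≤ n := by
  rw [Polynomial.rootMultiplicity_le_iff hP]
  rintro ⟨Q, hQ⟩
  rw [hQ] at h
  simp only [Polynomial.mul_comp, Polynomial.pow_comp, Polynomial.sub_comp, Polynomial.X_comp, Polynomial.C_comp,
    add_sub_cancel_left] at h
  have h2 : X ^ n * (X * (C d * Q.comp (C β + X))) = X ^ n * (C c + X * M) := by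
    rw [← h]; ring
  have h3 := mul_left_cancel₀ (pow_ne_zero n Polynomial.X_ne_zero) h2
  have := congrArg (Polynomial.eval 0) h3
  simp at this
  exact hc this.symm

end St18
namespace St18
open Polynomial (C X)
open MvPolynomial (map eval₂ coeff eval₂_mul coeff_C_mul coeff_X coeff_C)

section
variable {k : Type*} [Field k] [CharP k 2]

lemma mu_ne {l : ℕ} (hl : 0 < l) {β : k} (h : β ^ l = 1) : β ≠ 0 := by
  rintro rfl
  rw [zero_pow hl.ne'] at h
  exact zero_ne_one h

lemma mu_q {i l : ℕ} (hd : l ∣ 2 ^ i - 1) {β : k} (h : β ^ l = 1) : β ^ (2 ^ i) = β := by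
  obtain ⟨m, hm⟩ := hd
  have : 2 ^ i = l * m + 1 := by have := Nat.one_le_two_pow (n := i); omega
  rw [this, pow_succ, pow_mul, h, one_pow, one_mul]

lemma mu_q' {i l : ℕ} (hd : l ∣ 2 ^ i - 1) {β : k} (h : β ^ l = 1) : β⁻¹ ^ (2 ^ i) = β⁻¹ := by
  rw [inv_pow, mu_q hd h]

/-- key expansion along a ring hom -/
lemma key_hom {A : Type*} [CommRing A] [Nontrivial A] (ι : k →+* A) {i l : ℕ} (hi : 1 ≤ i) (hl : Odd l)
    (hd : l ∣ 2 ^ i - 1) {β : k} (hβ : β ^ l = 1) (h : A) :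
    ∃ M, (ι β + h) ^ (2 ^ i * l + 1) =
      ι β + h + h ^ (2 ^ i) + ι β⁻¹ * h ^ (2 ^ i + 1) + h ^ (2 ^ i + 2) * M := by
  have : CharP A 2 := charP2 ι
  refine key_exp i l hi hl _ _ _ ?_ ?_ ?_
  · rw [← map_mul, mul_inv_cancel₀ (mu_ne hl.pos hβ), map_one]
  · rw [← map_pow, hβ, map_one]
  · rw [← map_pow, mu_q' hd hβ]

/-- the tangent polynomial -/
noncomputable def TT (i : ℕ) (ζ β γ : k) : Polynomial k :=
  C (ζ⁻¹ + γ⁻¹) + C γ⁻¹ * X + C γ⁻¹ * X ^ (2 ^ i) + C (β⁻¹ + γ⁻¹) * X ^ (2 ^ i + 1)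

lemma TT_sep {i l : ℕ} (hi : 1 ≤ i) (hl : Odd l) (hd : l ∣ 2 ^ i - 1) {ζ β : k}
    (hζ : ζ ^ l = 1) (hβ : β ^ l = 1) (hγ : (β + ζ + 1) ^ l = 1) (s : k)
    (h : (TT i ζ β (β + ζ + 1)).eval s = 0) : (TT i ζ β (β + ζ + 1)).derivative.eval s ≠ 0 := by
  intro h'
  have hq0 : ((2 ^ i : ℕ) : k) = 0 := by
    push_cast; rw [CharTwo.two_eq_zero, zero_pow (by omega)]
  have z1 := mu_ne hl.pos hζ
  have z2 := mu_ne hl.pos hβ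
  have z3 := mu_ne hl.pos hγ
  have q1 := mu_q' hd hζ
  have q2 := mu_q' hd hβ
  have q3 := mu_q' hd hγ
  have hs1 : (s + 1) ^ (2 ^ i) = s ^ (2 ^ i) + 1 := by rw [add_pow_char_pow, one_pow]
  generalize hgg : β + ζ + 1 = γ at *
  unfold TT at h h'
  simp [Polynomial.derivative_X_pow] at h h'
  rw [CharTwo.two_eq_zero, zero_pow (show i ≠ 0 by omega)] at h'
  have e1 : ζ⁻¹ = (γ⁻¹ * (s + 1)) ^ (2 ^ i) := by
    rw [mul_pow, q3, hs1]
    linear_combination h - s * h' - CharTwo.add_self_eq_zero (γ⁻¹ * (s ^ 2 ^ i + 1))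
  have e2 : ζ⁻¹ = (β⁻¹ * s) ^ (2 ^ i) := by
    rw [mul_pow, q2, e1, mul_pow, q3, hs1]
    linear_combination h' - CharTwo.add_self_eq_zero (β⁻¹ * s ^ 2 ^ i)
  have inj : ∀ a b : k, a ^ (2 ^ i) = b ^ (2 ^ i) → a = b := fun a b hab =>
    iterateFrobenius_inj k 2 i (by simpa [iterateFrobenius_def] using hab)
  have f1 : ζ⁻¹ = γ⁻¹ * (s + 1) := inj _ _ (by rw [q1, ← e1])
  have f2 : ζ⁻¹ = β⁻¹ * s := inj _ _ (by rw [q1, ← e2])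
  have g1 : γ = ζ * (s + 1) := by field_simp at f1; linear_combination f1
  have g2 : β = ζ * s := by field_simp at f2; linear_combination f2
  have : (1 : k) = 0 := by
    linear_combination hgg + g1 - g2
  exact one_ne_zero this

lemma TT_deg {i l : ℕ} (hi : 1 ≤ i) (hl : Odd l) {ζ β : k} [DecidableEq k]
    (hβ : β ^ l = 1) (hγ : (β + ζ + 1) ^ l = 1) :
    (TT i ζ β (β + ζ + 1)).natDegree = if ζ = 1 then 2 ^ i else 2 ^ i + 1 := by
  have z2 := mu_ne hl.pos hβ
  have z3 := mu_ne hl.pos hγ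
  have hq : 2 ≤ 2 ^ i := by
    calc 2 = 2 ^ 1 := by norm_num
      _ ≤ 2 ^ i := Nat.pow_le_pow_right (by norm_num) hi
  unfold TT
  split_ifs with h
  · subst h
    have : β + 1 + 1 = β := by rw [add_assoc, CharTwo.add_self_eq_zero, add_zero]
    rw [this, CharTwo.add_self_eq_zero β⁻¹, C.map_zero, zero_mul, add_zero]
    generalize 2 ^ i = q at *
    apply le_antisymm
    · compute_degree; omega
    · apply Polynomial.le_natDegree_of_ne_zero
      simp only [Polynomial.coeff_add, Polynomial.coeff_C_mul, Polynomial.coeff_X_pow, Polynomial.coeff_X,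
        Polynomial.coeff_C]
      simp [show q ≠ 0 by omega, show 1 ≠ q by omega, z2]
  · have : β⁻¹ + (β + ζ + 1)⁻¹ ≠ 0 := by
      intro h0
      rw [CharTwo.add_eq_zero, inv_inj] at h0
      apply h
      linear_combination -h0 - CharTwo.add_self_eq_zero (1 : k)
    generalize 2 ^ i = q at *
    apply le_antisymm
    · compute_degree
    · apply Polynomial.le_natDegree_of_ne_zero
      simp only [Polynomial.coeff_add, Polynomial.coeff_C_mul, Polynomial.coeff_X_pow, Polynomial.coeff_X,
        Polynomial.coeff_C]
      simp [show q ≠ 0 by omega,  this]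

/-- blow-up -/
lemma blow {i l : ℕ} (hi : 1 ≤ i) (hl : Odd l) (hd : l ∣ 2 ^ i - 1) {ζ β : k}
    (hζ : ζ ^ l = 1) (hβ : β ^ l = 1) (hγ : (β + ζ + 1) ^ l = 1) :
    ∃ W : Polynomial (PowerSeries k), W.map (cc k) = TT i ζ β (β + ζ + 1) ∧
      (FF (2 ^ i * l + 1) (PowerSeries.C ζ + PowerSeries.X) 1).comp
        (C (PowerSeries.C β) + C PowerSeries.X * X) = C PowerSeries.X ^ (2 ^ i + 1) * W := by
  have c1 : CharP (PowerSeries k) 2 := charP2 (PowerSeries.C (R := k))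
  have c2 : CharP (Polynomial (PowerSeries k)) 2 := inferInstance
  let ι : k →+* Polynomial (PowerSeries k) := (C).comp (PowerSeries.C (R := k))
  set u : Polynomial (PowerSeries k) := C PowerSeries.X with hu
  obtain ⟨M1, e1⟩ := key_hom ι hi hl hd hζ u
  obtain ⟨M2, e2⟩ := key_hom ι hi hl hd hβ (u * X)
  obtain ⟨M3, e3⟩ := key_hom ι hi hl hd hγ (u * (X + 1))
  refine ⟨(TT i ζ β (β + ζ + 1)).map PowerSeries.C + u * (M1 + X ^ (2 ^ i + 2) * M2 + (X + 1) ^ (2 ^ i + 2) * M3), ?_, ?_⟩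
  · rw [Polynomial.map_add, Polynomial.map_mul, Polynomial.map_map, hu, Polynomial.map_C,
      PowerSeries.constantCoeff_X, C.map_zero, zero_mul, add_zero]
    have : (cc k).comp PowerSeries.C = RingHom.id k := by ext; simp
    rw [this, Polynomial.map_id]
  · have hF : (FF (2 ^ i * l + 1) (PowerSeries.C ζ + PowerSeries.X) 1).comp
        (C (PowerSeries.C β) + u * X) = (ι ζ + u) ^ (2 ^ i * l + 1) + 1 + (ι β + u * X) ^ (2 ^ i * l + 1)
          + (ι (β + ζ + 1) + u * (X + 1)) ^ (2 ^ i * l + 1) := by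
      simp only [FF, Polynomial.add_comp, Polynomial.pow_comp, Polynomial.X_comp, Polynomial.C_comp,
        map_add, map_one, one_pow, ι, RingHom.comp_apply, Polynomial.one_comp]
      congr 2
      rw [← hu]
      ring
    have hT : (TT i ζ β (β + ζ + 1)).map (PowerSeries.C (R := k)) = ι ζ⁻¹ + ι β⁻¹ * X ^ (2 ^ i + 1)
        + ι (β + ζ + 1)⁻¹ * (X + 1) ^ (2 ^ i + 1) := by
      have hs1 : (X + 1 : Polynomial (PowerSeries k)) ^ (2 ^ i) = X ^ (2 ^ i) + 1 := by rw [add_pow_char_pow, one_pow]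
      rw [pow_succ (X + 1), hs1]
      simp only [TT, Polynomial.map_add, Polynomial.map_mul, Polynomial.map_C, Polynomial.map_pow, Polynomial.map_X, ι, RingHom.comp_apply, map_add]
      ring
    rw [hF, hT, e1, e2, e3]
    have hs1 : (X + 1 : Polynomial (PowerSeries k)) ^ (2 ^ i) = X ^ (2 ^ i) + 1 := by rw [add_pow_char_pow, one_pow]
    rw [map_add, map_add, map_one]
    simp only [mul_pow]
    linear_combination u ^ (2 ^ i) * hs1 + CharTwo.add_self_eq_zero (ι ζ + u + u ^ (2 ^ i) + 1 + ι β + u * X + u ^ (2 ^ i) * X ^ (2 ^ i))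

lemma FF_map {A B : Type*} [CommRing A] [CommRing B] (ψ : A →+* B) (t : ℕ) (x w : A) :
    (FF t x w).map ψ = FF t (ψ x) (ψ w) := by
  simp [FF]

lemma HH_map {A B : Type*} [CommRing A] [CommRing B] [IsDomain A] [IsDomain B] (ι : k →+* A) (ψ : A →+* B) (x w : A)
    (g : MvPolynomial (Fin 2) k) :
    (HH ι x w g).map ψ = HH (ψ.comp ι) (ψ x) (ψ w) g := by
  simp [HH, tl_map]

lemma HH_red (ζ : k) (g : MvPolynomial (Fin 2) k) :
    (HH PowerSeries.C (PowerSeries.C ζ + PowerSeries.X) 1 g).map (cc k) = HH (RingHom.id k) ζ 1 g := by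
  rw [HH_map]
  have : (cc k).comp PowerSeries.C = RingHom.id k := by ext; simp
  rw [this]
  simp

lemma x_ne (ζ : k) : (PowerSeries.C ζ + PowerSeries.X + 1 : PowerSeries k) ≠ 0 := by
  intro h
  have := congrArg (PowerSeries.coeff 1) h
  simp [PowerSeries.coeff_C, PowerSeries.coeff_one] at this

lemma HH_one {t : ℕ} (ht : Odd t) (ht3 : 3 ≤ t) {g : MvPolynomial (Fin 2) k} (hg : Eqn t g) :
    HH (RingHom.id k) 1 1 g = 1 + X ^ (t - 1) := by
  have c1 : CharP (PowerSeries k) 2 := charP2 (PowerSeries.C (R := k))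
  have c2 : CharP (Polynomial (PowerSeries k)) 2 := inferInstance
  have h := HH_eq ht ht3 hg (PowerSeries.C (R := k)) (PowerSeries.C 1 + PowerSeries.X) 1
  have hc : ((t : ℕ) : Polynomial (PowerSeries k)) = 1 := by
    obtain ⟨m, rfl⟩ := ht
    push_cast; rw [CharTwo.two_eq_zero]; ring
  obtain ⟨N1, h1⟩ := Polynomial.powAddExpansion (1 : Polynomial (PowerSeries k)) (C PowerSeries.X) t
  obtain ⟨N2, h2⟩ := Polynomial.powAddExpansion (X : Polynomial (PowerSeries k)) (C PowerSeries.X) t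
  have e0 : (PowerSeries.C 1 + PowerSeries.X + 1 : PowerSeries k) = PowerSeries.X := by
    rw [map_one, add_right_comm, CharTwo.add_self_eq_zero, zero_add]
  unfold FF at h
  rw [e0] at h
  simp only [map_add, map_one, one_pow] at h
  rw [h1, h2, hc] at h
  have h3 : (C PowerSeries.X : Polynomial (PowerSeries k)) * HH PowerSeries.C (PowerSeries.C 1 + PowerSeries.X) 1 g
    = C PowerSeries.X * (1 + X ^ (t - 1) + C PowerSeries.X * (N1 + N2)) := by
    rw [map_one, h, one_pow, one_pow]
    linear_combination CharTwo.add_self_eq_zero (1 + X ^ t : Polynomial (PowerSeries k))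
  have h4 := mul_left_cancel₀ (by simp [PowerSeries.X_ne_zero]) h3
  have h5 := congrArg (Polynomial.map (cc k)) h4
  rw [HH_red] at h5
  rw [h5]
  simp

end
end St18
namespace St18
open Polynomial (C X)
open MvPolynomial (map eval₂ coeff eval₂_mul coeff_C_mul coeff_X coeff_C)

/-- all standing hypotheses -/
structure Hyp {k : Type*} [Field k] (i l : ℕ) (g : MvPolynomial (Fin 2) k) : Prop where
  hi : 1 ≤ i
  hl3 : 3 ≤ l
  hl : Odd l
  hd : l ∣ 2 ^ i - 1
  hne : l ≠ 2 ^ i - 1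
  hg : Eqn (2 ^ i * l + 1) g

section
variable {k : Type*} [Field k] [CharP k 2] {i l : ℕ} {g : MvPolynomial (Fin 2) k}

lemma Hyp.hq (H : Hyp i l g) : 2 ≤ 2 ^ i := by
  calc 2 = 2 ^ 1 := by norm_num
    _ ≤ 2 ^ i := Nat.pow_le_pow_right (by norm_num) H.hi

lemma Hyp.odd (H : Hyp i l g) : Odd (2 ^ i * l + 1) := by
  have : Even (2 ^ i * l) := (Nat.even_pow.mpr ⟨even_two, by have := H.hi; omega⟩).mul_right l
  exact this.add_one

lemma Hyp.three (H : Hyp i l g) : 3 ≤ 2 ^ i * l + 1 := by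
  have := H.hq
  have := H.hl3
  nlinarith

lemma frob_inj (i : ℕ) (a b : k) (hab : a ^ (2 ^ i) = b ^ (2 ^ i)) : a = b :=
    iterateFrobenius_inj k 2 i (by simpa [iterateFrobenius_def] using hab)

/-- class condition -/
def Cl (l : ℕ) (ζ β : k) : Prop := β ^ l = 1 ∧ (β + ζ + 1) ^ l = 1

/-- fibre polynomial over power series -/
noncomputable abbrev tp (ζ : k) (a : MvPolynomial (Fin 2) k) : Polynomial (PowerSeries k) :=
  tl PowerSeries.C (PowerSeries.C ζ + PowerSeries.X) 1 a

noncomputable abbrev Hp (ζ : k) (a : MvPolynomial (Fin 2) k) : Polynomial (PowerSeries k) :=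
  HH PowerSeries.C (PowerSeries.C ζ + PowerSeries.X) 1 a

/-- a double point of a fibre is a class -/
lemma dbl_cls (H : Hyp i l g) {v y : k} (hv : v ≠ 1)
    (h1 : (FF (2 ^ i * l + 1) v 1).eval y = 0) (h2 : y ^ (2 ^ i * l) + (y + (v + 1)) ^ (2 ^ i * l) = 0)
    (hv' : v ^ l = 1) : Cl l v y := by
  have e : y ^ l = (y + (v + 1)) ^ l := by
    apply frob_inj i
    rw [← pow_mul, ← pow_mul, mul_comm l]
    exact CharTwo.add_eq_zero.mp h2
  have e2 : y ^ (2 ^ i * l) = 1 := by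
    rw [CharTwo.add_eq_zero] at h2
    have vv : v ^ (2 ^ i * l) = 1 := by rw [mul_comm, pow_mul, hv', one_pow]
    simp [FF] at h1
    rw [pow_succ, pow_succ, pow_succ, ← h2, vv] at h1
    have hv1 : v + 1 ≠ 0 := fun h => hv (CharTwo.add_eq_zero.mp h)
    apply mul_left_cancel₀ hv1
    linear_combination h1 - CharTwo.add_self_eq_zero (v + 1) - y ^ (2 ^ i * l) * CharTwo.add_self_eq_zero y
  have e3 : y ^ l = 1 := by
    apply frob_inj i
    rw [← pow_mul, mul_comm l, e2, one_pow]
  exact ⟨e3, by rw [add_assoc, ← e, e3]⟩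

lemma FF_deriv (H : Hyp i l g) (v y : k) :
    (FF (2 ^ i * l + 1) v 1).derivative.eval y = y ^ (2 ^ i * l) + (y + (v + 1)) ^ (2 ^ i * l) := by
  have hi := H.hi
  have : (2 : k) ^ i = 0 := by rw [CharTwo.two_eq_zero, zero_pow (by omega)]
  unfold FF
  rw [Polynomial.derivative_add, Polynomial.derivative_add, Polynomial.derivative_X_add_C_pow,
    Polynomial.derivative_X_pow, ← C.map_pow, ← C.map_pow, ← C.map_add, Polynomial.derivative_C]
  simp [this]

lemma local_pt [IsAlgClosed k] [DecidableEq k] (H : Hyp i l g) {ζ : k} (hζ : ζ ^ l = 1) (y0 : k) :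
    ∃ S : Finset (PowerSeries k), (∀ y ∈ S, (Hp ζ g).eval y = 0 ∧ cc k y = y0) ∧
      ((Hp ζ g).map (cc k)).rootMultiplicity y0 ≤ S.card ∧
      (∀ y ∈ S, ∀ y' ∈ S, y ≠ y' → Cl l ζ y0 ∧ ∃ e, IsUnit e ∧ y - y' = PowerSeries.X * e) ∧
      (Cl l ζ y0 → S.card = if ζ = 1 then 2 ^ i else 2 ^ i + 1) := by
  classical
  obtain ⟨hm1, hm2⟩ := HH_monic H.odd H.three H.hg (PowerSeries.C (R := k)) (x_ne ζ)
  have heq := HH_eq H.odd H.three H.hg (PowerSeries.C (R := k)) (PowerSeries.C ζ + PowerSeries.X) 1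
  have hPb0 : (Hp ζ g).map (cc k) ≠ 0 := (hm1.map _).ne_zero
  have heqb : C (ζ + 1) * (Hp ζ g).map (cc k) = FF (2 ^ i * l + 1) ζ 1 := by
    have := congrArg (Polynomial.map (cc k)) heq
    rw [FF_map, Polynomial.map_mul, Polynomial.map_C] at this
    simpa using this
  have h1b : ζ = 1 → (Hp ζ g).map (cc k) = 1 + X ^ (2 ^ i * l) := by
    rintro rfl
    rw [HH_red, HH_one H.odd H.three H.hg, Nat.add_sub_cancel]
  by_cases hc : Cl l ζ y0
  · obtain ⟨hβ, hγ⟩ := hc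
    obtain ⟨W, hW1, hW2⟩ := blow H.hi H.hl H.hd hζ hβ hγ
    set T := TT i ζ y0 (y0 + ζ + 1) with hT
    have hdeg : T.natDegree = if ζ = 1 then 2 ^ i else 2 ^ i + 1 := TT_deg H.hi H.hl hβ hγ
    have hsep : ∀ s, T.eval s = 0 → T.derivative.eval s ≠ 0 := TT_sep H.hi H.hl H.hd hζ hβ hγ
    have hT0 : T ≠ 0 := by
      intro h0
      rw [h0, Polynomial.natDegree_zero] at hdeg
      have := H.hq
      split_ifs at hdeg <;> omega
    have hlift : ∀ s : k, ∃ y, T.eval s = 0 → W.eval y = 0 ∧ cc k y = s := by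
      intro s
      by_cases hs : T.eval s = 0
      · obtain ⟨y, h⟩ := hensel W s (by rw [hW1]; exact hs) (by rw [hW1]; exact hsep s hs)
        exact ⟨y, fun _ => h⟩
      · exact ⟨0, fun h => absurd h hs⟩
    choose L hL using hlift
    have hroot : ∀ s, s ∈ T.roots.toFinset ↔ T.eval s = 0 := by
      intro s; rw [Multiset.mem_toFinset, Polynomial.mem_roots hT0]; rfl
    have hinj : Set.InjOn (fun s => PowerSeries.C y0 + PowerSeries.X * L s) (T.roots.toFinset : Set k) := by
      intro s hs s' hs' h
      have h2 : L s = L s' := mul_left_cancel₀ PowerSeries.X_ne_zero (add_left_cancel h)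
      rw [← (hL s ((hroot s).mp hs)).2, ← (hL s' ((hroot s').mp hs')).2, h2]
    have hnd : T.roots.Nodup := by
      rw [Multiset.nodup_iff_count_le_one]
      intro s
      rw [Polynomial.count_roots]
      by_contra hlt
      rw [not_le, Polynomial.one_lt_rootMultiplicity_iff_isRoot hT0] at hlt
      exact hsep s hlt.1 hlt.2
    have hcard : (T.roots.toFinset.image (fun s => PowerSeries.C y0 + PowerSeries.X * L s)).card =
        if ζ = 1 then 2 ^ i else 2 ^ i + 1 := by
      rw [Finset.card_image_of_injOn hinj, Multiset.toFinset_card_of_nodup hnd, ← hdeg]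
      exact Polynomial.splits_iff_card_roots.mp (IsAlgClosed.splits T)
    refine ⟨T.roots.toFinset.image (fun s => PowerSeries.C y0 + PowerSeries.X * L s), ?_, ?_, ?_, fun _ => hcard⟩
    · intro y hy
      obtain ⟨s, hs, rfl⟩ := Finset.mem_image.mp hy
      obtain ⟨h1, h2⟩ := hL s ((hroot s).mp hs)
      refine ⟨?_, by simp⟩
      have := congrArg (Polynomial.eval (L s)) hW2
      rw [Polynomial.eval_mul, h1, mul_zero, ← heq, Polynomial.eval_comp] at this
      simp only [Polynomial.eval_mul, Polynomial.eval_add, Polynomial.eval_C, Polynomial.eval_X] at this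
      exact (mul_eq_zero.mp this).resolve_left (x_ne ζ)
    · rw [hcard]
      split_ifs with h
      · obtain ⟨M, hM⟩ := key_exp' i l H.hi H.hl (C y0) (C y0⁻¹) X
          (by rw [← C.map_mul, mul_inv_cancel₀ (mu_ne H.hl.pos hβ), C.map_one])
          (by rw [← C.map_pow, hβ, C.map_one]) (by rw [← C.map_pow, mu_q' H.hd hβ])
        refine mult_le _ hPb0 1 y0⁻¹ y0 (inv_ne_zero (mu_ne H.hl.pos hβ)) _ M ?_
        rw [h1b h, C.map_one, one_mul, Polynomial.add_comp, Polynomial.one_comp, Polynomial.pow_comp,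
          Polynomial.X_comp, hM]
        linear_combination CharTwo.add_self_eq_zero (1 : Polynomial k)
      · obtain ⟨M2, e2⟩ := key_hom (C : k →+* Polynomial k) H.hi H.hl H.hd hβ X
        obtain ⟨M3, e3⟩ := key_hom (C : k →+* Polynomial k) H.hi H.hl H.hd hγ X
        have hz : ζ ^ (2 ^ i * l + 1) = ζ := by rw [pow_succ, mul_comm (2 ^ i), pow_mul, hζ, one_pow, one_mul]
        have hne : y0⁻¹ + (y0 + ζ + 1)⁻¹ ≠ 0 := by
          intro h0
          rw [CharTwo.add_eq_zero, inv_inj] at h0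
          apply h
          linear_combination -h0 - CharTwo.add_self_eq_zero (1 : k)
        refine mult_le _ hPb0 (ζ + 1) _ y0 hne _ (M2 + M3) ?_
        rw [heqb]
        unfold FF
        simp only [Polynomial.add_comp, Polynomial.pow_comp, Polynomial.X_comp, Polynomial.C_comp]
        rw [show (C y0 + X + C (ζ + 1) : Polynomial k) = C (y0 + ζ + 1) + X by simp only [C.map_add]; ring,
          e2, e3, ← C.map_pow, hz, C.map_one, one_pow]
        simp only [C.map_add, C.map_one]
        linear_combination CharTwo.add_self_eq_zero (C ζ + 1 + C y0 + X + X ^ (2 ^ i) : Polynomial k)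
    · intro y hy y' hy' hne
      obtain ⟨s, hs, rfl⟩ := Finset.mem_image.mp hy
      obtain ⟨s', hs', rfl⟩ := Finset.mem_image.mp hy'
      refine ⟨⟨hβ, hγ⟩, L s - L s', ps_unit ?_, by ring⟩
      rw [map_sub, (hL s ((hroot s).mp hs)).2, (hL s' ((hroot s').mp hs')).2, sub_ne_zero]
      rintro rfl
      exact hne rfl
  · by_cases hr : ((Hp ζ g).map (cc k)).eval y0 = 0
    · have hz1 : ζ ≠ 1 := by
        intro h
        rw [h1b h] at hr
        simp at hr
        rw [CharTwo.add_eq_zero] at hr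
        have : y0 ^ l = 1 := by
          apply frob_inj i
          rw [← pow_mul, mul_comm l, ← hr, one_pow]
        apply hc
        refine ⟨this, ?_⟩
        rw [h, add_assoc, CharTwo.add_self_eq_zero, add_zero, this]
      have hder : ((Hp ζ g).map (cc k)).derivative.eval y0 ≠ 0 := by
        intro h0
        apply hc
        refine dbl_cls H hz1 ?_ ?_ hζ
        · rw [← heqb, Polynomial.eval_mul, hr, mul_zero]
        · rw [← FF_deriv H, ← heqb, Polynomial.derivative_C_mul, Polynomial.eval_mul, h0, mul_zero]
      obtain ⟨y, hy1, hy2⟩ := hensel _ _ hr hder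
      refine ⟨{y}, ?_, ?_, ?_, fun h => absurd h hc⟩
      · simp [hy1, hy2]
      · rw [Finset.card_singleton]
        by_contra hlt
        rw [not_le, Polynomial.one_lt_rootMultiplicity_iff_isRoot hPb0] at hlt
        exact hder hlt.2
      · intro y hy y' hy' h
        rw [Finset.mem_singleton] at hy hy'
        exact absurd (hy.trans hy'.symm) h
    · refine ⟨∅, by simp, ?_, by simp, fun h => absurd h hc⟩
      rw [Polynomial.rootMultiplicity_eq_zero hr]; simp

lemma local_str [IsAlgClosed k] [DecidableEq k] (H : Hyp i l g) {ζ : k} (hζ : ζ ^ l = 1) :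
    (Hp ζ g).Splits ∧ (Hp ζ g).roots.Nodup ∧
    (∀ y ∈ (Hp ζ g).roots, ∀ y' ∈ (Hp ζ g).roots, y ≠ y' → cc k y = cc k y' →
      Cl l ζ (cc k y) ∧ ∃ e, IsUnit e ∧ y - y' = PowerSeries.X * e) ∧
    (∀ β, Cl l ζ β → ((Hp ζ g).roots.filter (fun y => cc k y = β)).card =
      if ζ = 1 then 2 ^ i else 2 ^ i + 1) := by
  classical
  choose S h1 h2 h3 h4 using local_pt H hζ
  obtain ⟨a, b, c⟩ := split_aux (HH_monic H.odd H.three H.hg (PowerSeries.C (R := k)) (x_ne ζ)).1 S h1 h2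
  refine ⟨a, b, ?_, ?_⟩
  · intro y hy y' hy' hne hcc
    apply h3 (cc k y) _ _ _ _ hne
    · rw [← Finset.mem_val, ← c, Multiset.mem_filter]; exact ⟨hy, rfl⟩
    · rw [← Finset.mem_val, ← c, Multiset.mem_filter]; exact ⟨hy', hcc.symm⟩
  · intro β hβ
    rw [← h4 β hβ, Finset.card, ← c]

end
end St18
namespace St18
open Polynomial (C X)
open MvPolynomial (map eval₂ coeff eval₂_mul coeff_C_mul coeff_X coeff_C)

section
variable {k : Type*} [Field k] [CharP k 2] [DecidableEq k] {i l : ℕ} {g : MvPolynomial (Fin 2) k}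

/-- local multiplicity -/
noncomputable def mm (ζ β : k) (a : MvPolynomial (Fin 2) k) : ℕ :=
  ((tp ζ a).roots.filter (fun y => cc k y = β)).card

/-- roots of unity -/
noncomputable def mu (k : Type*) [Field k] (l : ℕ) : Finset k := Polynomial.nthRootsFinset l (1 : k)

noncomputable def cls (l : ℕ) (ζ : k) : Finset k := (mu k l).filter (fun β => (β + ζ + 1) ^ l = 1)

lemma mem_mu (hl : 0 < l) {ζ : k} : ζ ∈ mu k l ↔ ζ ^ l = 1 := Polynomial.mem_nthRootsFinset hl 1

lemma mem_cls (hl : 0 < l) {ζ β : k} : β ∈ cls l ζ ↔ Cl l ζ β := by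
  rw [cls, Finset.mem_filter, mem_mu hl]; rfl

lemma assoc_prod {R ι : Type*} [CommRing R] (s : Multiset ι) (f : ι → R) (n : ι → ℕ) (p : R)
    (h : ∀ y ∈ s, Associated (f y) (p ^ n y)) : Associated (s.map f).prod (p ^ (s.map n).sum) := by
  induction s using Multiset.induction with
  | empty => simp
  | cons y s ih =>
    rw [Multiset.map_cons, Multiset.prod_cons, Multiset.map_cons, Multiset.sum_cons, pow_add]
    exact (h y (Multiset.mem_cons_self y s)).mul_mul (ih fun z hz => h z (Multiset.mem_cons_of_mem hz))

lemma sum_ite_card {ι : Type*} (s : Multiset ι) (c : ι → k) (T : Finset k) (f : k → ℕ) :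
    (s.map (fun y => ∑ β ∈ T, if c y = β then f β else 0)).sum =
      ∑ β ∈ T, (s.filter (fun y => c y = β)).card * f β := by
  induction s using Multiset.induction with
  | empty => simp
  | cons y s ih =>
    rw [Multiset.map_cons, Multiset.sum_cons, ih, ← Finset.sum_add_distrib]
    refine Finset.sum_congr rfl fun β _ => ?_
    rw [Multiset.filter_cons]
    split_ifs <;> simp [add_mul, add_comm]

lemma sum_ind {ι : Type*} (s : Multiset ι) (P : ι → Prop) [DecidablePred P] :
    (s.map (fun y => if P y then 1 else 0)).sum = (s.filter P).card := by
  induction s using Multiset.induction with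
  | empty => simp
  | cons y s ih =>
    rw [Multiset.map_cons, Multiset.sum_cons, ih, Multiset.filter_cons]
    split_ifs <;> simp [add_comm]

lemma Hyp.ne (H : Hyp i l g) : g ≠ 0 := eqn_ne H.odd H.three H.hg

lemma Hyp.dvd_ne (H : Hyp i l g) {a : MvPolynomial (Fin 2) k} (ha : a ∣ g) : a ≠ 0 := by
  rintro rfl; exact H.ne (zero_dvd_iff.mp ha)

lemma tp_dvd (H : Hyp i l g) {a : MvPolynomial (Fin 2) k} (ha : a ∣ g) (ζ : k) : tp ζ a ∣ Hp ζ g := by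
  obtain ⟨b, hb⟩ := ha
  have hb0 : b ≠ 0 := H.dvd_ne ⟨a, by rw [hb]; ring⟩
  have ha0 : a ≠ 0 := H.dvd_ne ⟨b, hb⟩
  rw [Hp, HH, hb, tl_mul _ _ _ ha0 hb0]
  exact dvd_mul_of_dvd_right (dvd_mul_right _ _) _

lemma Hp_ne (H : Hyp i l g) (ζ : k) : Hp ζ g ≠ 0 :=
  (HH_monic H.odd H.three H.hg (PowerSeries.C (R := k)) (x_ne ζ)).1.ne_zero

lemma local_res [IsAlgClosed k] (H : Hyp i l g) {a b : MvPolynomial (Fin 2) k} (hab : a * b ∣ g) {ζ : k}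
    (hζ : ζ ^ l = 1) :
    Associated ((tp ζ a).resultant (tp ζ b) a.totalDegree b.totalDegree)
      (PowerSeries.X ^ (∑ β ∈ cls l ζ, mm ζ β a * mm ζ β b)) := by
  have ha : a ∣ g := (Dvd.intro _ rfl).trans hab
  have hb : b ∣ g := (Dvd.intro_left _ rfl).trans hab
  obtain ⟨ua, da⟩ := tl_deg H.odd H.three H.hg (PowerSeries.C (R := k)) (x_ne ζ) ha
  obtain ⟨ub, db⟩ := tl_deg H.odd H.three H.hg (PowerSeries.C (R := k)) (x_ne ζ) hb
  obtain ⟨hs, hnd, hdiff, -⟩ := local_str H hζ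
  have h0 := Hp_ne H ζ
  have sa : (tp ζ a).Splits := hs.of_dvd h0 (tp_dvd H ha ζ)
  have sb : (tp ζ b).Splits := hs.of_dvd h0 (tp_dvd H hb ζ)
  have habd := tp_dvd H hab ζ
  have hle := Polynomial.roots.le_of_dvd h0 habd
  have hm : tp ζ (a * b) = tp ζ a * tp ζ b := tl_mul _ _ _ (H.dvd_ne ha) (H.dvd_ne hb)
  have hne : tp ζ a * tp ζ b ≠ 0 := by rw [← hm]; exact ne_zero_of_dvd_ne_zero h0 habd
  rw [hm, Polynomial.roots_mul hne] at hle
  have hnd2 := Multiset.nodup_of_le hle hnd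
  obtain ⟨-, -, hdis⟩ := Multiset.nodup_add.mp hnd2
  have mema : ∀ y ∈ (tp ζ a).roots, y ∈ (Hp ζ g).roots := fun y hy =>
    Multiset.mem_of_le hle (Multiset.mem_add.mpr (Or.inl hy))
  have memb : ∀ y ∈ (tp ζ b).roots, y ∈ (Hp ζ g).roots := fun y hy =>
    Multiset.mem_of_le hle (Multiset.mem_add.mpr (Or.inr hy))
  have hpair : ∀ y ∈ (tp ζ a).roots, ∀ y' ∈ (tp ζ b).roots, cc k y' = cc k y →
      Cl l ζ (cc k y) ∧ Associated (y - y') PowerSeries.X := by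
    intro y hy y' hy' hcc
    have : y ≠ y' := by
      rintro rfl
      exact (Multiset.disjoint_left.mp hdis) hy hy'
    obtain ⟨h1, e, he, h2⟩ := hdiff y (mema y hy) y' (memb y' hy') this hcc.symm
    refine ⟨h1, ?_⟩
    rw [h2]
    exact (associated_mul_unit_left _ _ he)
  have hev : ∀ y ∈ (tp ζ a).roots, Associated ((tp ζ b).eval y)
      (PowerSeries.X ^ (∑ β ∈ cls l ζ, if cc k y = β then mm ζ β b else 0)) := by
    intro y hy
    rw [sb.eval_eq_prod_roots]
    have h1 : (∑ β ∈ cls l ζ, if cc k y = β then mm ζ β b else 0) =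
      ((tp ζ b).roots.map (fun y' => if cc k y' = cc k y then 1 else 0)).sum := by
      rw [sum_ind, Finset.sum_ite_eq]
      split_ifs with h
      · rfl
      · rw [mem_cls H.hl.pos] at h
        symm
        rw [Multiset.card_eq_zero, Multiset.filter_eq_nil]
        intro y' hy' hcc
        exact h (hpair y hy y' hy' hcc).1
    rw [h1]
    refine (associated_unit_mul_left _ _ ub).trans ?_
    apply assoc_prod
    intro y' hy'
    split_ifs with h
    · rw [pow_one]; exact (hpair y hy y' hy' h).2
    · rw [pow_zero, associated_one_iff_isUnit]
      apply ps_unit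
      rw [map_sub, sub_ne_zero]
      exact fun h' => h h'.symm
  have hr := Polynomial.resultant_eq_prod_eval (tp ζ a) (tp ζ b) b.totalDegree db.le sa
  rw [da] at hr
  rw [hr]
  refine (associated_unit_mul_left _ _ (ua.pow _)).trans ?_
  have := assoc_prod (tp ζ a).roots (fun y => (tp ζ b).eval y) _ PowerSeries.X hev
  rwa [sum_ite_card] at this

/-- double vanishing -/
lemma dbl (H : Hyp i l g) {a b : MvPolynomial (Fin 2) k} (hab : a * b ∣ g) (x w : Polynomial k) (v y : k)
    (h1 : (tl (RingHom.id k) (x.eval v) (w.eval v) a).eval y = 0)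
    (h2 : (tl (RingHom.id k) (x.eval v) (w.eval v) b).eval y = 0) :
    (x.eval v) ^ (2 ^ i * l + 1) + (w.eval v) ^ (2 ^ i * l + 1) + y ^ (2 ^ i * l + 1) +
      (y + (x.eval v + w.eval v)) ^ (2 ^ i * l + 1) = 0 ∧
    y ^ (2 ^ i * l) + (y + (x.eval v + w.eval v)) ^ (2 ^ i * l) = 0 ∧
    x.derivative.eval v * (x.eval v) ^ (2 ^ i * l) + w.derivative.eval v * (w.eval v) ^ (2 ^ i * l) +
      (x.derivative.eval v + w.derivative.eval v) * (y + (x.eval v + w.eval v)) ^ (2 ^ i * l) = 0 := by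
  have ha : a ∣ g := (Dvd.intro _ rfl).trans hab
  have hb : b ∣ g := (Dvd.intro_left _ rfl).trans hab
  have hi := H.hi
  have h20 : (2 : k) ^ i = 0 := by rw [CharTwo.two_eq_zero, zero_pow (by omega)]
  obtain ⟨e, he⟩ := hab
  have he0 : e ≠ 0 := H.dvd_ne ⟨a * b, by rw [he]; ring⟩
  have hF := HH_eq H.odd H.three H.hg (C : k →+* Polynomial k) x w
  rw [HH, he, tl_mul _ _ _ (mul_ne_zero (H.dvd_ne ha) (H.dvd_ne hb)) he0,
    tl_mul _ _ _ (H.dvd_ne ha) (H.dvd_ne hb)] at hF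
  set A := tl (C : k →+* Polynomial k) x w a with hA
  set B := tl (C : k →+* Polynomial k) x w b with hB
  have hF' : FF (2 ^ i * l + 1) x w = A * B * (C (x + w) * ((X + C w) * (X + C x)) * tl C x w e) := by
    rw [← hF]; ring
  generalize C (x + w) * ((X + C w) * (X + C x)) * tl C x w e = E at hF'
  have hid : (Polynomial.evalRingHom v).comp C = RingHom.id k := by ext; simp
  have hAm : A.map (Polynomial.evalRingHom v) = tl (RingHom.id k) (x.eval v) (w.eval v) a := by
    rw [hA, tl_map, hid]; rfl
  have hBm : B.map (Polynomial.evalRingHom v) = tl (RingHom.id k) (x.eval v) (w.eval v) b := by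
    rw [hB, tl_map, hid]; rfl
  have hYm := congrArg (Polynomial.map (Polynomial.evalRingHom v)) hF'
  rw [FF_map, Polynomial.map_mul, Polynomial.map_mul, hAm, hBm] at hYm
  simp only [Polynomial.coe_evalRingHom] at hYm
  refine ⟨?_, ?_, ?_⟩
  · have := congrArg (Polynomial.eval y) hYm
    simp [h1] at this
    simpa [FF] using this
  · have := congrArg (fun p => Polynomial.eval y (Polynomial.derivative p)) hYm
    simp only [Polynomial.derivative_mul, Polynomial.eval_add, Polynomial.eval_mul, h1, h2] at this
    unfold FF at this
    rw [Polynomial.derivative_add, Polynomial.derivative_add, Polynomial.derivative_X_add_C_pow,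
      Polynomial.derivative_X_pow, ← C.map_pow, ← C.map_pow, ← C.map_add, Polynomial.derivative_C] at this
    simpa [h20] using this
  · have key : ∀ (P : Polynomial (Polynomial k)), (P.eval (C y)).eval v = (P.map (Polynomial.evalRingHom v)).eval y := by
      intro P
      rw [Polynomial.eval_map, ← Polynomial.coe_evalRingHom, ← Polynomial.coe_evalRingHom]
      rw [Polynomial.coe_evalRingHom, Polynomial.coe_evalRingHom]
      have := Polynomial.eval₂_at_apply (p := P) (Polynomial.evalRingHom v) (C y)
      simpa using this.symm
    have hA1 : (A.eval (C y)).eval v = 0 := by rw [key, hAm, h1]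
    have hB1 : (B.eval (C y)).eval v = 0 := by rw [key, hBm, h2]
    have := congrArg (fun p => (Polynomial.eval v (Polynomial.derivative (p.eval (C y))))) hF'
    simp only [Polynomial.eval_mul, Polynomial.derivative_mul, Polynomial.eval_add, hA1, hB1] at this
    simp [FF, Polynomial.derivative_pow, h20] at this
    linear_combination this

lemma dbl1 (H : Hyp i l g) {a b : MvPolynomial (Fin 2) k} (hab : a * b ∣ g) (v y : k)
    (h1 : (tl (RingHom.id k) v 1 a).eval y = 0)
    (h2 : (tl (RingHom.id k) v 1 b).eval y = 0) : v ^ l = 1 := by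
  have := dbl H hab X 1 v y (by simpa using h1) (by simpa using h2)
  simp at this
  obtain ⟨e1, e2, e3⟩ := this
  apply frob_inj i
  rw [← pow_mul, mul_comm l, one_pow]
  rw [pow_succ, pow_succ, pow_succ] at e1
  rw [CharTwo.add_eq_zero] at e2 e3
  rw [e2, ← e3] at e1
  linear_combination e1 - CharTwo.add_self_eq_zero (1 : k) - v ^ (2 ^ i * l) * CharTwo.add_self_eq_zero (v + y)

lemma dbl2 (H : Hyp i l g) {a b : MvPolynomial (Fin 2) k} (hab : a * b ∣ g) (y : k)
    (h1 : (tl (RingHom.id k) 1 0 a).eval y = 0)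
    (h2 : (tl (RingHom.id k) 1 0 b).eval y = 0) : False := by
  have := dbl H hab 1 X 0 y (by simpa using h1) (by simpa using h2)
  have hl := H.hl.pos
  have hq := H.hq
  have hpos : 2 ^ i * l ≠ 0 := by positivity
  simp [zero_pow hpos] at this
  obtain ⟨e1, e2, e3⟩ := this
  have e4 : y + 1 = 0 := e3.1
  rw [e4, zero_pow hpos, add_zero, pow_eq_zero_iff hpos] at e2
  rw [e2] at e4
  simp at e4

end
end St18
namespace St18
open Polynomial (C X)
open MvPolynomial (map eval₂ coeff eval₂_mul coeff_C_mul coeff_X coeff_C)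

section
variable {k : Type*} [Field k] [CharP k 2] [DecidableEq k] {i l : ℕ} {g : MvPolynomial (Fin 2) k}

lemma deg_rr {k : Type*} [Field k] [Infinite k] (r s : Polynomial k) (N : ℕ) (hs0 : s.eval 0 ≠ 0)
    (h : ∀ v, v ≠ 0 → r.eval v = v ^ N * s.eval v⁻¹) : r.natDegree = N ∧ r ≠ 0 := by
  have hs : s ≠ 0 := by rintro rfl; simp at hs0
  have e : X * (X ^ s.natDegree * r) = X * (X ^ N * s.reverse) := by
    apply Polynomial.funext
    intro v
    rcases eq_or_ne v 0 with rfl | hv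
    · simp
    · simp only [Polynomial.eval_mul, Polynomial.eval_X, Polynomial.eval_pow]
      rw [h v hv]
      have := invertibleOfNonzero (inv_ne_zero hv)
      have h2 := Polynomial.eval₂_reverse_mul_pow (RingHom.id k) v⁻¹ s
      rw [invOf_eq_inv, inv_inv] at h2
      change s.reverse.eval v * _ = s.eval v⁻¹ at h2
      rw [← h2, inv_pow]
      field_simp
  have e2 := mul_left_cancel₀ Polynomial.X_ne_zero e
  have hr : s.reverse ≠ 0 := by rwa [Ne, Polynomial.reverse_eq_zero]
  have hr0 : r ≠ 0 := by
    rintro rfl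
    rw [mul_zero] at e2
    exact mul_ne_zero (pow_ne_zero _ Polynomial.X_ne_zero) hr e2.symm
  have h3 := congrArg Polynomial.natDegree e2
  rw [Polynomial.natDegree_mul (pow_ne_zero _ Polynomial.X_ne_zero) hr0,
    Polynomial.natDegree_mul (pow_ne_zero _ Polynomial.X_ne_zero) hr, Polynomial.natDegree_X_pow,
    Polynomial.natDegree_X_pow, Polynomial.reverse_natDegree] at h3
  have h4 : s.natTrailingDegree = 0 := by
    apply Polynomial.natTrailingDegree_eq_zero_of_constantCoeff_ne_zero
    rwa [Polynomial.constantCoeff_apply, Polynomial.coeff_zero_eq_eval_zero]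
  exact ⟨by omega, hr0⟩

lemma poly_ne1 : (X + 1 : Polynomial k) ≠ 0 := by
  have := Polynomial.X_add_C_ne_zero (1 : k)
  simpa using this

lemma res_spec {a b : MvPolynomial (Fin 2) k} (x w : Polynomial k) (v : k) (m n : ℕ) :
    ((tl C x w a).resultant (tl C x w b) m n).eval v =
      (tl (RingHom.id k) (x.eval v) (w.eval v) a).resultant
        (tl (RingHom.id k) (x.eval v) (w.eval v) b) m n := by
  have hid : (Polynomial.evalRingHom v).comp C = RingHom.id k := by ext; simp
  rw [← Polynomial.coe_evalRingHom, ← Polynomial.resultant_map_map, tl_map, tl_map, hid]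

lemma common_root [IsAlgClosed k] {p q : Polynomial k} (hp : p ≠ 0) (h : p.resultant q = 0) :
    ∃ y, p.eval y = 0 ∧ q.eval y = 0 := by
  rw [Polynomial.resultant_eq_zero_iff] at h
  have h2 := h.2
  by_contra hcon
  push Not at hcon
  apply h2
  rw [← EuclideanDomain.gcd_isUnit_iff]
  by_contra hu
  have hg0 : EuclideanDomain.gcd p q ≠ 0 := by
    intro h0
    exact hp (EuclideanDomain.gcd_eq_zero_iff.mp h0).1
  have hd : (EuclideanDomain.gcd p q).degree ≠ 0 := by
    intro h0
    exact hu (Polynomial.isUnit_iff_degree_eq_zero.mpr h0)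
  obtain ⟨y, hy⟩ := IsAlgClosed.exists_root _ hd
  exact hcon y (Polynomial.eval_eq_zero_of_dvd_of_eval_eq_zero (EuclideanDomain.gcd_dvd_left p q) hy)
    (Polynomial.eval_eq_zero_of_dvd_of_eval_eq_zero (EuclideanDomain.gcd_dvd_right p q) hy)

lemma tl_spec_deg (H : Hyp i l g) {a : MvPolynomial (Fin 2) k} (ha : a ∣ g) (x w : Polynomial k)
    (hxw : x + w ≠ 0) (v : k) :
    (tl (RingHom.id k) (x.eval v) (w.eval v) a).natDegree = a.totalDegree ∧
      tl (RingHom.id k) (x.eval v) (w.eval v) a ≠ 0 := by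
  have hid : (Polynomial.evalRingHom v).comp C = RingHom.id k := by ext; simp
  have := tl_deg_map H.odd H.three H.hg (C : k →+* Polynomial k) hxw ha (Polynomial.evalRingHom v)
  rw [hid] at this
  refine ⟨this.1, fun h => ?_⟩
  have h2 := this.2
  simp only [Polynomial.coe_evalRingHom] at h2
  rw [h] at h2
  simp at h2

lemma tl_scale (H : Hyp i l g) [Infinite k] {a : MvPolynomial (Fin 2) k} (ha : a ∣ g) {v : k} (hv : v ≠ 0) :
    tl (RingHom.id k) v 1 a = (tl (RingHom.id k) 1 v⁻¹ a).scaleRoots v := by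
  apply Polynomial.funext
  intro y
  have hd := (tl_spec_deg H ha 1 X (by rw [add_comm]; exact poly_ne1) v⁻¹).1
  simp only [Polynomial.eval_one, Polynomial.eval_X] at hd
  have h := Polynomial.scaleRoots_eval₂_mul (p := tl (RingHom.id k) 1 v⁻¹ a) (RingHom.id k) (v⁻¹ * y) v
  simp only [RingHom.id_apply, mul_inv_cancel_left₀ hv] at h
  change ((tl (RingHom.id k) 1 v⁻¹ a).scaleRoots v).eval y =
    v ^ _ * (tl (RingHom.id k) 1 v⁻¹ a).eval (v⁻¹ * y) at h
  rw [h, hd, tl_eval, tl_eval, ← hm_scale]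
  congr 1
  · simp
  · field_simp
  · field_simp

theorem MI [IsAlgClosed k] (H : Hyp i l g) {a b : MvPolynomial (Fin 2) k} (hab : a * b ∣ g) :
    a.totalDegree * b.totalDegree ≤ ∑ ζ ∈ mu k l, ∑ β ∈ cls l ζ, mm ζ β a * mm ζ β b := by
  have : Infinite k := IsAlgClosed.instInfinite
  have ha : a ∣ g := (Dvd.intro _ rfl).trans hab
  have hb : b ∣ g := (Dvd.intro_left _ rfl).trans hab
  set r := (tl C X 1 a).resultant (tl C X 1 b) a.totalDegree b.totalDegree with hr
  set s := (tl C 1 X a).resultant (tl C 1 X b) a.totalDegree b.totalDegree with hs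
  have n1 : (1 + X : Polynomial k) ≠ 0 := by rw [add_comm]; exact poly_ne1
  have hs0 : s.eval 0 ≠ 0 := by
    intro h
    rw [hs, res_spec, ← (tl_spec_deg H ha 1 X n1 0).1, ← (tl_spec_deg H hb 1 X n1 0).1] at h
    obtain ⟨y, h1, h2⟩ := common_root (tl_spec_deg H ha 1 X n1 0).2 h
    simp only [Polynomial.eval_one, Polynomial.eval_X] at h1 h2
    exact dbl2 H hab y h1 h2
  have hrs : ∀ v, v ≠ 0 → r.eval v = v ^ (a.totalDegree * b.totalDegree) * s.eval v⁻¹ := by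
    intro v hv
    have da := (tl_spec_deg H ha 1 X n1 v⁻¹).1
    have db := (tl_spec_deg H hb 1 X n1 v⁻¹).1
    simp only [Polynomial.eval_one, Polynomial.eval_X] at da db
    have e1 : r.eval v = (tl (RingHom.id k) v 1 a).resultant (tl (RingHom.id k) v 1 b)
        a.totalDegree b.totalDegree := by
      have := res_spec (a := a) (b := b) X 1 v a.totalDegree b.totalDegree
      rwa [Polynomial.eval_X, Polynomial.eval_one] at this
    have e2 : s.eval v⁻¹ = (tl (RingHom.id k) 1 v⁻¹ a).resultant (tl (RingHom.id k) 1 v⁻¹ b)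
        a.totalDegree b.totalDegree := by
      have := res_spec (a := a) (b := b) 1 X v⁻¹ a.totalDegree b.totalDegree
      rwa [Polynomial.eval_X, Polynomial.eval_one] at this
    rw [e1, e2]
    rw [tl_scale H ha hv, tl_scale H hb hv]
    have := Polynomial.resultant_scaleRoots (tl (RingHom.id k) 1 v⁻¹ a) (tl (RingHom.id k) 1 v⁻¹ b) v
    rw [Polynomial.natDegree_scaleRoots, Polynomial.natDegree_scaleRoots, da, db] at this
    exact this
  obtain ⟨hdeg, hr0⟩ := deg_rr r s _ hs0 hrs
  have hroots : ∀ v, r.eval v = 0 → v ∈ mu k l := by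
    intro v h
    rw [hr, res_spec, ← (tl_spec_deg H ha X 1 poly_ne1 v).1, ← (tl_spec_deg H hb X 1 poly_ne1 v).1] at h
    obtain ⟨y, h1, h2⟩ := common_root (tl_spec_deg H ha X 1 poly_ne1 v).2 h
    simp only [Polynomial.eval_one, Polynomial.eval_X] at h1 h2
    exact (mem_mu H.hl.pos).mpr (dbl1 H hab v y h1 h2)
  have hsub : r.roots.toFinset ⊆ mu k l := by
    intro v hv
    rw [Multiset.mem_toFinset, Polynomial.mem_roots hr0] at hv
    exact hroots v hv
  calc a.totalDegree * b.totalDegree = r.natDegree := hdeg.symm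
    _ = r.roots.card := (Polynomial.splits_iff_card_roots.mp (IsAlgClosed.splits r)).symm
    _ = ∑ v ∈ mu k l, r.roots.count v := (Multiset.sum_count_eq_card (fun v hv => hsub (Multiset.mem_toFinset.mpr hv))).symm
    _ ≤ _ := by
      refine Finset.sum_le_sum fun ζ hζ => ?_
      rw [mem_mu H.hl.pos] at hζ
      rw [Polynomial.count_roots]
      let φ : Polynomial k →+* PowerSeries k := Polynomial.eval₂RingHom PowerSeries.C (PowerSeries.C ζ + PowerSeries.X)
      have hφ : φ r = (tp ζ a).resultant (tp ζ b) a.totalDegree b.totalDegree := by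
        have hc : φ.comp C = PowerSeries.C := by ext1 x; simp [φ]
        have hX : φ X = PowerSeries.C ζ + PowerSeries.X := by simp [φ]
        rw [hr, ← Polynomial.resultant_map_map, tl_map, tl_map, hc, hX, map_one]
      have hdvd := Polynomial.pow_rootMultiplicity_dvd r ζ
      have h2 := map_dvd φ hdvd
      have hXC : φ (X - C ζ) = PowerSeries.X := by simp [φ]
      rw [map_pow, hXC, hφ, (local_res H hab hζ).dvd_iff_dvd_right] at h2
      exact (pow_dvd_pow_iff PowerSeries.X_ne_zero (PowerSeries.X_prime.not_unit)).mp h2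

end
end St18
namespace St18
open Polynomial (C X)
open MvPolynomial (map eval₂ coeff eval₂_mul coeff_C_mul coeff_X coeff_C)

section
variable {k : Type*} [Field k] [CharP k 2] [DecidableEq k] {i l : ℕ} {g : MvPolynomial (Fin 2) k}

lemma mmg [IsAlgClosed k] (H : Hyp i l g) {ζ β : k} (hζ : ζ ^ l = 1) (hβ : Cl l ζ β) :
    mm ζ β g + (if β = 1 then 1 else 0) + (if β = ζ then 1 else 0) =
      if ζ = 1 then 2 ^ i else 2 ^ i + 1 := by
  rw [← (local_str H hζ).2.2.2 β hβ]
  have h0 := Hp_ne H ζ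
  rw [Hp, HH] at h0 ⊢
  have h1 := left_ne_zero_of_mul h0
  rw [Polynomial.roots_mul h0, Polynomial.roots_mul h1, Polynomial.roots_X_add_C,
    Polynomial.roots_X_add_C, Multiset.filter_add, Multiset.filter_add, Multiset.card_add,
    Multiset.card_add, Multiset.filter_singleton, Multiset.filter_singleton, ← mm.eq_1]
  have e1 : cc k (-1) = 1 := by
    rw [map_neg, map_one, CharTwo.neg_eq]
  have e2 : cc k (-(PowerSeries.C ζ + PowerSeries.X)) = ζ := by
    rw [map_neg, map_add, CharTwo.neg_eq]; simp
  rw [e1, e2]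
  simp only [eq_comm (a := β)]
  split_ifs <;> simp <;> ring

lemma card_mu (hl : 0 < l) : (mu k l).card ≤ l := by
  rw [mu, Polynomial.nthRootsFinset_def]
  exact (Multiset.toFinset_card_le _).trans (Polynomial.card_nthRoots l (1 : k))

lemma card_cls [IsAlgClosed k] (H : Hyp i l g) {ζ : k} (hζ : ζ ^ l = 1) (h1 : ζ ≠ 1) :
    (cls l ζ).card + 1 ≤ l := by
  have hl := H.hl.pos
  have h := sum_ite_card (Hp ζ g).roots (fun y => cc k y) (cls l ζ) (fun _ => 1)
  have hr : ∑ β ∈ cls l ζ, ((Hp ζ g).roots.filter (fun y => cc k y = β)).card * 1 =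
      (cls l ζ).card * (2 ^ i + 1) := by
    rw [← smul_eq_mul (cls l ζ).card, ← Finset.sum_const]
    refine Finset.sum_congr rfl fun β hβ => ?_
    rw [(local_str H hζ).2.2.2 β ((mem_cls hl).mp hβ), if_neg h1, mul_one]
  rw [hr] at h
  have h2 : ((Hp ζ g).roots.map (fun y => ∑ β ∈ cls l ζ, if cc k y = β then 1 else 0)).sum ≤
      ((Hp ζ g).roots.map (fun _ => 1)).sum := by
    apply Multiset.sum_map_le_sum_map
    intro y _
    rw [Finset.sum_ite_eq]
    split_ifs <;> simp
  rw [h, Multiset.map_const', Multiset.sum_replicate, smul_eq_mul, mul_one] at h2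
  have h3 := (Hp ζ g).card_roots'
  rw [(HH_monic H.odd H.three H.hg (PowerSeries.C (R := k)) (x_ne ζ)).2] at h3
  have h4 : (cls l ζ).card * (2 ^ i + 1) ≤ 2 ^ i * l := by
    refine h2.trans (h3.trans ?_)
    simp
  by_contra hc
  have h5 : l ≤ (cls l ζ).card := by omega
  have h6 := Nat.mul_le_mul_right (2 ^ i + 1) h5
  have h7 := h6.trans h4
  rw [mul_add, mul_comm l] at h7
  omega

/-- the self-intersection form -/
noncomputable def QQ (l : ℕ) (a : MvPolynomial (Fin 2) k) : ℤ :=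
  (a.totalDegree : ℤ) ^ 2 - ∑ ζ ∈ mu k l, ∑ β ∈ cls l ζ, (mm ζ β a : ℤ) ^ 2

lemma one_cls (hl : 0 < l) {ζ : k} (hζ : ζ ^ l = 1) : (1 : k) ∈ cls l ζ ∧ ζ ∈ cls l ζ := by
  rw [mem_cls hl, mem_cls hl]
  refine ⟨⟨one_pow _, ?_⟩, hζ, ?_⟩
  · rw [show 1 + ζ + 1 = ζ + (1 + 1 : k) by ring, CharTwo.add_self_eq_zero, add_zero, hζ]
  · rw [CharTwo.add_self_eq_zero, zero_add, one_pow]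

lemma sum_one [IsAlgClosed k] (H : Hyp i l g) :
    ∑ β ∈ cls l (1 : k), (mm 1 β g : ℤ) ^ 2 ≤ l * (2 ^ i) ^ 2 - 4 * 2 ^ i + 4 := by
  have hl := H.hl.pos
  have h : ∀ β ∈ cls l (1 : k), (mm 1 β g : ℤ) ^ 2 =
      (2 ^ i) ^ 2 - if β = 1 then 4 * 2 ^ i - 4 else 0 := by
    intro β hβ
    have := mmg H (one_pow l) ((mem_cls hl).mp hβ)
    rw [if_pos rfl] at this
    have h2 : (mm 1 β g : ℤ) + (if β = 1 then 1 else 0) + (if β = 1 then 1 else 0) = 2 ^ i := by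
      exact_mod_cast this
    rw [← h2]
    split_ifs <;> ring
  rw [Finset.sum_congr rfl h, Finset.sum_sub_distrib, Finset.sum_const, Finset.sum_ite_eq',
    if_pos (one_cls hl (one_pow l)).1, nsmul_eq_mul]
  have hc : (cls l (1 : k)).card ≤ l := (Finset.card_filter_le _ _).trans (card_mu hl)
  have hc' : ((cls l (1 : k)).card : ℤ) ≤ l := by exact_mod_cast hc
  nlinarith [sq_nonneg ((2 : ℤ) ^ i)]

lemma sum_ne [IsAlgClosed k] (H : Hyp i l g) {ζ : k} (hζ : ζ ^ l = 1) (h1 : ζ ≠ 1) :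
    ∑ β ∈ cls l ζ, (mm ζ β g : ℤ) ^ 2 ≤ (l - 1) * (2 ^ i + 1) ^ 2 - 4 * 2 ^ i - 2 := by
  have hl := H.hl.pos
  have h : ∀ β ∈ cls l ζ, (mm ζ β g : ℤ) ^ 2 =
      (2 ^ i + 1) ^ 2 - (if β = 1 then 2 * 2 ^ i + 1 else 0) - (if β = ζ then 2 * 2 ^ i + 1 else 0) := by
    intro β hβ
    have := mmg H hζ ((mem_cls hl).mp hβ)
    rw [if_neg h1] at this
    have h2 : (mm ζ β g : ℤ) + (if β = 1 then 1 else 0) + (if β = ζ then 1 else 0) = 2 ^ i + 1 := by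
      exact_mod_cast this
    have h3 : (mm ζ β g : ℤ) = 2 ^ i + 1 - (if β = 1 then 1 else 0) - (if β = ζ then 1 else 0) := by
      linarith
    rw [h3]
    split_ifs with c1 c2
    · exact absurd (c2.symm.trans c1) h1
    all_goals ring
  rw [Finset.sum_congr rfl h, Finset.sum_sub_distrib, Finset.sum_sub_distrib, Finset.sum_const,
    Finset.sum_ite_eq', Finset.sum_ite_eq',
    if_pos (one_cls hl hζ).1, if_pos (one_cls hl hζ).2, nsmul_eq_mul]
  have hc := card_cls H hζ h1
  have hc' : ((cls l ζ).card : ℤ) ≤ l - 1 := by omega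
  nlinarith [sq_nonneg ((2 : ℤ) ^ i + 1)]

lemma Hyp.big (H : Hyp i l g) : 2 * l + 1 ≤ 2 ^ i := by
  obtain ⟨m, hm⟩ := H.hd
  have hq := H.hq
  have hne := H.hne
  have : m ≠ 0 := by rintro rfl; omega
  have : m ≠ 1 := by rintro rfl; omega
  have : 2 ≤ m := by omega
  have : l * 2 ≤ l * m := Nat.mul_le_mul_left l this
  omega

lemma QQ_g [IsAlgClosed k] (H : Hyp i l g) : 0 < QQ l g := by
  have hl := H.hl.pos
  have hl3 : (3 : ℤ) ≤ l := by exact_mod_cast H.hl3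
  have hb : (2 * l + 1 : ℤ) ≤ 2 ^ i := by exact_mod_cast H.big
  have hm1 : (1 : k) ∈ mu k l := (mem_mu hl).mpr (one_pow l)
  have hd : (g.totalDegree : ℤ) = 2 ^ i * l - 2 := by
    rw [totdeg_eq H.odd H.three H.hg]
    have := H.three
    rw [Nat.cast_sub this]
    push_cast
    ring
  rw [QQ, hd, ← Finset.add_sum_erase _ _ hm1]
  have h1 := sum_one H
  have h2 : ∑ ζ ∈ (mu k l).erase 1, ∑ β ∈ cls l ζ, (mm ζ β g : ℤ) ^ 2 ≤
      ((mu k l).erase 1).card * ((l - 1) * (2 ^ i + 1) ^ 2 - 4 * 2 ^ i - 2) := by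
    rw [← nsmul_eq_mul, ← Finset.sum_const]
    refine Finset.sum_le_sum fun ζ hζ => ?_
    rw [Finset.mem_erase, mem_mu hl] at hζ
    exact sum_ne H hζ.2 hζ.1
  have h3 : (((mu k l).erase 1).card : ℤ) ≤ l - 1 := by
    rw [Finset.card_erase_of_mem hm1]
    have := card_mu (k := k) hl
    omega
  generalize (2 : ℤ) ^ i = q at *
  have h5 : 0 ≤ ((l : ℤ) - 1) * (q + 1) ^ 2 - 4 * q - 2 := by nlinarith
  have h4 := h2.trans (mul_le_mul_of_nonneg_right h3 h5)
  have h6 : 0 < ((l : ℤ) - 1) * (q * (q + 2 - 2 * l) - l + 3) := by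
    apply mul_pos (by linarith)
    nlinarith
  nlinarith

lemma mm_mul (H : Hyp i l g) {a b : MvPolynomial (Fin 2) k} (hab : a * b ∣ g) (ζ β : k) :
    mm ζ β (a * b) = mm ζ β a + mm ζ β b := by
  have ha : a ∣ g := (Dvd.intro _ rfl).trans hab
  have hb : b ∣ g := (Dvd.intro_left _ rfl).trans hab
  have hm : tp ζ (a * b) = tp ζ a * tp ζ b := tl_mul _ _ _ (H.dvd_ne ha) (H.dvd_ne hb)
  have h0 : tp ζ a * tp ζ b ≠ 0 := by
    rw [← hm]
    exact ne_zero_of_dvd_ne_zero (Hp_ne H ζ) (tp_dvd H hab ζ)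
  rw [mm, hm, Polynomial.roots_mul h0, Multiset.filter_add, Multiset.card_add, ← mm.eq_1, ← mm.eq_1]

lemma QQ_mul [IsAlgClosed k] (H : Hyp i l g) {a b : MvPolynomial (Fin 2) k} (hab : a * b ∣ g) :
    QQ l (a * b) ≤ QQ l a + QQ l b := by
  have ha : a ∣ g := (Dvd.intro _ rfl).trans hab
  have hb : b ∣ g := (Dvd.intro_left _ rfl).trans hab
  have h := MI H hab
  have h' : (a.totalDegree : ℤ) * b.totalDegree ≤
      ∑ ζ ∈ mu k l, ∑ β ∈ cls l ζ, (mm ζ β a : ℤ) * mm ζ β b := by exact_mod_cast h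
  have e : ∑ ζ ∈ mu k l, ∑ β ∈ cls l ζ, (mm ζ β (a * b) : ℤ) ^ 2 =
      ∑ ζ ∈ mu k l, ∑ β ∈ cls l ζ, (mm ζ β a : ℤ) ^ 2 + ∑ ζ ∈ mu k l, ∑ β ∈ cls l ζ, (mm ζ β b : ℤ) ^ 2 +
      2 * ∑ ζ ∈ mu k l, ∑ β ∈ cls l ζ, (mm ζ β a : ℤ) * mm ζ β b := by
    simp only [Finset.mul_sum, ← Finset.sum_add_distrib]
    refine Finset.sum_congr rfl fun ζ _ => Finset.sum_congr rfl fun β _ => ?_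
    rw [mm_mul H hab]
    push_cast
    ring
  unfold QQ
  rw [e, MvPolynomial.totalDegree_mul_of_isDomain (H.dvd_ne ha) (H.dvd_ne hb)]
  push_cast
  nlinarith

lemma QQ_unit {u : MvPolynomial (Fin 2) k} (hu : IsUnit u) : QQ l u ≤ 0 := by
  have : u.totalDegree = 0 := by
    obtain ⟨c, -, rfl⟩ := MvPolynomial.isUnit_iff_eq_C_of_isReduced.mp hu
    exact MvPolynomial.totalDegree_C c
  rw [QQ, this]
  have : 0 ≤ ∑ ζ ∈ mu k l, ∑ β ∈ cls l ζ, (mm ζ β u : ℤ) ^ 2 :=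
    Finset.sum_nonneg fun ζ _ => Finset.sum_nonneg fun β _ => sq_nonneg _
  simpa using this

lemma exists_pos [IsAlgClosed k] (H : Hyp i l g) : ∃ a, Irreducible a ∧ a ∣ g ∧ 0 < QQ l a := by
  have key : ∀ b : MvPolynomial (Fin 2) k, b ∣ g → 0 < QQ l b → ∃ a, Irreducible a ∧ a ∣ b ∧ 0 < QQ l a := by
    intro b
    induction b using WfDvdMonoid.induction_on_irreducible with
    | zero => intro h; exact absurd rfl (H.dvd_ne h)
    | unit u hu => intro _ h; exact absurd h (not_lt.mpr (QQ_unit hu))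
    | mul b p hb hp ih =>
      intro h hQ
      have := QQ_mul H h
      by_cases hpp : 0 < QQ l p
      · exact ⟨p, hp, Dvd.intro _ rfl, hpp⟩
      · obtain ⟨a, h1, h2, h3⟩ := ih ((Dvd.intro_left _ rfl).trans h) (by linarith)
        exact ⟨a, h1, h2.trans (Dvd.intro_left _ rfl), h3⟩
  exact key g dvd_rfl (QQ_g H)

lemma no_two [IsAlgClosed k] (H : Hyp i l g) {a b : MvPolynomial (Fin 2) k} (hab : a * b ∣ g)
    (ha : 0 < QQ l a) (hb : 0 < QQ l b) : False := by
  have h := MI H hab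
  have h' : (a.totalDegree : ℤ) * b.totalDegree ≤
      ∑ ζ ∈ mu k l, ∑ β ∈ cls l ζ, (mm ζ β a : ℤ) * mm ζ β b := by exact_mod_cast h
  unfold QQ at ha hb
  rw [Finset.sum_sigma'] at h' ha hb
  have cs := Finset.sum_mul_sq_le_sq_mul_sq ((mu k l).sigma (cls l))
    (fun x => (mm x.1 x.2 a : ℤ)) (fun x => (mm x.1 x.2 b : ℤ))
  have na : 0 ≤ ∑ x ∈ (mu k l).sigma (cls l), (mm x.1 x.2 a : ℤ) ^ 2 := Finset.sum_nonneg fun _ _ => sq_nonneg _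
  have nb : 0 ≤ ∑ x ∈ (mu k l).sigma (cls l), (mm x.1 x.2 b : ℤ) ^ 2 := Finset.sum_nonneg fun _ _ => sq_nonneg _
  have h2 : ((a.totalDegree : ℤ) * b.totalDegree) ^ 2 ≤
    (∑ x ∈ (mu k l).sigma (cls l), (mm x.1 x.2 a : ℤ) * mm x.1 x.2 b) ^ 2 :=
    pow_le_pow_left₀ (by positivity) h' 2
  have h3 := h2.trans cs
  have h4 := mul_lt_mul'' (sub_pos.mp ha) (sub_pos.mp hb) na nb
  rw [← mul_pow] at h4
  linarith

end
end St18
namespace St18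
open Polynomial (C X)
open MvPolynomial (map eval₂ coeff eval₂_mul coeff_C_mul coeff_X coeff_C)

section
variable {k : Type*} [Field k] [CharP k 2] [DecidableEq k] {i l : ℕ} {g : MvPolynomial (Fin 2) k}

lemma totdeg_map {K L : Type*} [Field K] [Field L] (f : K →+* L) (p : MvPolynomial (Fin 2) K) :
    (map f p).totalDegree = p.totalDegree := by
  unfold MvPolynomial.totalDegree
  rw [MvPolynomial.support_map_of_injective p f.injective]

lemma tp_frob (σ : k →+* k) (ζ : k) (a : MvPolynomial (Fin 2) k) :
    tp (σ ζ) (map σ a) = (tp ζ a).map (PowerSeries.map σ) := by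
  have hc : (PowerSeries.map σ).comp PowerSeries.C = (PowerSeries.C (R := k)).comp σ := by
    ext1 x
    simp
  rw [tp, tp, tl_mapcoef, tl_map, hc]
  simp

lemma mm_frob [IsAlgClosed k] (H : Hyp i l g) (σ : k →+* k) {a : MvPolynomial (Fin 2) k} (ha : a ∣ g)
    {ζ : k} (hζ : ζ ^ l = 1) (β : k) : mm (σ ζ) (σ β) (map σ a) = mm ζ β a := by
  have hs : (tp ζ a).Splits := (local_str H hζ).1.of_dvd (Hp_ne H ζ) (tp_dvd H ha ζ)
  have hinj : Function.Injective (PowerSeries.map σ) := by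
    intro x y h
    ext n
    have := congrArg (PowerSeries.coeff n) h
    simp only [PowerSeries.coeff_map] at this
    exact σ.injective this
  rw [mm, tp_frob, hs.roots_map_of_injective hinj, Multiset.filter_map, Multiset.card_map, mm]
  congr 1
  apply Multiset.filter_congr
  intro y _
  have : cc k (PowerSeries.map σ y) = σ (cc k y) := by
    rw [cc, ← PowerSeries.coeff_zero_eq_constantCoeff_apply, PowerSeries.coeff_map,
      PowerSeries.coeff_zero_eq_constantCoeff_apply]
  simp only [Function.comp, this]
  exact σ.injective.eq_iff

lemma frob_surj [IsAlgClosed k] : Function.Surjective (frobenius k 2) := surjective_frobenius k 2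

lemma QQ_frob [IsAlgClosed k] (H : Hyp i l g) {a : MvPolynomial (Fin 2) k} (ha : a ∣ g)
    (σ : k →+* k) (hsu : Function.Surjective σ) :
    QQ l (map σ a) = QQ l a := by
  have hl := H.hl.pos
  have hpow : ∀ x : k, (σ x) ^ l = 1 ↔ x ^ l = 1 := by
    intro x
    rw [← map_pow, map_eq_one_iff σ σ.injective]
  suffices key : ∑ ζ ∈ mu k l, ∑ β ∈ cls l ζ, (mm ζ β a : ℤ) ^ 2 =
      ∑ ζ ∈ mu k l, ∑ β ∈ cls l ζ, (mm ζ β (map σ a) : ℤ) ^ 2 by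
    rw [QQ, QQ, totdeg_map σ a, key]
  refine Finset.sum_nbij (fun x => σ x) ?_ (fun x _ y _ h => σ.injective h) ?_ ?_
  · intro ζ hζ
    rw [mem_mu hl] at hζ ⊢
    exact (hpow ζ).mpr hζ
  · intro ζ hζ
    obtain ⟨ζ', rfl⟩ := hsu ζ
    rw [Finset.mem_coe, mem_mu hl] at hζ
    exact ⟨ζ', by rw [Finset.mem_coe, mem_mu hl]; exact (hpow ζ').mp hζ, rfl⟩
  · intro ζ hζ
    rw [mem_mu hl] at hζ
    have hcl : ∀ β, Cl l (σ ζ) (σ β) ↔ Cl l ζ β := by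
      intro β
      have e : σ β + σ ζ + 1 = σ (β + ζ + 1) := by rw [map_add, map_add, map_one]
      unfold Cl
      rw [e]
      exact and_congr (hpow _) (hpow _)
    refine Finset.sum_nbij (fun x => σ x) ?_ (fun x _ y _ h => σ.injective h) ?_ ?_
    · intro β hβ
      rw [mem_cls hl] at hβ ⊢
      exact (hcl β).mpr hβ
    · intro β hβ
      obtain ⟨β', rfl⟩ := hsu β
      rw [Finset.mem_coe, mem_cls hl] at hβ
      exact ⟨β', by rw [Finset.mem_coe, mem_cls hl]; exact (hcl β').mp hβ, rfl⟩
    · intro β _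
      rw [mm_frob H σ ha hζ]

lemma map_frob_fixed {a : MvPolynomial (Fin 2) k} (e : ZMod 2 →+* k)
    (h : map (frobenius k 2) a = a) : ∃ p, map e p = a := by
  have : a ∈ Set.range (MvPolynomial.map (σ := Fin 2) e) := by
    rw [MvPolynomial.mem_range_map_iff_coeffs_subset]
    intro c hc
    rw [Finset.mem_coe, MvPolynomial.mem_coeffs_iff] at hc
    obtain ⟨n, -, rfl⟩ := hc
    have h2 := congrArg (coeff n) h
    rw [MvPolynomial.coeff_map, frobenius_def] at h2
    have h3 : coeff n a * (coeff n a - 1) = 0 := by linear_combination h2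
    rcases mul_eq_zero.mp h3 with h4 | h4
    · exact ⟨0, by rw [h4, map_zero]⟩
    · exact ⟨1, by rw [map_one]; exact (sub_eq_zero.mp h4).symm⟩
  exact this

theorem descent [IsAlgClosed k] (e : ZMod 2 →+* k) (G : MvPolynomial (Fin 2) (ZMod 2))
    (H : Hyp i l (map e G)) :
    ∃ p : MvPolynomial (Fin 2) (ZMod 2), p ∣ G ∧ 0 < p.totalDegree ∧ Irreducible (map e p) := by
  obtain ⟨a, hirr, hdvd, hpos⟩ := exists_pos H
  set σ := frobenius k 2 with hσ
  have hcomp : σ.comp e = e := Subsingleton.elim _ _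
  have hfix : ∀ P : MvPolynomial (Fin 2) (ZMod 2), map σ (map e P) = map e P := by
    intro P; rw [MvPolynomial.map_map, hcomp]
  -- normalise
  obtain ⟨n, hn⟩ := MvPolynomial.ne_zero_iff.mp hirr.ne_zero
  set b := MvPolynomial.C (coeff n a)⁻¹ * a with hb
  have hu : IsUnit (MvPolynomial.C (σ := Fin 2) (coeff n a)⁻¹) :=
    (isUnit_iff_ne_zero.mpr (inv_ne_zero hn)).map MvPolynomial.C
  have hbn : coeff n b = 1 := by rw [hb, coeff_C_mul, inv_mul_cancel₀ hn]
  have hassoc : Associated a b := (associated_unit_mul_right a _ hu)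
  have birr : Irreducible b := hassoc.irreducible hirr
  have bdvd : b ∣ map e G := hassoc.symm.dvd.trans hdvd
  have adv : map σ a ∣ map e G := by
    have := map_dvd (map σ) hdvd
    rwa [hfix] at this
  have hbij : Function.Bijective σ := ⟨σ.injective, frob_surj⟩
  have sirr : Irreducible (map σ a) := by
    have := (MulEquiv.irreducible_iff (MvPolynomial.mapEquiv (Fin 2) (RingEquiv.ofBijective σ hbij)) (x := a)).mpr hirr
    exact this
  have has : Associated a (map σ a) := by
    by_contra hna
    have : a * map σ a ∣ map e G := by
      obtain ⟨c, hc⟩ := hdvd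
      rw [hc] at adv ⊢
      rcases sirr.prime.dvd_or_dvd adv with h | h
      · exact absurd (sirr.associated_of_dvd hirr h).symm hna
      · exact mul_dvd_mul_left a h
    exact no_two H this hpos (by rw [QQ_frob H hdvd σ frob_surj]; exact hpos)
  have hbs : Associated b (map σ b) := by
    have h1 : Associated (map σ a) (map σ b) := hassoc.map (map σ)
    exact hassoc.symm.trans (has.trans h1)
  have hbfix : map σ b = b := by
    obtain ⟨u, hu⟩ := hbs
    obtain ⟨c, -, hc⟩ := MvPolynomial.isUnit_iff_eq_C_of_isReduced.mp u.isUnit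
    rw [hc, mul_comm] at hu
    have h2 := congrArg (coeff n) hu
    rw [coeff_C_mul, hbn, MvPolynomial.coeff_map, hbn, map_one, mul_one] at h2
    rw [← hu, h2, map_one, one_mul]
  obtain ⟨p, hp⟩ := map_frob_fixed e hbfix
  obtain ⟨c, hc⟩ := bdvd
  have hcfix : map σ c = c := by
    have h := congrArg (map σ) hc
    rw [hfix, map_mul, hbfix, hc] at h
    exact (mul_left_cancel₀ birr.ne_zero h).symm
  obtain ⟨d, hd⟩ := map_frob_fixed e hcfix
  refine ⟨p, ⟨d, ?_⟩, ?_, by rw [hp]; exact birr⟩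
  · apply MvPolynomial.map_injective e e.injective
    rw [map_mul, hp, hd, hc]
  · rw [← totdeg_map e p, hp]
    apply Nat.pos_of_ne_zero
    intro h0
    rw [MvPolynomial.totalDegree_eq_zero_iff_eq_C] at h0
    apply birr.not_isUnit
    rw [h0]
    have : coeff 0 b ≠ 0 := by
      intro hz
      rw [hz, map_zero] at h0
      exact birr.ne_zero h0
    exact (isUnit_iff_ne_zero.mpr this).map MvPolynomial.C

end
end St18

open MvPolynomial

theorem stmt_18 (i l t : ℕ) (hi : 1 ≤ i) (hl : 3 ≤ l) (hlodd : Odd l)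
    (ht : t = 2 ^ i * l + 1) (hdvd : l ∣ 2 ^ i - 1) (hne : l ≠ 2 ^ i - 1)
    (g : MvPolynomial (Fin 2) (ZMod 2))
    (hg : (X 0 + 1) * (X 1 + 1) * (X 0 + X 1) * g =
      X 0 ^ t + X 1 ^ t + 1 + (X 0 + X 1 + 1) ^ t) :
    ∃ p : MvPolynomial (Fin 2) (ZMod 2), p ∣ g ∧ 0 < p.totalDegree ∧
      Irreducible (MvPolynomial.map (algebraMap (ZMod 2) (AlgebraicClosure (ZMod 2))) p) := by
  classical
  subst ht
  have : CharP (AlgebraicClosure (ZMod 2)) 2 := inferInstance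
  refine St18.descent (i := i) (l := l) _ g ⟨hi, hl, hlodd, hdvd, hne, ?_⟩
  have h := congrArg (MvPolynomial.map (algebraMap (ZMod 2) (AlgebraicClosure (ZMod 2)))) hg
  simpa [St18.Eqn] using h
end
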